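/- arXiv:1408.2618 — 4 statements merged into one kernel-verified Lean document; each statement's English description precedes it below -/
import Mathlib

section
/- Let A be a commutative Noetherian ring, Q a finitely generated A-module, and s ∈ A such that the localization Q_s is a free A_s-module of rank r. Then there exist p_1,…,p_r ∈ Q, A-linear maps φ_1,…,φ_r : Q → A, and an integer t ≥ 1 such that, writing s' = s^t: (i) the annihilator of s' in A equals the annihilator of s'^2; (ii) s'Q ⊆ F and s'·Hom_A(Q,A) ⊆ G, where F = Σ_{i=1}^r A p_i ⊆ Q and G = Σ_{i=1}^r A φ_i ⊆ Hom_A(Q,A); (iii) φ_i(p_j) = s' if i = j and φ_i(p_j) = 0 if i ≠ j. -/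
noncomputable section

theorem lindel_unif {r : ℕ} (P : Fin r → ℕ → Prop) (hm : ∀ j m n, m ≤ n → P j m → P j n)
    (h : ∀ j, ∃ m, P j m) : ∃ M, ∀ j, P j M := by
  choose f hf using h
  exact ⟨Finset.univ.sup f, fun j => hm j _ _ (Finset.le_sup (Finset.mem_univ j)) (hf j)⟩

theorem lindel_core {A : Type*} [CommRing A] [IsNoetherianRing A]
    {Q : Type*} [AddCommGroup Q] [Module A Q] [Module.Finite A Q]
    (s : A) (r : ℕ)
    (b : Module.Basis (Fin r) (Localization (Submonoid.powers s))
      (LocalizedModule (Submonoid.powers s) Q)) :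
    ∃ (c k : ℕ) (p : Fin r → Q) (φ : Fin r → (Q →ₗ[A] A)),
      (∀ i j, φ i (p j) = if i = j then s ^ c else 0) ∧
      (∀ q : Q, s ^ (k + c) • q = s ^ k • ∑ i, φ i q • p i) := by
  have hp : ∃ M, ∀ j, ∃ p : Q, LocalizedModule.mkLinearMap (Submonoid.powers s) Q p
      = s ^ M • b j := by
    apply lindel_unif
    · rintro j m n hmn ⟨p, hp⟩
      refine ⟨s ^ (n - m) • p, ?_⟩
      rw [map_smul, hp, smul_smul, ← pow_add, Nat.sub_add_cancel hmn]
    · intro j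
      obtain ⟨⟨p, ⟨_, m, rfl⟩⟩, h⟩ := IsLocalizedModule.surj (Submonoid.powers s)
        (LocalizedModule.mkLinearMap (Submonoid.powers s) Q) (b j)
      exact ⟨m, p, h.symm⟩
  have hφ : ∃ N, ∀ i, ∃ φ : Q →ₗ[A] A, ∀ q, algebraMap A (Localization (Submonoid.powers s)) (φ q)
      = s ^ N • b.repr (LocalizedModule.mkLinearMap (Submonoid.powers s) Q q) i := by
    apply lindel_unif
    · rintro j m n hmn ⟨p, hp⟩
      refine ⟨s ^ (n - m) • p, fun q => ?_⟩
      rw [LinearMap.smul_apply, smul_eq_mul, map_mul, hp, ← Algebra.smul_def, smul_smul,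
        ← pow_add, Nat.sub_add_cancel hmn]
    · intro i
      have : Module.FinitePresentation A Q := Module.finitePresentation_of_finite A Q
      obtain ⟨h, ⟨_, m, rfl⟩, hh⟩ := Module.FinitePresentation.exists_lift_of_isLocalizedModule
        (Submonoid.powers s) (Algebra.linearMap A (Localization (Submonoid.powers s)))
        (((b.coord i).restrictScalars A).comp (LocalizedModule.mkLinearMap (Submonoid.powers s) Q))
      exact ⟨m, h, fun q => LinearMap.congr_fun hh q⟩
  obtain ⟨M, hM⟩ := hp
  choose p hp using hM
  obtain ⟨N, hN⟩ := hφ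
  choose φ hφ using hN
  have hd : ∃ k, ∀ i, ∀ j, s ^ k * φ i (p j) = s ^ k * (if i = j then s ^ (N + M) else 0) := by
    apply lindel_unif
    · intro i m n hmn h j
      rw [← Nat.sub_add_cancel hmn, pow_add, mul_assoc, h, mul_assoc]
    · intro i
      apply lindel_unif
      · intro j m n hmn h
        rw [← Nat.sub_add_cancel hmn, pow_add, mul_assoc, h, mul_assoc]
      · intro j
        have : algebraMap A (Localization (Submonoid.powers s)) (φ i (p j))
            = algebraMap A (Localization (Submonoid.powers s))
              (if i = j then s ^ (N + M) else 0) := by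
          rw [hφ, hp, ← algebraMap_smul (Localization (Submonoid.powers s)) (s ^ M) (b j), map_smul,
            Finsupp.smul_apply, b.repr_self, Finsupp.single_apply]
          by_cases hij : i = j
          · simp [hij, Algebra.smul_def, pow_add]
          · simp [hij, Ne.symm hij, eq_comm]
        obtain ⟨⟨_, m, rfl⟩, h⟩ := (IsLocalization.eq_iff_exists (Submonoid.powers s) _).1 this
        exact ⟨m, h⟩
  obtain ⟨k, hk⟩ := hd
  let D : Q →ₗ[A] Q := ∑ i, (φ i).smulRight (p i)
  obtain ⟨⟨_, e, rfl⟩, he⟩ := Module.Finite.exists_smul_of_comp_eq_of_isLocalizedModule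
    (Submonoid.powers s) (LocalizedModule.mkLinearMap (Submonoid.powers s) Q)
    (s ^ (N + M) • LinearMap.id) D (by
      ext q
      simp only [LinearMap.comp_apply, LinearMap.smul_apply, LinearMap.id_apply, map_smul, D,
        LinearMap.sum_apply, map_sum, LinearMap.smulRight_apply, hp]
      conv_lhs => rw [← b.sum_repr (LocalizedModule.mkLinearMap (Submonoid.powers s) Q q)]
      rw [Finset.smul_sum]
      refine Finset.sum_congr rfl fun i _ => ?_
      rw [← algebraMap_smul (Localization (Submonoid.powers s)) (φ i q), hφ, smul_assoc,
        smul_comm _ (s ^ M) (b i), smul_smul, pow_add])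
  refine ⟨k + (N + M), e, p, fun i => s ^ k • φ i, fun i j => ?_, fun q => ?_⟩
  · rw [LinearMap.smul_apply, smul_eq_mul, hk]
    split_ifs
    · rw [pow_add s k]
    · simp
  · have := LinearMap.congr_fun he q
    simp only [Submonoid.smul_def, LinearMap.smul_apply, LinearMap.id_apply, D,
      LinearMap.sum_apply, LinearMap.smulRight_apply] at this
    simp only [LinearMap.smul_apply, smul_assoc, ← Finset.smul_sum]
    rw [smul_comm, ← this, smul_smul, smul_smul]
    congr 1
    ring

/-- **Proposition (Lindel).** Let `A` be a commutative Noetherian ring, `Q` a finitely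
generated `A`-module and `s ∈ A` such that `Q_s` is a free `A_s`-module of rank `r`.
Then there exist `p_1,…,p_r ∈ Q`, `φ_1,…,φ_r ∈ Q* = Hom_A(Q, A)` and `t ≥ 1` such that,
with `s' = s^t`:
(i) `(0 :_A s'A) = (0 :_A s'²A)`;
(ii) `s'·Q ⊆ F` and `s'·Q* ⊆ G`, where `F = Σ A p_i` and `G = Σ A φ_i`;
(iii) `(φ_i (p_j)) = diag (s', …, s')`. -/
theorem lindel_dual_submodules
    (A : Type*) [CommRing A] [IsNoetherianRing A]
    (Q : Type*) [AddCommGroup Q] [Module A Q] [Module.Finite A Q]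
    (s : A) (r : ℕ)
    [Module.Free (Localization (Submonoid.powers s)) (LocalizedModule (Submonoid.powers s) Q)]
    (hrank : Module.finrank (Localization (Submonoid.powers s))
      (LocalizedModule (Submonoid.powers s) Q) = r) :
    ∃ (t : ℕ) (p : Fin r → Q) (φ : Fin r → (Q →ₗ[A] A)), 1 ≤ t ∧
      (∀ a : A, s ^ t * a = 0 ↔ (s ^ t) ^ 2 * a = 0) ∧
      (∀ q : Q, s ^ t • q ∈ Submodule.span A (Set.range p)) ∧
      (∀ ψ : Q →ₗ[A] A, s ^ t • ψ ∈ Submodule.span A (Set.range φ)) ∧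
      (∀ i j, φ i (p j) = if i = j then s ^ t else 0) := by
  have core : ∃ (c k : ℕ) (p : Fin r → Q) (φ : Fin r → (Q →ₗ[A] A)),
      (∀ i j, φ i (p j) = if i = j then s ^ c else 0) ∧
      (∀ q : Q, s ^ (k + c) • q = s ^ k • ∑ i, φ i q • p i) := by
    cases subsingleton_or_nontrivial (Localization (Submonoid.powers s)) with
    | inl h =>
      obtain ⟨⟨_, m, rfl⟩, h⟩ := (IsLocalization.eq_iff_exists (Submonoid.powers s)
        (Localization (Submonoid.powers s)) (x := (1 : A)) (y := 0)).1 (Subsingleton.elim _ _)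
      have hm : s ^ m = 0 := by simpa using h
      exact ⟨m, 0, 0, 0, by simp [hm], by simp [hm]⟩
    | inr h => exact lindel_core s r (Module.finBasisOfFinrankEq _ _ hrank)
  obtain ⟨c, k, p, φ, h1, h2⟩ := core
  obtain ⟨n, hn⟩ : ∃ n, ∀ m, n ≤ m → ∀ a : A, s ^ m * a = 0 → s ^ n * a = 0 := by
    let f : ℕ →o Ideal A := ⟨fun n => LinearMap.ker (LinearMap.mulLeft A (s ^ n)), by
      intro m n hmn a ha
      simp only [LinearMap.mem_ker, LinearMap.mulLeft_apply] at ha ⊢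
      rw [← Nat.sub_add_cancel hmn, pow_add, mul_assoc, ha, mul_zero]⟩
    obtain ⟨n, hn⟩ := monotone_stabilizes_iff_noetherian.2 ‹IsNoetherianRing A› f
    refine ⟨n, fun m hm a ha => ?_⟩
    have : a ∈ f m := ha
    rw [← hn m hm] at this
    exact this
  have key : ∀ q : Q, s ^ (c + (k + n + 1)) • q = ∑ i, (s ^ (k + n + 1) * φ i q) • p i := by
    intro q
    have : c + (k + n + 1) = (n + 1) + (k + c) := by ring
    rw [this, pow_add, mul_smul, h2, smul_smul, ← pow_add, Finset.smul_sum]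
    refine Finset.sum_congr rfl fun i _ => ?_
    rw [smul_smul]
    congr 3
    ring
  refine ⟨c + (k + n + 1), p, fun i => s ^ (k + n + 1) • φ i, by omega, ?_, ?_, ?_, ?_⟩
  · intro a
    constructor
    · intro h
      rw [pow_two, mul_assoc, h, mul_zero]
    · intro h
      rw [← pow_mul] at h
      have h' := hn _ (by omega) a h
      have : c + (k + n + 1) = (c + k + 1) + n := by ring
      rw [this, pow_add, mul_assoc, h', mul_zero]
  · intro q
    rw [key]
    exact Submodule.sum_mem _ fun i _ => Submodule.smul_mem _ _ (Submodule.subset_span ⟨i, rfl⟩)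
  · intro ψ
    have : s ^ (c + (k + n + 1)) • ψ = ∑ i, ψ (p i) • (s ^ (k + n + 1) • φ i) := by
      ext q
      rw [LinearMap.smul_apply, ← map_smul, key, map_sum, LinearMap.sum_apply]
      refine Finset.sum_congr rfl fun i _ => ?_
      simp only [map_smul, LinearMap.smul_apply, smul_eq_mul]
      ring
    rw [this]
    exact Submodule.sum_mem _ fun i _ => Submodule.smul_mem _ _ (Submodule.subset_span ⟨i, rfl⟩)
  · intro i j
    rw [LinearMap.smul_apply, h1, smul_eq_mul]
    split_ifs
    · rw [← pow_add, add_comm]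
    · simp
end
end

section
/- Let A be a commutative ring and f, g ∈ A with fA + gA = A. Let M and N be A-modules, φ : M_f → N_f an A_f-linear map and ψ : M_g → N_g an A_g-linear map such that φ and ψ induce the same map M_{fg} → N_{fg} after further localization. Then: (i) there exists an A-linear map ξ : M → N such that ξ localizes to φ over A_f and to ψ over A_g; (ii) if moreover φ and ψ are surjective, then ξ is surjective. -/
noncomputable section

/-- The canonical `A`-linear map `N_a → N_{ab}` between localized modules
(well defined since `a^k ∣ (ab)^k` for all `k`). -/
def auxMapLeft (A : Type*) [CommRing A] (a b : A)
    (N : Type*) [AddCommGroup N] [Module A N] :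
    LocalizedModule (Submonoid.powers a) N →ₗ[A]
      LocalizedModule (Submonoid.powers (a * b)) N :=
  LocalizedModule.lift _ (LocalizedModule.mkLinearMap (Submonoid.powers (a * b)) N)
    (by
      rintro ⟨x, hx⟩
      obtain ⟨k, hk⟩ := hx
      have hk' : a ^ k = x := hk
      have hmem : (a * b) ^ k ∈ Submonoid.powers (a * b) := ⟨k, rfl⟩
      have hu : IsUnit ((algebraMap A
          (Module.End A (LocalizedModule (Submonoid.powers (a * b)) N))) ((a * b) ^ k)) :=
        IsLocalizedModule.map_units
          (LocalizedModule.mkLinearMap (Submonoid.powers (a * b)) N) ⟨(a * b) ^ k, hmem⟩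
      rw [mul_pow, map_mul] at hu
      have hc : Commute ((algebraMap A
            (Module.End A (LocalizedModule (Submonoid.powers (a * b)) N))) (a ^ k))
          ((algebraMap A
            (Module.End A (LocalizedModule (Submonoid.powers (a * b)) N))) (b ^ k)) :=
        (Commute.all (a ^ k) (b ^ k)).map _
      simpa only [hk'] using (hc.isUnit_mul_iff.mp hu).1)

/-- The canonical `A`-linear map `N_b → N_{ab}` between localized modules
(well defined since `b^k ∣ (ab)^k` for all `k`). -/
def auxMapRight (A : Type*) [CommRing A] (a b : A)
    (N : Type*) [AddCommGroup N] [Module A N] :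
    LocalizedModule (Submonoid.powers b) N →ₗ[A]
      LocalizedModule (Submonoid.powers (a * b)) N :=
  LocalizedModule.lift _ (LocalizedModule.mkLinearMap (Submonoid.powers (a * b)) N)
    (by
      rintro ⟨x, hx⟩
      obtain ⟨k, hk⟩ := hx
      have hk' : b ^ k = x := hk
      have hmem : (a * b) ^ k ∈ Submonoid.powers (a * b) := ⟨k, rfl⟩
      have hu : IsUnit ((algebraMap A
          (Module.End A (LocalizedModule (Submonoid.powers (a * b)) N))) ((a * b) ^ k)) :=
        IsLocalizedModule.map_units
          (LocalizedModule.mkLinearMap (Submonoid.powers (a * b)) N) ⟨(a * b) ^ k, hmem⟩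
      rw [mul_pow, map_mul] at hu
      have hc : Commute ((algebraMap A
            (Module.End A (LocalizedModule (Submonoid.powers (a * b)) N))) (a ^ k))
          ((algebraMap A
            (Module.End A (LocalizedModule (Submonoid.powers (a * b)) N))) (b ^ k)) :=
        (Commute.all (a ^ k) (b ^ k)).map _
      simpa only [hk'] using (hc.isUnit_mul_iff.mp hu).2)

theorem fp_coprime {A : Type*} [CommRing A] {f g : A}
    (hfg : Ideal.span ({f, g} : Set A) = ⊤) (k l : ℕ) :
    ∃ p q : A, p * f ^ k + q * g ^ l = 1 := by
  have h : IsCoprime f g := by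
    have h1 : (1 : A) ∈ Ideal.span ({f, g} : Set A) := hfg ▸ Submodule.mem_top
    exact Ideal.mem_span_pair.mp h1
  exact h.pow

theorem fp_mk_eq {A : Type*} [CommRing A] {f : A} {N : Type*} [AddCommGroup N] [Module A N]
    {x y : N} (h : LocalizedModule.mkLinearMap (Submonoid.powers f) N x
      = LocalizedModule.mkLinearMap (Submonoid.powers f) N y) :
    ∃ k : ℕ, f ^ k • x = f ^ k • y := by
  obtain ⟨⟨_, k, rfl⟩, h⟩ := (IsLocalizedModule.eq_iff_exists (Submonoid.powers f) _).mp h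
  exact ⟨k, h⟩

theorem fp_rep {A : Type*} [CommRing A] {f : A} {N : Type*} [AddCommGroup N] [Module A N]
    (u : LocalizedModule (Submonoid.powers f) N) :
    ∃ (a : ℕ) (n : N), f ^ a • u = LocalizedModule.mkLinearMap (Submonoid.powers f) N n := by
  obtain ⟨⟨n, ⟨_, a, rfl⟩⟩, h⟩ := IsLocalizedModule.surj (Submonoid.powers f)
    (LocalizedModule.mkLinearMap (Submonoid.powers f) N) u
  exact ⟨a, n, h⟩

theorem fp_cancel {A : Type*} [CommRing A] {f : A} {N : Type*} [AddCommGroup N] [Module A N]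
    {u v : LocalizedModule (Submonoid.powers f) N} (k : ℕ) (h : f ^ k • u = f ^ k • v) :
    u = v :=
  IsLocalizedModule.smul_injective (LocalizedModule.mkLinearMap (Submonoid.powers f) N)
    (⟨f ^ k, k, rfl⟩ : Submonoid.powers f) h

theorem fp_left (A : Type*) [CommRing A] (a b : A)
    (N : Type*) [AddCommGroup N] [Module A N] (n : N) :
    auxMapLeft A a b N (LocalizedModule.mkLinearMap (Submonoid.powers a) N n)
      = LocalizedModule.mkLinearMap (Submonoid.powers (a * b)) N n := by
  unfold auxMapLeft
  rw [← LinearMap.comp_apply, LocalizedModule.lift_comp]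

theorem fp_right (A : Type*) [CommRing A] (a b : A)
    (N : Type*) [AddCommGroup N] [Module A N] (n : N) :
    auxMapRight A a b N (LocalizedModule.mkLinearMap (Submonoid.powers b) N n)
      = LocalizedModule.mkLinearMap (Submonoid.powers (a * b)) N n := by
  unfold auxMapRight
  rw [← LinearMap.comp_apply, LocalizedModule.lift_comp]

theorem fp_inj {A : Type*} [CommRing A] {f g : A}
    (hfg : Ideal.span ({f, g} : Set A) = ⊤)
    {N : Type*} [AddCommGroup N] [Module A N] {x y : N}
    (h1 : LocalizedModule.mkLinearMap (Submonoid.powers f) N x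
      = LocalizedModule.mkLinearMap (Submonoid.powers f) N y)
    (h2 : LocalizedModule.mkLinearMap (Submonoid.powers g) N x
      = LocalizedModule.mkLinearMap (Submonoid.powers g) N y) : x = y := by
  obtain ⟨k, hk⟩ := fp_mk_eq h1
  obtain ⟨l, hl⟩ := fp_mk_eq h2
  obtain ⟨p, q, hpq⟩ := fp_coprime hfg k l
  rw [← one_smul A x, ← one_smul A y, ← hpq]
  simp only [add_smul, mul_smul, hk, hl]

theorem fp_glue {A : Type*} [CommRing A] {f g : A}
    (hfg : Ideal.span ({f, g} : Set A) = ⊤)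
    {N : Type*} [AddCommGroup N] [Module A N]
    (u : LocalizedModule (Submonoid.powers f) N) (v : LocalizedModule (Submonoid.powers g) N)
    (h : auxMapLeft A f g N u = auxMapRight A f g N v) :
    ∃ n : N, LocalizedModule.mkLinearMap (Submonoid.powers f) N n = u ∧
      LocalizedModule.mkLinearMap (Submonoid.powers g) N n = v := by
  obtain ⟨a, n1, h1⟩ := fp_rep u
  obtain ⟨b, n2, h2⟩ := fp_rep v
  have e1 := congrArg (auxMapLeft A f g N) h1
  have e2 := congrArg (auxMapRight A f g N) h2
  rw [fp_left, map_smul] at e1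
  rw [fp_right, map_smul, ← h] at e2
  have e3 : LocalizedModule.mkLinearMap (Submonoid.powers (f * g)) N (g ^ b • n1)
      = LocalizedModule.mkLinearMap (Submonoid.powers (f * g)) N (f ^ a • n2) := by
    rw [map_smul, map_smul, ← e1, ← e2, smul_comm]
  obtain ⟨c, hc⟩ := fp_mk_eq e3
  obtain ⟨p, q, hpq⟩ := fp_coprime hfg (a + c) (b + c)
  refine ⟨p • f ^ c • n1 + q • g ^ c • n2, fp_cancel (a + c) ?_, fp_cancel (b + c) ?_⟩
  · have : f ^ (a + c) • (p • f ^ c • n1 + q • g ^ c • n2) = f ^ c • n1 := by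
      conv_rhs => rw [← one_smul A (f ^ c • n1), ← hpq]
      linear_combination (norm := module) (-q) • hc
    rw [← map_smul, this, map_smul, ← h1, smul_smul, ← pow_add, add_comm]
  · have : g ^ (b + c) • (p • f ^ c • n1 + q • g ^ c • n2) = g ^ c • n2 := by
      conv_rhs => rw [← one_smul A (g ^ c • n2), ← hpq]
      linear_combination (norm := module) p • hc
    rw [← map_smul, this, map_smul, ← h2, smul_smul, ← pow_add, add_comm]

theorem fp_surj {A : Type*} [CommRing A] {f : A}
    {M N : Type*} [AddCommGroup M] [Module A M] [AddCommGroup N] [Module A N]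
    (φ : LocalizedModule (Submonoid.powers f) M →ₗ[Localization (Submonoid.powers f)]
      LocalizedModule (Submonoid.powers f) N) (ξ : M →ₗ[A] N)
    (h : ∀ x : M, LocalizedModule.mkLinearMap (Submonoid.powers f) N (ξ x)
          = φ (LocalizedModule.mkLinearMap (Submonoid.powers f) M x))
    (hs : Function.Surjective φ) (n : N) : ∃ (k : ℕ) (m : M), ξ m = f ^ k • n := by
  obtain ⟨u, hu⟩ := hs (LocalizedModule.mkLinearMap (Submonoid.powers f) N n)
  obtain ⟨a, m, hm⟩ := fp_rep u
  have e : LocalizedModule.mkLinearMap (Submonoid.powers f) N (ξ m)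
      = LocalizedModule.mkLinearMap (Submonoid.powers f) N (f ^ a • n) := by
    rw [h, ← hm, map_smul (LocalizedModule.mkLinearMap (Submonoid.powers f) N), ← hu]
    exact LinearMap.map_smul_of_tower φ _ _
  obtain ⟨c, hc⟩ := fp_mk_eq e
  exact ⟨c + a, f ^ c • m, by rw [map_smul, hc, smul_smul, pow_add]⟩

/-- **Proposition (fiber products of localizations).**  Let `A` be a commutative ring and
`f, g ∈ A` with `fA + gA = A`.  Let `M, N` be `A`-modules, `φ : M_f → N_f` an
`A_f`-linear map and `ψ : M_g → N_g` an `A_g`-linear map inducing the same map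
`M_{fg} → N_{fg}`.  Then (i) there is an `A`-linear map `ξ : M → N` with `ξ_f = φ` and
`ξ_g = ψ`, and (ii) if `φ` and `ψ` are surjective, then so is `ξ`. -/
theorem fiber_product_of_localized_surjections
    (A : Type*) [CommRing A] (f g : A)
    (hfg : Ideal.span ({f, g} : Set A) = ⊤)
    (M N : Type*) [AddCommGroup M] [Module A M] [AddCommGroup N] [Module A N]
    (φ : LocalizedModule (Submonoid.powers f) M →ₗ[Localization (Submonoid.powers f)]
      LocalizedModule (Submonoid.powers f) N)
    (ψ : LocalizedModule (Submonoid.powers g) M →ₗ[Localization (Submonoid.powers g)]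
      LocalizedModule (Submonoid.powers g) N)
    (hcompat : ∀ x : M,
      auxMapLeft A f g N (φ (LocalizedModule.mkLinearMap (Submonoid.powers f) M x))
        = auxMapRight A f g N (ψ (LocalizedModule.mkLinearMap (Submonoid.powers g) M x))) :
    ∃ ξ : M →ₗ[A] N,
      (∀ x : M, LocalizedModule.mkLinearMap (Submonoid.powers f) N (ξ x)
          = φ (LocalizedModule.mkLinearMap (Submonoid.powers f) M x)) ∧
      (∀ x : M, LocalizedModule.mkLinearMap (Submonoid.powers g) N (ξ x)
          = ψ (LocalizedModule.mkLinearMap (Submonoid.powers g) M x)) ∧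
      (Function.Surjective φ → Function.Surjective ψ → Function.Surjective ξ) := by
  choose ξ h1 h2 using fun x : M => fp_glue hfg _ _ (hcompat x)
  let Ξ : M →ₗ[A] N :=
    { toFun := ξ
      map_add' := fun x y => fp_inj hfg
        (by simp only [map_add, h1]) (by simp only [map_add, h2])
      map_smul' := fun r x => fp_inj hfg
        (by
          simp only [map_smul, h1, RingHom.id_apply]
          exact LinearMap.map_smul_of_tower φ _ _)
        (by
          simp only [map_smul, h2, RingHom.id_apply]
          exact LinearMap.map_smul_of_tower ψ _ _) }
  refine ⟨Ξ, h1, h2, fun hφ hψ n => ?_⟩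
  obtain ⟨k, m, hm⟩ := fp_surj φ Ξ h1 hφ n
  obtain ⟨l, m', hm'⟩ := fp_surj ψ Ξ h2 hψ n
  obtain ⟨p, q, hpq⟩ := fp_coprime hfg k l
  refine ⟨p • m + q • m', ?_⟩
  rw [map_add, map_smul, map_smul, hm, hm', smul_smul, smul_smul, ← add_smul, hpq, one_smul]
end
end

section
/- Let R be a commutative Noetherian ring of finite Krull dimension d, let n > 0, and let B = R[X_1,…,X_m,Y_1^{±1},…,Y_n^{±1}]. Let I be an ideal of B of height > d. Then there exists an R[Y_n^{±1}]-algebra automorphism Θ of B such that Θ(I) contains an element of the form 1 + Y_n h for some h in the subring R[X_1,…,X_m,Y_1^{±1},…,Y_{n−1}^{±1},Y_n] of B (equivalently, Θ(I) contains a polynomial in Y_n over R[X_1,…,X_m,Y_1^{±1},…,Y_{n−1}^{±1}] with constant term 1). -/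
open MvPolynomial

noncomputable section

/-- The submonoid of the polynomial ring `R[X_1,…,X_m,Y_1,…,Y_n]` generated by the
`Y`-variables; inverting it produces the Laurent polynomial ring
`B = R[X_1,…,X_m,Y_1^{±1},…,Y_n^{±1}]`. -/
def Ymonoid (R : Type*) [CommRing R] (m n : ℕ) :
    Submonoid (MvPolynomial (Fin m ⊕ Fin n) R) :=
  Submonoid.closure (Set.range fun j : Fin n => (X (Sum.inr j) : MvPolynomial (Fin m ⊕ Fin n) R))


section
open Ideal IsLocalization
open scoped Polynomial
attribute [local instance] Polynomial.algebra Polynomial.isLocalization in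
lemma aux_height_le_add_one {R : Type*} [CommRing R] [IsNoetherianRing R] (p : Ideal R)
    (P : Ideal R[X]) [P.IsPrime] [P.LiesOver p] :
    P.height ≤ p.height + 1 := by
  have : p.IsPrime := by rw [P.over_def p]; infer_instance
  let Rₚ := Localization.AtPrime p
  set p' : Ideal Rₚ := p.map (algebraMap R Rₚ) with p'_def
  have : p'.IsMaximal := by
    rw [p'_def, Localization.AtPrime.map_eq_maximalIdeal]
    exact IsLocalRing.maximalIdeal.isMaximal Rₚ
  let P' : Ideal Rₚ[X] := P.map (algebraMap R[X] Rₚ[X])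
  have disj : Disjoint (p.primeCompl.map Polynomial.C : Set R[X]) P := by
    refine Set.disjoint_left.mpr fun a ⟨b, hb⟩ ha ↦ hb.1 ?_
    rwa [SetLike.mem_coe, LiesOver.over (P := P) (p := p), mem_comap, Polynomial.algebraMap_eq, hb.2]
  have : P'.IsPrime := isPrime_of_isPrime_disjoint (p.primeCompl.map Polynomial.C) _ _ inferInstance disj
  have : P'.LiesOver p' := liesOver_of_isPrime_of_disjoint p.primeCompl _ _ disj
  have eq1 : p.height = p'.height := by
    rw [height_map_of_disjoint p.primeCompl]
    exact Disjoint.symm <| Set.disjoint_left.mpr fun _ a b ↦ b a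
  have eq2 : P.height = P'.height := by
    rw [height_map_of_disjoint (Submonoid.map Polynomial.C <| p.primeCompl) _ disj]
  rw [eq1, eq2]
  obtain ⟨M, hM, hPM⟩ := exists_le_maximal P' IsPrime.ne_top'
  have : M.LiesOver p' := by
    refine ⟨IsMaximal.eq_of_le inferInstance IsPrime.ne_top' ?_⟩
    rw [P'.over_def p']
    exact comap_mono hPM
  rw [← Polynomial.height_eq_height_add_one p' M]
  exact height_mono hPM

lemma aux_prime {R : Type*} [CommRing R] [IsNoetherianRing R]
    (P : Ideal R[X]) [P.IsPrime] (q : Ideal R) [q.IsPrime] (h : P.leadingCoeff ≤ q) :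
    P.height ≤ q.height := by
  have hle : P.under R ≤ q := by
    refine le_trans ?_ h
    intro x hx
    rw [mem_leadingCoeff]
    exact ⟨Polynomial.C x, hx, by simp⟩
  by_cases hP : P = (P.under R).map Polynomial.C
  · have h1 := height_le_height_add_of_liesOver (P.under R) P
    have h2 : P.map (Ideal.Quotient.mk ((P.under R).map (algebraMap R R[X]))) = ⊥ := by
      rw [Ideal.map_eq_bot_iff_le_ker, Ideal.mk_ker]
      exact hP.le
    have : Nontrivial (R[X] ⧸ ((P.under R).map (algebraMap R R[X]))) := by
      apply Ideal.Quotient.nontrivial_iff.mpr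
      rw [Polynomial.algebraMap_eq, ← hP]
      exact IsPrime.ne_top'
    rw [h2, height_bot, add_zero] at h1
    exact h1.trans (height_mono hle)
  · have hlt : P.under R < q := by
      refine lt_of_le_of_ne hle fun heq => hP (le_antisymm ?_ ?_)
      · rw [← heq] at h
        have key : ∀ n : ℕ, ∀ f ∈ P, f.natDegree < n → f ∈ (P.under R).map Polynomial.C := by
          intro n
          induction n with
          | zero => intro f _ h; omega
          | succ n ih =>
            intro f hf hn
            have hlc : f.leadingCoeff ∈ P.under R := h ((mem_leadingCoeff _ _).2 ⟨f, hf, rfl⟩)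
            have hlc' : Polynomial.C f.leadingCoeff ∈ (P.under R).map Polynomial.C := mem_map_of_mem _ hlc
            by_cases h0 : f.natDegree = 0
            · rw [Polynomial.leadingCoeff, h0] at hlc'
              rw [Polynomial.eq_C_of_natDegree_eq_zero h0]
              exact hlc'
            rw [← f.eraseLead_add_C_mul_X_pow]
            refine add_mem (ih _ ?_ ?_) (Ideal.mul_mem_right _ _ hlc')
            · have : f.eraseLead = f - Polynomial.C f.leadingCoeff * Polynomial.X ^ f.natDegree := by
                rw [eq_sub_iff_add_eq, f.eraseLead_add_C_mul_X_pow]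
              rw [this]
              exact sub_mem hf (Ideal.mul_mem_right _ _ hlc)
            · have := f.eraseLead_natDegree_le
              omega
        intro f hf
        exact key _ f hf (Nat.lt_succ_self _)
      · exact map_comap_le
    exact (aux_height_le_add_one (P.under R) P).trans (height_add_one_le_of_lt_of_isPrime hlt)

lemma aux_height_leadingCoeff {R : Type*} [CommRing R] [IsNoetherianRing R]
    (J : Ideal R[X]) : J.height ≤ J.leadingCoeff.height := by
  rw [height_eq_inf_minimalPrimes J.leadingCoeff]
  refine le_iInf₂ fun q hq => ?_
  have := hq.isPrime
  obtain ⟨P, hP, hPq⟩ : ∃ P ∈ J.minimalPrimes, P.leadingCoeff ≤ q := by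
    by_contra! hcon
    have : ∀ P ∈ J.minimalPrimes, ∃ f ∈ P, f.leadingCoeff ∉ q := by
      intro P hP
      obtain ⟨x, hx, hxq⟩ := SetLike.not_le_iff_exists.1 (hcon P hP)
      obtain ⟨f, hf, rfl⟩ := (mem_leadingCoeff _ _).1 hx
      exact ⟨f, hf, hxq⟩
    choose! F hF hFq using this
    have hfin := J.finite_minimalPrimes_of_isNoetherianRing R[X]
    set g := ∏ P ∈ hfin.toFinset, F P with hg
    have hgr : g ∈ J.radical := by
      rw [← sInf_minimalPrimes, Submodule.mem_sInf]
      intro P hP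
      exact Ideal.prod_mem _ ((Set.Finite.mem_toFinset _).2 hP) (hF P hP)
    obtain ⟨n, hn⟩ := hgr
    have h1 : (∏ P ∈ hfin.toFinset, (F P).leadingCoeff) ∉ q := by
      intro hmem
      obtain ⟨P, hP, h⟩ := (IsPrime.prod_mem_iff (p := q)).1 hmem
      exact hFq P ((Set.Finite.mem_toFinset _).1 hP) h
    have hglc : g.leadingCoeff ∉ q := by
      rw [hg, Polynomial.leadingCoeff_prod']
      · exact h1
      · intro h; rw [h] at h1; exact h1 (zero_mem _)
    have h2 : g.leadingCoeff ^ n ∉ q := fun h => hglc (IsPrime.mem_of_pow_mem ‹_› _ h)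
    apply h2
    rw [← Polynomial.leadingCoeff_pow' (by intro h; rw [h] at h2; exact h2 (zero_mem _))]
    exact hq.1.2 ((mem_leadingCoeff _ _).2 ⟨_, hn, rfl⟩)
  have := hP.isPrime
  exact (height_mono hP.1.2).trans (aux_prime P q hPq)
end

def GoodPoly {R : Type*} [CommRing R] {N : ℕ} (f : MvPolynomial (Fin N) R)
    (a : Fin N →₀ ℕ) (r : Fin N → ℕ) : Prop :=
  coeff a f = 1 ∧ (∀ i, 1 ≤ r i) ∧
    ∀ b ∈ f.support, b ≠ a → ∑ i, r i * b i < ∑ i, r i * a i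

lemma goodPoly_step {R : Type*} [CommRing R] {N : ℕ} (f : MvPolynomial (Fin (N + 1)) R)
    (a : Fin N →₀ ℕ) (r : Fin N → ℕ) (h : GoodPoly (finSuccEquiv R N f).leadingCoeff a r)
    (M : ℕ) (hM1 : 1 ≤ M) (hM : ∀ b ∈ f.support, ∑ i : Fin N, r i * b i.succ < M) :
    GoodPoly f (a.cons (finSuccEquiv R N f).natDegree) (Fin.cons M r) := by
  obtain ⟨h1, h2, h3⟩ := h
  refine ⟨?_, ?_, ?_⟩
  · rw [← finSuccEquiv_coeff_coeff]; exact h1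
  · intro i
    refine Fin.cases ?_ (fun j => ?_) i
    · simpa using hM1
    · simpa using h2 j
  · intro b hb hba
    simp only [Fin.sum_univ_succ, Fin.cons_zero, Fin.cons_succ, Finsupp.cons_zero,
      Finsupp.cons_succ]
    set k := (finSuccEquiv R N f).natDegree with hk
    have hbs : b.tail.cons (b 0) = b := Finsupp.cons_tail b
    have hbk : b 0 ≤ k := by
      apply Polynomial.le_natDegree_of_mem_supp
      rw [support_finSuccEquiv]
      exact Finset.mem_image_of_mem (fun m : Fin (N + 1) →₀ ℕ => m 0) hb
    rcases hbk.lt_or_eq with hlt | heq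
    · have := hM b hb
      have h5 : M * (b 0 + 1) ≤ M * k := Nat.mul_le_mul_left _ hlt
      rw [mul_add, mul_one] at h5
      omega
    · have h6 : b.tail ∈ (finSuccEquiv R N f).leadingCoeff.support := by
        rw [Polynomial.leadingCoeff, mem_support_coeff_finSuccEquiv, ← hk, ← heq, hbs]
        exact hb
      have h7 := h3 b.tail h6 (by rintro rfl; rw [← heq] at hba; exact hba hbs.symm)
      rw [heq]
      simp only [Finsupp.tail_apply] at h7
      omega

lemma exists_goodPoly {R : Type*} [CommRing R] [IsNoetherianRing R] (d : ℕ)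
    (hdim : ringKrullDim R = d) (N : ℕ) (J : Ideal (MvPolynomial (Fin (N + 1)) R))
    (hJ : (d : ℕ∞) < J.height) :
    ∃ f ∈ J, ∃ a r, GoodPoly f a r ∧ r (Fin.last N) = 1 := by
  induction N with
  | zero =>
    set J' := J.comap (finSuccEquiv R 0).symm.toRingEquiv with hJ'
    have e1 : J'.height = J.height := RingEquiv.height_comap _ _
    have e2 := aux_height_leadingCoeff J'
    have e3 : J'.leadingCoeff = ⊤ := by
      by_contra hne
      have h1 := Ideal.height_le_ringKrullDim_of_ne_top hne
      rw [ringKrullDim_eq_of_ringEquiv (isEmptyAlgEquiv R (Fin 0)).toRingEquiv, hdim] at h1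
      have h2 : J'.leadingCoeff.height ≤ (d : ℕ∞) := by exact_mod_cast h1
      rw [e1] at e2
      exact absurd (hJ.trans_le (e2.trans h2)) (lt_irrefl _)
    have e4 : (1 : MvPolynomial (Fin 0) R) ∈ J'.leadingCoeff := by rw [e3]; trivial
    obtain ⟨g, hg, hg1⟩ := (Ideal.mem_leadingCoeff _ _).1 e4
    have hfg : finSuccEquiv R 0 ((finSuccEquiv R 0).symm g) = g := by simp
    refine ⟨(finSuccEquiv R 0).symm g, hg, _, _, goodPoly_step _ 0 (fun _ => 1) ?_ 1 le_rfl ?_, rfl⟩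
    · rw [hfg, hg1]
      refine ⟨by simp, by simp, fun b _ hb => (hb (Subsingleton.elim _ _)).elim⟩
    · simp
  | succ N ih =>
    set J' := J.comap (finSuccEquiv R (N + 1)).symm.toRingEquiv with hJ'
    have e1 : J'.height = J.height := RingEquiv.height_comap _ _
    have e2 := aux_height_leadingCoeff J'
    obtain ⟨f', hf', a, r, hgood, hr⟩ := ih J'.leadingCoeff (by rw [← e1] at hJ; exact hJ.trans_le e2)
    obtain ⟨g, hg, hg1⟩ := (Ideal.mem_leadingCoeff _ _).1 hf'
    have hfg : finSuccEquiv R (N + 1) ((finSuccEquiv R (N + 1)).symm g) = g := by simp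
    set f := (finSuccEquiv R (N + 1)).symm g with hf
    refine ⟨f, hg, _, _, goodPoly_step _ a r ?_
      (f.support.sup (fun b => ∑ i : Fin (N + 1), r i * b i.succ) + 1) (by omega) ?_, ?_⟩
    · rw [hfg, hg1]; exact hgood
    · intro b hb
      exact Nat.lt_succ_of_le (Finset.le_sup (f := fun b : Fin (N + 1 + 1) →₀ ℕ =>
        ∑ i : Fin (N + 1), r i * b i.succ) hb)
    · rw [← Fin.succ_last, Fin.cons_succ]; exact hr

lemma exists_goodPoly_sum {R : Type*} [CommRing R] [IsNoetherianRing R] (d : ℕ)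
    (hdim : ringKrullDim R = d) (m n : ℕ) (J : Ideal (MvPolynomial (Fin m ⊕ Fin (n + 1)) R))
    (hJ : (d : ℕ∞) < J.height) :
    ∃ f ∈ J, ∃ (a : Fin m ⊕ Fin (n + 1) →₀ ℕ) (r : Fin m ⊕ Fin (n + 1) → ℕ),
      coeff a f = 1 ∧ (∀ i, 1 ≤ r i) ∧ r (Sum.inr (Fin.last n)) = 1 ∧
      ∀ b ∈ f.support, b ≠ a → ∑ i, r i * b i < ∑ i, r i * a i := by
  let e : Fin m ⊕ Fin (n + 1) ≃ Fin (m + n + 1) := finSumFinEquiv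
  have e1 : (J.comap (renameEquiv R e.symm).toRingEquiv).height = J.height :=
    RingEquiv.height_comap _ _
  obtain ⟨f, hf, a, r, ⟨h1, h2, h3⟩, h4⟩ := exists_goodPoly d hdim (m + n) _ (by rw [e1]; exact hJ)
  refine ⟨rename e.symm f, hf, a.mapDomain e.symm, r ∘ e, ?_, fun i => h2 _, ?_, ?_⟩
  · rw [coeff_rename_mapDomain _ e.symm.injective]; exact h1
  · have : e (Sum.inr (Fin.last n)) = Fin.last (m + n) := by
      simp [e]
    simp [this, h4]
  · have hsum : ∀ b : Fin (m + n + 1) →₀ ℕ, ∑ i, (r ∘ e) i * (b.mapDomain e.symm) i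
        = ∑ i, r i * b i := by
      intro b
      refine Fintype.sum_equiv e _ _ fun i => ?_
      have := Finsupp.mapDomain_apply e.symm.injective b (e i)
      rw [Equiv.symm_apply_apply] at this
      simp [this]
    intro b hb hba
    classical
    rw [support_rename_of_injective e.symm.injective, Finset.mem_image] at hb
    obtain ⟨c, hc, rfl⟩ := hb
    rw [hsum, hsum]
    exact h3 c hc (by rintro rfl; exact hba rfl)

section Laurent

variable {R : Type*} [CommRing R] {m n : ℕ} {B : Type*} [CommRing B] [Algebra R B]
    [Algebra (MvPolynomial (Fin m ⊕ Fin (n + 1)) R) B]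
    [IsScalarTower R (MvPolynomial (Fin m ⊕ Fin (n + 1)) R) B]

lemma laurent_units (R : Type*) [CommRing R] (m n : ℕ) (B : Type*) [CommRing B]
    [Algebra (MvPolynomial (Fin m ⊕ Fin (n + 1)) R) B]
    [IsLocalization (Ymonoid R m (n + 1)) B] :
    ∃ y : Fin (n + 1) → Bˣ, ∀ j, (y j : B) =
      algebraMap (MvPolynomial (Fin m ⊕ Fin (n + 1)) R) B (X (Sum.inr j)) := by
  have : ∀ j : Fin (n + 1), IsUnit
      (algebraMap (MvPolynomial (Fin m ⊕ Fin (n + 1)) R) B (X (Sum.inr j))) := fun j =>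
    IsLocalization.map_units B (⟨X (Sum.inr j), Submonoid.subset_closure ⟨j, rfl⟩⟩ :
      Ymonoid R m (n + 1))
  exact ⟨fun j => (this j).unit, fun j => rfl⟩

lemma laurent_lift [IsLocalization (Ymonoid R m (n + 1)) B]
    (g : Fin m ⊕ Fin (n + 1) → B) (hg : ∀ j, IsUnit (g (Sum.inr j))) :
    ∃ F : B →ₐ[R] B, ∀ p : MvPolynomial (Fin m ⊕ Fin (n + 1)) R,
      F (algebraMap _ B p) = aeval g p := by
  have hu : ∀ s : Ymonoid R m (n + 1), IsUnit (aeval (R := R) g (s : MvPolynomial _ R)) := by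
    rintro ⟨s, hs⟩
    change IsUnit (aeval (R := R) g s)
    induction hs using Submonoid.closure_induction with
    | mem x hx => obtain ⟨j, rfl⟩ := hx; simpa using hg j
    | one => simp
    | mul x y _ _ hx hy => rw [map_mul]; exact hx.mul hy
  refine ⟨IsLocalization.liftAlgHom (M := Ymonoid R m (n + 1)) (S := B) (f := aeval g) hu, ?_⟩
  intro p
  exact IsLocalization.lift_eq (M := Ymonoid R m (n + 1)) (g := (aeval (R := R) g).toRingHom) hu p

variable (R m n) in
lemma laurent_ext [IsLocalization (Ymonoid R m (n + 1)) B] (F : B →ₐ[R] B)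
    (h : ∀ i, F (algebraMap (MvPolynomial (Fin m ⊕ Fin (n + 1)) R) B (X i)) =
      algebraMap (MvPolynomial (Fin m ⊕ Fin (n + 1)) R) B (X i)) (x : B) : F x = x := by
  have : F.toRingHom = RingHom.id B := by
    apply IsLocalization.ringHom_ext (Ymonoid R m (n + 1))
    apply MvPolynomial.ringHom_ext
    · intro r
      have : algebraMap (MvPolynomial (Fin m ⊕ Fin (n + 1)) R) B (C r) = algebraMap R B r := by
        rw [IsScalarTower.algebraMap_apply R (MvPolynomial (Fin m ⊕ Fin (n + 1)) R) B]; rfl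
      simp [this]
    · intro i; simpa using h i
  exact congrArg (fun G : B →+* B => G x) this

lemma laurent_unit_zpow (F : B →ₐ[R] B) (t u : Bˣ) (h : F t = u) (z : ℤ) :
    F ((t ^ z : Bˣ) : B) = ((u ^ z : Bˣ) : B) := by
  have h1 : Units.map (F : B →* B) t = u := Units.ext h
  rw [← h1, ← map_zpow]; rfl

lemma laurent_hom [IsLocalization (Ymonoid R m (n + 1)) B] (y : Fin (n + 1) → Bˣ)
    (hy : ∀ j, (y j : B) = algebraMap (MvPolynomial (Fin m ⊕ Fin (n + 1)) R) B (X (Sum.inr j)))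
    (ε : ℤ) (c : Fin m → ℤ) (k : Fin (n + 1) → ℤ) :
    ∃ F : B →ₐ[R] B,
      (∀ i, F (algebraMap (MvPolynomial (Fin m ⊕ Fin (n + 1)) R) B (X (Sum.inl i))) =
        algebraMap (MvPolynomial (Fin m ⊕ Fin (n + 1)) R) B (X (Sum.inl i)) +
          ε * ((y (Fin.last n) ^ c i : Bˣ) : B)) ∧
      (∀ j, F (y j) = ((y j * y (Fin.last n) ^ k j : Bˣ) : B)) := by
  obtain ⟨F, hF⟩ := laurent_lift (R := R) (m := m) (n := n) (B := B)
    (Sum.elim (fun i => algebraMap (MvPolynomial (Fin m ⊕ Fin (n + 1)) R) B (X (Sum.inl i)) +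
          ε * ((y (Fin.last n) ^ c i : Bˣ) : B)) (fun j => ((y j * y (Fin.last n) ^ k j : Bˣ) : B)))
    (fun j => Units.isUnit _)
  refine ⟨F, fun i => ?_, fun j => ?_⟩
  · rw [hF, aeval_X]; rfl
  · rw [hy j, hF, aeval_X]; rfl

lemma laurent_theta [IsLocalization (Ymonoid R m (n + 1)) B] (y : Fin (n + 1) → Bˣ)
    (hy : ∀ j, (y j : B) = algebraMap (MvPolynomial (Fin m ⊕ Fin (n + 1)) R) B (X (Sum.inr j)))
    (c : Fin m → ℤ) (k : Fin (n + 1) → ℤ) (hk : k (Fin.last n) = 0) :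
    ∃ F : B ≃ₐ[R] B,
      (∀ i, F (algebraMap (MvPolynomial (Fin m ⊕ Fin (n + 1)) R) B (X (Sum.inl i))) =
        algebraMap (MvPolynomial (Fin m ⊕ Fin (n + 1)) R) B (X (Sum.inl i)) +
          ((y (Fin.last n) ^ c i : Bˣ) : B)) ∧
      (∀ j, F (y j) = ((y j * y (Fin.last n) ^ k j : Bˣ) : B)) := by
  obtain ⟨F, hF1, hF2⟩ := laurent_hom (R := R) y hy 1 c k
  obtain ⟨G, hG1, hG2⟩ := laurent_hom (R := R) y hy (-1) c (-k)
  have hFt : F (y (Fin.last n)) = y (Fin.last n) := by simpa [hk] using hF2 (Fin.last n)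
  have hGt : G (y (Fin.last n)) = y (Fin.last n) := by simpa [hk] using hG2 (Fin.last n)
  have hFz := laurent_unit_zpow F _ _ hFt
  have hGz := laurent_unit_zpow G _ _ hGt
  have hFG : F.comp G = AlgHom.id R B := by
    ext x
    apply laurent_ext R m n (F.comp G)
    rintro (i | j)
    · simp [hG1, hF1, hFz]
    · simp only [AlgHom.comp_apply, ← hy, hG2, Units.val_mul, map_mul, hFz, hF2]
      rw [← Units.val_mul, ← Units.val_mul]; simp
  have hGF : G.comp F = AlgHom.id R B := by
    ext x
    apply laurent_ext R m n (G.comp F)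
    rintro (i | j)
    · simp [hG1, hF1, hGz]
    · simp only [AlgHom.comp_apply, ← hy, hG2, Units.val_mul, map_mul, hGz, hF2]
      rw [← Units.val_mul, ← Units.val_mul]; simp
  exact ⟨AlgEquiv.ofAlgHom F G hFG hGF, fun i => by simpa using hF1 i, hF2⟩

lemma laurent_sigma [IsLocalization (Ymonoid R m (n + 1)) B] (y : Fin (n + 1) → Bˣ)
    (hy : ∀ j, (y j : B) = algebraMap (MvPolynomial (Fin m ⊕ Fin (n + 1)) R) B (X (Sum.inr j))) :
    ∃ F : B ≃ₐ[R] B,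
      (∀ i, F (algebraMap (MvPolynomial (Fin m ⊕ Fin (n + 1)) R) B (X (Sum.inl i))) =
        algebraMap (MvPolynomial (Fin m ⊕ Fin (n + 1)) R) B (X (Sum.inl i))) ∧
      (∀ j, j ≠ Fin.last n → F (y j) = y j) ∧
      F (y (Fin.last n)) = ((y (Fin.last n) ^ (-1 : ℤ) : Bˣ) : B) := by
  obtain ⟨F, hF1, hF2⟩ := laurent_hom (R := R) y hy 0 0 (Pi.single (Fin.last n) (-2))
  have hFt : F (y (Fin.last n)) = ((y (Fin.last n) ^ (-1 : ℤ) : Bˣ) : B) := by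
    rw [hF2, Pi.single_eq_same]
    congr 1
    rw [← zpow_one_add]; rfl
  have hFj : ∀ j, j ≠ Fin.last n → F (y j) = y j := by
    intro j hj
    rw [hF2, Pi.single_eq_of_ne hj]; simp
  have hFi : ∀ i, F (algebraMap (MvPolynomial (Fin m ⊕ Fin (n + 1)) R) B (X (Sum.inl i))) =
        algebraMap (MvPolynomial (Fin m ⊕ Fin (n + 1)) R) B (X (Sum.inl i)) := by
    intro i; simpa using hF1 i
  have hFz := laurent_unit_zpow F _ _ hFt
  have hFF : F.comp F = AlgHom.id R B := by
    ext x
    apply laurent_ext R m n (F.comp F)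
    rintro (i | j)
    · simp [hFi]
    · rw [← hy, AlgHom.comp_apply]
      by_cases hj : j = Fin.last n
      · subst hj
        rw [hFt, hFz]; simp
      · rw [hFj j hj, hFj j hj]
  exact ⟨AlgEquiv.ofAlgHom F F hFF hFF, hFi, hFj, hFt⟩

/-- The subring `R[X_1,…,X_m,Y_1^{±1},…,Y_n^{±1},Y_{n+1}]`. -/
def lowSub (R : Type*) [CommRing R] (m n : ℕ) (B : Type*) [CommRing B]
    [Algebra (MvPolynomial (Fin m ⊕ Fin (n + 1)) R) B] : Subring B where
  carrier := {h | ∃ (p s : MvPolynomial (Fin m ⊕ Fin (n + 1)) R),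
          s ∈ Submonoid.closure
            (Set.range fun j : Fin n =>
              (X (Sum.inr (Fin.castSucc j)) : MvPolynomial (Fin m ⊕ Fin (n + 1)) R)) ∧
          h * algebraMap (MvPolynomial (Fin m ⊕ Fin (n + 1)) R) B s
            = algebraMap (MvPolynomial (Fin m ⊕ Fin (n + 1)) R) B p}
  mul_mem' := by
    rintro a b ⟨p, s, hs, h⟩ ⟨q, u, hu, h'⟩
    refine ⟨p * q, s * u, mul_mem hs hu, ?_⟩
    rw [map_mul, map_mul, ← h, ← h']; ring
  one_mem' := ⟨1, 1, one_mem _, by simp⟩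
  add_mem' := by
    rintro a b ⟨p, s, hs, h⟩ ⟨q, u, hu, h'⟩
    refine ⟨p * u + q * s, s * u, mul_mem hs hu, ?_⟩
    rw [map_mul, map_add, map_mul, map_mul, ← h, ← h']; ring
  zero_mem' := ⟨0, 1, one_mem _, by simp⟩
  neg_mem' := by
    rintro a ⟨p, s, hs, h⟩
    refine ⟨-p, s, hs, ?_⟩
    rw [map_neg, ← h]; ring

lemma lowSub_algebraMap (p : MvPolynomial (Fin m ⊕ Fin (n + 1)) R) :
    algebraMap _ B p ∈ lowSub R m n B := ⟨p, 1, one_mem _, by simp⟩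

/-- Elements `1 + t h` with `h` in a subring containing `t`. -/
def oneAdd (S : Subring B) (t : B) (ht : t ∈ S) : Submonoid B where
  carrier := {u | ∃ h ∈ S, u = 1 + t * h}
  one_mem' := ⟨0, zero_mem _, by simp⟩
  mul_mem' := by
    rintro a b ⟨h, hh, rfl⟩ ⟨k, hk, rfl⟩
    exact ⟨h + k + t * (h * k), add_mem (add_mem hh hk) (mul_mem ht (mul_mem hh hk)), by ring⟩

end Laurent

/-- **Lemma (Mandal).** Let `R` be Noetherian of finite Krull dimension `d`, `n > 0`
(here the Laurent variables are indexed by `Fin (n+1)`, so there are `n + 1 ≥ 1` of them,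
the last one playing the role of `Y_n`), and `B = R[X_1,…,X_m,Y_1^{±1},…,Y_{n+1}^{±1}]`.
Let `I` be an ideal of `B` of height `> d`.  Then there is an `R[Y_{n+1}^{±1}]`-algebra
automorphism `Θ` of `B` (an `R`-algebra automorphism fixing the last Laurent variable)
such that `Θ(I)` contains an element `1 + Y_{n+1}·h` with
`h ∈ R[X_1,…,X_m,Y_1^{±1},…,Y_n^{±1},Y_{n+1}]`. -/
theorem laurent_ideal_contains_special_monic
    (R : Type*) [CommRing R] [IsNoetherianRing R] (d : ℕ) (hdim : ringKrullDim R = d)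
    (m n : ℕ)
    (B : Type*) [CommRing B] [Algebra R B]
    [Algebra (MvPolynomial (Fin m ⊕ Fin (n + 1)) R) B]
    [IsScalarTower R (MvPolynomial (Fin m ⊕ Fin (n + 1)) R) B]
    [IsLocalization (Ymonoid R m (n + 1)) B]
    (I : Ideal B)
    (hht : (d : ℕ∞) < ⨅ (p : PrimeSpectrum B) (_ : I ≤ p.asIdeal), Order.height p) :
    ∃ Θ : B ≃ₐ[R] B,
      Θ (algebraMap (MvPolynomial (Fin m ⊕ Fin (n + 1)) R) B (X (Sum.inr (Fin.last n))))
        = algebraMap (MvPolynomial (Fin m ⊕ Fin (n + 1)) R) B (X (Sum.inr (Fin.last n))) ∧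
      ∃ h : B,
        (∃ (p s : MvPolynomial (Fin m ⊕ Fin (n + 1)) R),
          s ∈ Submonoid.closure
            (Set.range fun j : Fin n =>
              (X (Sum.inr (Fin.castSucc j)) : MvPolynomial (Fin m ⊕ Fin (n + 1)) R)) ∧
          h * algebraMap (MvPolynomial (Fin m ⊕ Fin (n + 1)) R) B s
            = algebraMap (MvPolynomial (Fin m ⊕ Fin (n + 1)) R) B p) ∧
        1 + algebraMap (MvPolynomial (Fin m ⊕ Fin (n + 1)) R) B (X (Sum.inr (Fin.last n))) * h
          ∈ I.map Θ := by
  obtain ⟨y, hy⟩ := laurent_units R m n B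
  have hI : (d : ℕ∞) < I.height := by
    refine lt_of_lt_of_le hht ?_
    rw [Ideal.height_eq_inf_minimalPrimes]
    refine le_iInf₂ fun P hP => ?_
    have hPp := hP.isPrime
    refine (iInf₂_le (⟨P, hPp⟩ : PrimeSpectrum B) hP.1.2).trans ?_
    rw [← PrimeSpectrum.height_eq_orderHeight]
  obtain ⟨σ, hσ1, hσ2, hσ3⟩ := laurent_sigma (R := R) y hy
  have hJ : (d : ℕ∞) < ((I.comap σ.toRingEquiv).under
      (MvPolynomial (Fin m ⊕ Fin (n + 1)) R)).height := by
    rw [IsLocalization.height_under (Ymonoid R m (n + 1)), RingEquiv.height_comap]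
    exact hI
  obtain ⟨f, hf, a, r, hfa, hr1, hrl, hlt⟩ := exists_goodPoly_sum d hdim m n _ hJ
  have hfI : σ (algebraMap _ B f) ∈ I := hf
  set t := y (Fin.last n) with ht
  obtain ⟨Θ, hΘ1, hΘ2⟩ := laurent_theta (R := R) y hy (fun i => -(r (Sum.inl i) : ℤ))
    (fun j => if j = Fin.last n then 0 else -(r (Sum.inr j) : ℤ)) (by simp)
  have hΘt : Θ t = t := by simpa using hΘ2 (Fin.last n)
  refine ⟨Θ, by rw [← hy]; exact hΘt, ?_⟩
  set S := lowSub R m n B with hS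
  have htS : (t : B) ∈ S := by rw [ht, hy]; exact lowSub_algebraMap _
  have htSn : ∀ k : ℕ, ((t ^ (k : ℤ) : Bˣ) : B) ∈ S := by
    intro k; rw [zpow_natCast, Units.val_pow_eq_pow_val]; exact pow_mem htS _
  -- the unit parts
  let v : Fin m ⊕ Fin (n + 1) → Bˣ :=
    Sum.elim (fun _ => 1) (fun j => if j = Fin.last n then 1 else y j)
  let w : Fin m ⊕ Fin (n + 1) → B :=
    Sum.elim (fun i => 1 + ((t ^ (r (Sum.inl i) : ℤ) : Bˣ) : B) *
      algebraMap (MvPolynomial (Fin m ⊕ Fin (n + 1)) R) B (X (Sum.inl i)))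
      (fun j => if j = Fin.last n then 1 else y j)
  have hwS : ∀ i, w i ∈ S := by
    rintro (i | j)
    · exact add_mem (one_mem _) (mul_mem (htSn _) (lowSub_algebraMap _))
    · by_cases hj : j = Fin.last n
      · simp [w, hj, one_mem]
      · simp only [w, Sum.elim_inr, hj, if_false]; rw [hy]; exact lowSub_algebraMap _
  have hvS : ∀ i, (((v i)⁻¹ : Bˣ) : B) ∈ S := by
    rintro (i | j)
    · simp [v, one_mem]
    · by_cases hj : j = Fin.last n
      · simp [v, hj, one_mem]
      · simp only [v, Sum.elim_inr, hj, if_false]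
        obtain ⟨j', rfl⟩ := Fin.exists_castSucc_eq.2 hj
        refine ⟨1, X (Sum.inr j'.castSucc), Submonoid.subset_closure ⟨j', rfl⟩, ?_⟩
        rw [← hy]; simp
  have hwv : ∀ i, w i * (((v i)⁻¹ : Bˣ) : B) ∈ oneAdd S t htS := by
    rintro (i | j)
    · obtain ⟨k, hk⟩ : ∃ k, r (Sum.inl i) = k + 1 := ⟨r (Sum.inl i) - 1, by
        have := hr1 (Sum.inl i); omega⟩
      refine ⟨((t ^ (k : ℤ) : Bˣ) : B) *
        algebraMap (MvPolynomial (Fin m ⊕ Fin (n + 1)) R) B (X (Sum.inl i)),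
        mul_mem (htSn _) (lowSub_algebraMap _), ?_⟩
      simp only [w, v, Sum.elim_inl, hk, zpow_natCast, Units.val_pow_eq_pow_val, inv_one,
        Units.val_one]
      ring
    · by_cases hj : j = Fin.last n
      · simp [v, w, hj, one_mem]
      · simp [v, w, hj, one_mem]
  have hgen : ∀ i, Θ (σ (algebraMap (MvPolynomial (Fin m ⊕ Fin (n + 1)) R) B (X i))) =
      ((t ^ (-(r i : ℤ)) : Bˣ) : B) * w i := by
    rintro (i | j)
    · rw [hσ1, hΘ1, ← ht]
      simp only [w, Sum.elim_inl]
      rw [mul_add, ← mul_assoc, ← Units.val_mul, ← zpow_add]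
      simp [add_comm]
    · rw [← hy]
      by_cases hj : j = Fin.last n
      · subst hj
        have hΘz : Θ ((t ^ (-1 : ℤ) : Bˣ) : B) = ((t ^ (-1 : ℤ) : Bˣ) : B) :=
          laurent_unit_zpow (Θ : B →ₐ[R] B) t t hΘt (-1)
        rw [hσ3, hΘz]
        simp [w, hrl]
      · rw [hσ2 j hj, hΘ2]
        simp only [w, Sum.elim_inr, hj, if_false]
        rw [Units.val_mul, mul_comm]
  let W : (Fin m ⊕ Fin (n + 1) →₀ ℕ) → B := fun b => ∏ i, w i ^ b i
  let wt : (Fin m ⊕ Fin (n + 1) →₀ ℕ) → ℕ := fun b => ∑ i, r i * b i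
  have hcomp : Θ (σ (algebraMap _ B f)) =
      ∑ b ∈ f.support, algebraMap R B (coeff b f) * (((t ^ (-(wt b : ℤ)) : Bˣ) : B) * W b) := by
    have h1 : Θ (σ (algebraMap _ B f)) =
        aeval (fun i => ((t ^ (-(r i : ℤ)) : Bˣ) : B) * w i) f := by
      have : ((Θ : B →ₐ[R] B).comp (σ : B →ₐ[R] B)).comp (IsScalarTower.toAlgHom R
          (MvPolynomial (Fin m ⊕ Fin (n + 1)) R) B) =
          aeval (fun i => ((t ^ (-(r i : ℤ)) : Bˣ) : B) * w i) := by
        apply MvPolynomial.algHom_ext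
        intro i
        rw [aeval_X]
        exact hgen i
      exact congrArg (fun F : MvPolynomial (Fin m ⊕ Fin (n + 1)) R →ₐ[R] B => F f) this
    rw [h1, aeval_def, eval₂_eq']
    refine Finset.sum_congr rfl fun b _ => ?_
    congr 1
    simp only [mul_pow, Finset.prod_mul_distrib, W, wt]
    congr 1
    push_cast
    rw [← Finset.sum_neg_distrib]
    have h2 : ∀ i, (((t ^ (-(r i : ℤ)) : Bˣ) : B)) ^ b i =
        ((t ^ (-((r i : ℤ) * b i)) : Bˣ) : B) := by
      intro i
      rw [← Units.val_pow_eq_pow_val, ← zpow_natCast, ← zpow_mul, neg_mul]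
    simp only [h2]
    have h3 : ∀ (s : Finset (Fin m ⊕ Fin (n + 1))) (g : Fin m ⊕ Fin (n + 1) → ℤ),
        ∏ i ∈ s, ((t ^ g i : Bˣ) : B) = ((t ^ (∑ i ∈ s, g i) : Bˣ) : B) := by
      intro s g
      classical
      induction s using Finset.induction_on with
      | empty => simp
      | insert x s hx ih =>
        rw [Finset.prod_insert hx, Finset.sum_insert hx, ih, zpow_add, Units.val_mul]
    exact h3 _ _
  let V : Bˣ := ∏ i, (v i)⁻¹ ^ a i
  have hVS : (V : B) ∈ S := by
    simp only [V, Units.coe_prod, Units.val_pow_eq_pow_val]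
    exact prod_mem fun i _ => pow_mem (hvS i) _
  have hVW : (V : B) * W a ∈ oneAdd S t htS := by
    have : (V : B) * W a = ∏ i, (w i * (((v i)⁻¹ : Bˣ) : B)) ^ a i := by
      simp only [V, W, Units.coe_prod, Units.val_pow_eq_pow_val, mul_pow, Finset.prod_mul_distrib]
      rw [mul_comm]
    rw [this]
    exact prod_mem fun i _ => pow_mem (hwv i) _
  obtain ⟨h0, hh0, hh0'⟩ := hVW
  have hWS : ∀ b, W b ∈ S := fun b => prod_mem fun i _ => pow_mem (hwS i) _
  have hRS : ∀ x : R, algebraMap R B x ∈ S := by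
    intro x
    rw [IsScalarTower.algebraMap_apply R (MvPolynomial (Fin m ⊕ Fin (n + 1)) R) B]
    exact lowSub_algebraMap _
  have hnt : Nontrivial R := by
    by_contra hcon
    rw [not_nontrivial_iff_subsingleton] at hcon
    rw [ringKrullDim_eq_bot_of_subsingleton] at hdim
    exact absurd hdim (by simp)
  have hamem : a ∈ f.support := by rw [mem_support_iff, hfa]; exact one_ne_zero
  have hterm : ∀ b ∈ f.support.erase a, ∃ h ∈ S,
      (V : B) * ((t ^ (wt a : ℤ) : Bˣ) : B) *
        (algebraMap R B (coeff b f) * (((t ^ (-(wt b : ℤ)) : Bˣ) : B) * W b)) = t * h := by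
    intro b hb
    have hlt' : wt b < wt a := hlt b (Finset.mem_of_mem_erase hb) (Finset.ne_of_mem_erase hb)
    obtain ⟨k, hk⟩ := Nat.exists_eq_add_of_lt hlt'
    refine ⟨V * algebraMap R B (coeff b f) * ((t ^ (k : ℤ) : Bˣ) : B) * W b,
      mul_mem (mul_mem (mul_mem hVS (hRS _)) (htSn _)) (hWS _), ?_⟩
    have : ((t ^ (wt a : ℤ) : Bˣ) : B) * ((t ^ (-(wt b : ℤ)) : Bˣ) : B) =
        t * ((t ^ (k : ℤ) : Bˣ) : B) := by
      rw [← Units.val_mul, ← Units.val_mul, ← zpow_add, ← zpow_one_add]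
      congr 2
      rw [hk]; push_cast; ring
    linear_combination (V : B) * algebraMap R B (coeff b f) * W b * this
  choose! H hHS hH using hterm
  refine ⟨h0 + ∑ b ∈ f.support.erase a, H b, ?_, ?_⟩
  · exact add_mem hh0 (sum_mem hHS)
  · have hmem : (V : B) * ((t ^ (wt a : ℤ) : Bˣ) : B) * Θ (σ (algebraMap _ B f)) ∈ I.map Θ :=
      Ideal.mul_mem_left _ _ (Ideal.mem_map_of_mem _ hfI)
    convert hmem using 1
    rw [hcomp, Finset.mul_sum, ← Finset.add_sum_erase _ _ hamem, Finset.sum_congr rfl hH,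
      ← Finset.mul_sum, hfa, map_one, ← hy]
    have : ((t ^ (wt a : ℤ) : Bˣ) : B) * ((t ^ (-(wt a : ℤ)) : Bˣ) : B) = 1 := by
      rw [← Units.val_mul, ← zpow_add]; simp
    linear_combination -hh0' - (V : B) * W a * this
end
end

section
/- Let R be a commutative Noetherian ring of finite Krull dimension d and B = R[X_1,…,X_m,Y_1^{±1},…,Y_n^{±1}] a Laurent polynomial ring over R. Then every finitely generated projective B-module of constant rank > d has a unimodular element. -/
open MvPolynomial

noncomputable section

namespace BLR

/-! ### Heights of primes in polynomial rings -/

section Heights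
open Polynomial Ideal IsLocalization

attribute [local instance] Polynomial.algebra Polynomial.isLocalization in
theorem height_le_under_add_one {R : Type*} [CommRing R] [IsNoetherianRing R]
    (P : Ideal (Polynomial R)) [P.IsPrime] :
    P.height ≤ (P.comap Polynomial.C).height + 1 := by
  set p : Ideal R := P.comap Polynomial.C with hp
  have : P.LiesOver p := ⟨rfl⟩
  let Rₚ := Localization.AtPrime p
  set p' : Ideal Rₚ := p.map (algebraMap R Rₚ) with p'_def
  have hmax : p'.IsMaximal := by
    rw [p'_def, Localization.AtPrime.map_eq_maximalIdeal]
    exact IsLocalRing.maximalIdeal.isMaximal Rₚ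
  let P' : Ideal (Polynomial Rₚ) := P.map (algebraMap (Polynomial R) (Polynomial Rₚ))
  have disj : Disjoint (p.primeCompl.map Polynomial.C : Set (Polynomial R)) P := by
    refine Set.disjoint_left.mpr fun a ⟨b, hb⟩ ha ↦ hb.1 ?_
    rw [SetLike.mem_coe, hp, mem_comap]
    rw [← hb.2] at ha
    exact ha
  have hP'p : P'.IsPrime := isPrime_of_isPrime_disjoint (p.primeCompl.map Polynomial.C) _ P ‹_› disj
  have : P'.LiesOver p' := liesOver_of_isPrime_of_disjoint p.primeCompl _ _ disj
  have eq1 : p.height = p'.height := by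
    rw [height_map_of_disjoint p.primeCompl]
    exact Disjoint.symm <| Set.disjoint_left.mpr fun _ a b ↦ b a
  have eq2 : P.height = P'.height := by
    rw [height_map_of_disjoint (Submonoid.map Polynomial.C <| p.primeCompl) _ disj]
  rw [eq1, eq2]
  obtain ⟨Q, hQ, hQle⟩ := Ideal.exists_le_maximal P' hP'p.ne_top
  have : Q.LiesOver p' := by
    refine ⟨hmax.eq_of_le ?_ ?_⟩
    · exact (inferInstance : (Q.under Rₚ).IsPrime).ne_top
    · rw [P'.over_def p']
      exact Ideal.comap_mono hQle
  rw [← Polynomial.height_eq_height_add_one p' Q]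
  exact Ideal.height_mono hQle

theorem height_map_C_eq {R : Type*} [CommRing R] [IsNoetherianRing R]
    (p : Ideal R) [p.IsPrime] : (p.map (Polynomial.C : R →+* Polynomial R)).height = p.height := by
  have h1 : (p.map (Polynomial.C : R →+* Polynomial R)).IsPrime := isPrime_map_C_of_isPrime
  have : (p.map (Polynomial.C : R →+* Polynomial R)).LiesOver p := by
    refine ⟨?_⟩
    ext x
    simp only [Ideal.under, Ideal.mem_comap, Polynomial.algebraMap_eq]
    constructor
    · exact fun h => Ideal.mem_map_of_mem _ h
    · intro h
      rw [Ideal.mem_map_C_iff] at h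
      simpa using h 0
  simp [height_eq_height_add_of_liesOver_of_hasGoingDown p]

end Heights

/-- every prime of height `≥ h` meets `W`. -/
def MeetsPrimes {D : Type*} [CommRing D] (W : Set D) (h : ℕ) : Prop :=
  ∀ q : Ideal D, q.IsPrime → (h : ℕ∞) ≤ q.height → ∃ w ∈ W, w ∈ q

theorem meets_ideal {D : Type*} [CommRing D] {W : Submonoid D} {h : ℕ}
    (H : MeetsPrimes (W : Set D) h) (J : Ideal D)
    (hJ : ∀ q : Ideal D, q.IsPrime → J ≤ q → (h : ℕ∞) ≤ q.height) : ∃ w ∈ W, w ∈ J := by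
  by_contra hcon
  push Not at hcon
  obtain ⟨q, hq, hJq, hd⟩ := Ideal.exists_le_prime_disjoint J W
    (Set.disjoint_left.mpr fun a ha hb => hcon a hb ha)
  obtain ⟨w, hw, hwq⟩ := H q hq (hJ q hq hJq)
  exact Set.disjoint_left.mp hd hwq hw

theorem poly_prime_step {D : Type*} [CommRing D] [IsNoetherianRing D] {W : Submonoid D} {h : ℕ}
    (H : MeetsPrimes (W : Set D) h) (q : Ideal (Polynomial D)) (hq : q.IsPrime)
    (hh : (h : ℕ∞) ≤ q.height) : ∃ f ∈ q, f.leadingCoeff ∈ W := by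
  have key : ∃ w ∈ W, w ∈ q.leadingCoeff := by
    apply meets_ideal H
    intro p' hp' hle
    set p : Ideal D := q.comap Polynomial.C with hp
    have hpprime : p.IsPrime := Ideal.IsPrime.comap _
    have hpL : p ≤ q.leadingCoeff := by
      intro x hx
      rw [Ideal.mem_leadingCoeff]
      exact ⟨Polynomial.C x, hx, Polynomial.leadingCoeff_C x⟩
    rcases (hpL.trans hle).eq_or_lt with heq | hlt
    · have hL : q.leadingCoeff ≤ p := heq ▸ hle
      have hqe : q ≤ p.map (Polynomial.C : D →+* Polynomial D) := by
        have : ∀ n : ℕ, ∀ f ∈ q, f.natDegree ≤ n →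
            f ∈ p.map (Polynomial.C : D →+* Polynomial D) := by
          intro n
          induction n with
          | zero =>
            intro f hf hn
            rw [Polynomial.eq_C_of_natDegree_le_zero hn] at hf ⊢
            exact Ideal.mem_map_of_mem _ hf
          | succ n ih =>
            intro f hf hn
            have hc : f.leadingCoeff ∈ p := hL ((Ideal.mem_leadingCoeff _ _).2 ⟨f, hf, rfl⟩)
            have hm : Polynomial.C f.leadingCoeff * Polynomial.X ^ f.natDegree ∈
                p.map (Polynomial.C : D →+* Polynomial D) :=
              Ideal.mul_mem_right _ _ (Ideal.mem_map_of_mem _ hc)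
            have hmq : Polynomial.C f.leadingCoeff * Polynomial.X ^ f.natDegree ∈ q :=
              Ideal.map_comap_le hm
            have e : f.eraseLead ∈ q := by
              rw [← Polynomial.self_sub_C_mul_X_pow]
              exact q.sub_mem hf hmq
            have := ih f.eraseLead e ((Polynomial.eraseLead_natDegree_le f).trans (by omega))
            rw [← Polynomial.eraseLead_add_C_mul_X_pow f]
            exact Ideal.add_mem _ this hm
        exact fun f hf => this _ f hf le_rfl
      calc (h : ℕ∞) ≤ q.height := hh
        _ ≤ _ := Ideal.height_mono hqe
        _ = p.height := height_map_C_eq p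
        _ = p'.height := by rw [heq]
    · calc (h : ℕ∞) ≤ q.height := hh
        _ ≤ p.height + 1 := height_le_under_add_one q
        _ ≤ p'.height := Ideal.height_add_one_le_of_lt_of_isPrime hlt
  obtain ⟨w, hw, hwL⟩ := key
  rw [Ideal.mem_leadingCoeff] at hwL
  obtain ⟨f, hf, rfl⟩ := hwL
  exact ⟨f, hf, hw⟩

end BLR


namespace BLR

/-! ### Filtration by powers of a unit -/

section Filt
variable {R D : Type*} [CommRing R] [CommRing D] [Algebra R D]

/-- the `A`-span of `y^i`, `i ≤ n`. -/
def G (A : Subalgebra R D) (y : Dˣ) (n : ℤ) : Submodule A D :=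
  Submodule.span A {x | ∃ i : ℤ, i ≤ n ∧ x = ((y ^ i : Dˣ) : D)}

theorem G_mono (A : Subalgebra R D) (y : Dˣ) {m n : ℤ} (h : m ≤ n) : G A y m ≤ G A y n :=
  Submodule.span_mono fun _ ⟨i, hi, e⟩ => ⟨i, hi.trans h, e⟩

theorem zpow_mem_G (A : Subalgebra R D) (y : Dˣ) {i n : ℤ} (h : i ≤ n) :
    ((y ^ i : Dˣ) : D) ∈ G A y n := Submodule.subset_span ⟨i, h, rfl⟩

theorem A_mul_mem_G {A : Subalgebra R D} {y : Dˣ} {n : ℤ} {a x : D} (ha : a ∈ A)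
    (hx : x ∈ G A y n) : a * x ∈ G A y n := (G A y n).smul_mem ⟨a, ha⟩ hx

theorem A_mem_G {A : Subalgebra R D} {y : Dˣ} {a : D} (ha : a ∈ A) : a ∈ G A y 0 := by
  have := A_mul_mem_G ha (zpow_mem_G A y (le_refl 0))
  simpa using this

theorem mul_mem_G {A : Subalgebra R D} {y : Dˣ} {m n : ℤ} {a b : D} (ha : a ∈ G A y m)
    (hb : b ∈ G A y n) : a * b ∈ G A y (m + n) := by
  have := Submodule.mul_mem_mul ha hb
  rw [G, G, Submodule.span_mul_span] at this
  refine Submodule.span_mono ?_ this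
  rintro _ ⟨_, ⟨i, hi, rfl⟩, _, ⟨j, hj, rfl⟩, rfl⟩
  exact ⟨i + j, by omega, by simp [zpow_add]⟩

/-- `f` has leading term `g * y^n`. -/
def LT (A : Subalgebra R D) (y : Dˣ) (g : D) (n : ℤ) (f : D) : Prop :=
  g ∈ A ∧ f - g * ((y ^ n : Dˣ) : D) ∈ G A y (n - 1)

theorem LT.mem_G {A : Subalgebra R D} {y : Dˣ} {g : D} {n : ℤ} {f : D} (h : LT A y g n f) :
    f ∈ G A y n := by
  have h1 := G_mono A y (by omega : n - 1 ≤ n) h.2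
  have h2 := A_mul_mem_G h.1 (zpow_mem_G A y (le_refl n))
  have := (G A y n).add_mem h1 h2
  simpa using this

theorem LT.mul {A : Subalgebra R D} {y : Dˣ} {g g' : D} {n n' : ℤ} {f f' : D}
    (h : LT A y g n f) (h' : LT A y g' n' f') : LT A y (g * g') (n + n') (f * f') := by
  refine ⟨A.mul_mem h.1 h'.1, ?_⟩
  have e : f * f' - g * g' * ((y ^ (n + n') : Dˣ) : D) =
      (f - g * ((y ^ n : Dˣ) : D)) * f' + g * ((y ^ n : Dˣ) : D) * (f' - g' * ((y ^ n' : Dˣ) : D)) := by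
    simp only [zpow_add, Units.val_mul]; ring
  rw [e]
  refine Submodule.add_mem _ ?_ ?_
  · exact G_mono A y (by omega) (mul_mem_G h.2 h'.mem_G)
  · exact G_mono A y (by omega)
      (mul_mem_G (A_mul_mem_G h.1 (zpow_mem_G A y (le_refl n))) h'.2)

theorem LT.add {A : Subalgebra R D} {y : Dˣ} {g : D} {n : ℤ} {f f' : D}
    (h : LT A y g n f) (h' : f' ∈ G A y (n - 1)) : LT A y g n (f + f') :=
  ⟨h.1, by
    have := Submodule.add_mem _ h.2 h'
    rwa [show f + f' - g * ((y ^ n : Dˣ) : D) = f - g * ((y ^ n : Dˣ) : D) + f' by ring]⟩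

theorem LT.one (A : Subalgebra R D) (y : Dˣ) : LT A y 1 0 1 := ⟨A.one_mem, by simp⟩

theorem LT.pow {A : Subalgebra R D} {y : Dˣ} {g : D} {n : ℤ} {f : D}
    (h : LT A y g n f) (k : ℕ) : LT A y (g ^ k) (n * k) (f ^ k) := by
  induction k with
  | zero => simpa using LT.one A y
  | succ k ih =>
    rw [pow_succ, pow_succ, Nat.cast_succ, mul_add, mul_one]
    exact ih.mul h

/-- leading coefficient a unit of `A`. -/
def Mon (A : Subalgebra R D) (y : Dˣ) (f : D) : Prop :=
  ∃ (u u' : D) (n : ℤ), u' ∈ A ∧ u * u' = 1 ∧ LT A y u n f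

theorem G_induction {A : Subalgebra R D} {y : Dˣ} {n : ℤ} {p : D → Prop}
    (zero : p 0) (hadd : ∀ a b, p a → p b → p (a + b))
    (term : ∀ a ∈ A, ∀ i : ℤ, i ≤ n → p (a * ((y ^ i : Dˣ) : D))) {x : D} (hx : x ∈ G A y n) :
    p x := by
  refine Submodule.closure_induction (s := {x | ∃ i : ℤ, i ≤ n ∧ x = ((y ^ i : Dˣ) : D)})
    (p := fun x _ => p x) ?_ ?_ ?_ hx
  · exact zero
  · exact fun a b _ _ ha hb => hadd a b ha hb
  · rintro a _ ⟨i, hi, rfl⟩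
    exact term a.1 a.2 i hi

theorem map_G {D' : Type*} [CommRing D'] [Algebra R D'] {A : Subalgebra R D} {y : Dˣ}
    {A' : Subalgebra R D'} (C : D →+* D') (hC : ∀ a ∈ A, C a ∈ A') {n : ℤ} {x : D}
    (hx : x ∈ G A y n) : C x ∈ G A' (Units.map C y) n := by
  refine G_induction (p := fun x => C x ∈ G A' (Units.map C y) n) ?_ ?_ ?_ hx
  · simp
  · intro a b ha hb
    rw [map_add]; exact Submodule.add_mem _ ha hb
  · intro a ha i hi
    rw [map_mul]
    refine A_mul_mem_G (hC a ha) ?_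
    have := zpow_mem_G A' (Units.map (C : D →* D') y) hi
    rw [← map_zpow] at this
    exact this

theorem map_LT {D' : Type*} [CommRing D'] [Algebra R D'] {A : Subalgebra R D} {y : Dˣ}
    {A' : Subalgebra R D'} (C : D →+* D') (hC : ∀ a ∈ A, C a ∈ A') {g : D} {n : ℤ} {x : D}
    (hx : LT A y g n x) : LT A' (Units.map C y) (C g) n (C x) := by
  refine ⟨hC _ hx.1, ?_⟩
  have := map_G C hC hx.2
  rw [map_sub, map_mul] at this
  rw [← map_zpow]
  exact this

/-- `f = Σ d_i t_i` with all `i < n`, `t_i` of `y`-degree `≤ N i`, is of small degree for `N`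
large. -/
theorem lower_core {D' : Type*} [CommRing D'] [Algebra R D'] {A : Subalgebra R D} {y : Dˣ}
    {A' : Subalgebra R D'} (C : D →+* D') (hC : ∀ a ∈ A, C a ∈ A')
    (hex : ∀ f : D, ∃ n, f ∈ G A y n) (e n : ℤ) (s : Finset ℤ) (hs : ∀ i ∈ s, i < n)
    (d : ℤ → D) : ∃ N₀ : ℕ, ∀ N : ℕ, N₀ ≤ N → ∀ t : ℤ → D',
      (∀ i ∈ s, t i ∈ G A' (Units.map C y) (N * i)) →
      ∑ i ∈ s, C (d i) * t i ∈ G A' (Units.map C y) (e + N * n - 1) := by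
  choose k hk using fun i => hex (d i)
  refine ⟨∑ i ∈ s, (k i - e + 1).toNat, fun N hN t ht => ?_⟩
  refine Submodule.sum_mem _ fun i hi => ?_
  have h1 : (k i - e + 1).toNat ≤ N :=
    (Finset.single_le_sum (f := fun i => (k i - e + 1).toNat) (fun _ _ => Nat.zero_le _) hi).trans hN
  refine G_mono _ _ ?_ (mul_mem_G (map_G C hC (hk i)) (ht i hi))
  have h2 := hs i hi
  have h3 : (N : ℤ) * i ≤ N * (n - 1) := by
    apply mul_le_mul_of_nonneg_left <;> omega
  have h4 : k i - e + 1 ≤ N := by omega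
  linarith

/-- main monicity lemma -/
theorem mon_core {D' : Type*} [CommRing D'] [Algebra R D'] {A : Subalgebra R D} {y : Dˣ}
    {A' : Subalgebra R D'} (C : D →+* D') (hC : ∀ a ∈ A, C a ∈ A')
    (hex : ∀ f : D, ∃ n, f ∈ G A y n) (n : ℤ) (s : Finset ℤ) (hs : ∀ i ∈ s, i < n)
    (d : ℤ → D) (g : D) (hg : Mon A y g) : ∃ N₀ : ℕ, ∀ N : ℕ, N₀ ≤ N → ∀ t : ℤ → D',
      (∀ i ∈ s, t i ∈ G A' (Units.map C y) (N * i)) →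
      ∀ (v v' : D'), v' ∈ A' → v * v' = 1 → LT A' (Units.map C y) v (N * n) (t n) →
      Mon A' (Units.map C y) (C g * t n + ∑ i ∈ s, C (d i) * t i) := by
  obtain ⟨u, u', e, hu', huu, hlt⟩ := hg
  obtain ⟨N₀, h⟩ := lower_core (A := A) (y := y) (A' := A') C hC hex e n s hs d
  refine ⟨N₀, fun N hN t ht v v' hv' hvv hv => ?_⟩
  refine ⟨C u * v, C u' * v', e + N * n, A'.mul_mem (hC _ hu') hv', ?_, ?_⟩
  · calc C u * v * (C u' * v') = C (u * u') * (v * v') := by rw [map_mul]; ring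
      _ = 1 := by rw [huu, hvv]; simp
  · exact ((map_LT C hC hlt).mul hv).add (h N hN t ht)

/-- `exhaustion` for extensions -/
theorem exhaust_core {D' : Type*} [CommRing D'] [Algebra R D'] {A : Subalgebra R D} {y : Dˣ}
    {A' : Subalgebra R D'} (C : D →+* D') (hC : ∀ a ∈ A, C a ∈ A')
    (hex : ∀ f : D, ∃ n, f ∈ G A y n) {ι : Type*} (s : Finset ι) (d : ι → D) (t : ι → D')
    (ht : ∀ i ∈ s, t i ∈ A') : ∃ n, ∑ i ∈ s, C (d i) * t i ∈ G A' (Units.map C y) n := by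
  choose k hk using fun i => hex (d i)
  refine ⟨∑ i ∈ s, (k i).toNat, Submodule.sum_mem _ fun i hi => ?_⟩
  rw [mul_comm]
  refine A_mul_mem_G (ht i hi) (G_mono _ _ ?_ (map_G C hC (hk i)))
  have h1 : (k i).toNat ≤ ∑ i ∈ s, (k i).toNat :=
    Finset.single_le_sum (f := fun i => (k i).toNat) (fun _ _ => Nat.zero_le _) hi
  have h2 := Int.self_le_toNat (k i)
  have h3 : ((k i).toNat : ℤ) ≤ ((∑ i ∈ s, (k i).toNat : ℕ) : ℤ) := by exact_mod_cast h1
  exact_mod_cast h2.trans h3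

/-- The data used for the induction. -/
structure IsTow (A : Subalgebra R D) (y : Dˣ) (W : Submonoid D) (h : ℕ) : Prop where
  exh : ∀ f : D, ∃ n, f ∈ G A y n
  exh' : ∀ f : D, ∃ n, f ∈ G A y⁻¹ n
  free : ∀ (n : ℕ) (c : ℕ → D), (∀ i, c i ∈ A) →
    ∑ i ∈ Finset.range n, c i * (y : D) ^ i = 0 → ∀ i < n, c i = 0
  primes : MeetsPrimes (W : Set D) h
  psi : ∀ w ∈ W, ∃ ψ : D ≃ₐ[R] D, Mon A y (ψ w) ∧ Mon A y⁻¹ (ψ w)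

end Filt
end BLR


namespace BLR
section PolyStep
variable {R D : Type*} [CommRing R] [CommRing D] [Algebra R D]

/-- coefficients in `A` -/
def polyA (A : Subalgebra R D) : Subalgebra R (Polynomial D) := (Polynomial.mapAlgHom A.val).range

theorem polyA_coeff {A : Subalgebra R D} {f : Polynomial D} (hf : f ∈ polyA A) (i : ℕ) :
    f.coeff i ∈ A := by
  obtain ⟨g, rfl⟩ := hf
  simp

theorem C_mem_polyA {A : Subalgebra R D} {a : D} (ha : a ∈ A) : Polynomial.C a ∈ polyA A :=
  ⟨Polynomial.C ⟨a, ha⟩, by simp⟩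

theorem X_mem_polyA (A : Subalgebra R D) : Polynomial.X ∈ polyA A :=
  ⟨Polynomial.X, by simp⟩

/-- leading coefficient in `W` -/
def polyW (W : Submonoid D) : Submonoid (Polynomial D) where
  carrier := {f | ∃ k, f.natDegree ≤ k ∧ f.coeff k ∈ W}
  one_mem' := ⟨0, by simp, by simp [W.one_mem]⟩
  mul_mem' := by
    rintro f g ⟨k, hk, hkW⟩ ⟨l, hl, hlW⟩
    refine ⟨k + l, Polynomial.natDegree_mul_le_of_le hk hl, ?_⟩
    rw [Polynomial.coeff_mul_add_eq_of_natDegree_le hk hl]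
    exact W.mul_mem hkW hlW

theorem exh_poly {A : Subalgebra R D} {y : Dˣ} (hex : ∀ f : D, ∃ n, f ∈ G A y n)
    (f : Polynomial D) : ∃ n, f ∈ G (polyA A) (Units.map (Polynomial.C : D →+* Polynomial D) y) n := by
  obtain ⟨n, hn⟩ := exhaust_core (A' := polyA A) (Polynomial.C : D →+* Polynomial D)
    (fun a ha => C_mem_polyA ha) hex (Finset.range (f.natDegree + 1)) f.coeff
    (fun i => Polynomial.X ^ i) (fun i _ => Subalgebra.pow_mem _ (X_mem_polyA A) i)
  exact ⟨n, by rwa [← Polynomial.as_sum_range_C_mul_X_pow] at hn⟩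

theorem lt_poly (A : Subalgebra R D) (y : Dˣ) {N : ℕ} (hN : 1 ≤ N) :
    LT (polyA A) (Units.map (Polynomial.C : D →+* Polynomial D) y) 1 N
      (Polynomial.X + Polynomial.C ((y : D) ^ N + ((y⁻¹ : Dˣ) : D) ^ N)) := by
  refine ⟨Subalgebra.one_mem _, ?_⟩
  have e : (Polynomial.X + Polynomial.C ((y : D) ^ N + ((y⁻¹ : Dˣ) : D) ^ N)) -
      1 * ((Units.map (Polynomial.C : D →+* Polynomial D) y ^ (N : ℤ) : (Polynomial D)ˣ) : Polynomial D)
      = Polynomial.X +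
      ((Units.map (Polynomial.C : D →+* Polynomial D) y ^ (-N : ℤ) : (Polynomial D)ˣ) : Polynomial D) := by
    rw [← map_zpow, ← map_zpow]
    simp [zpow_natCast, zpow_neg, ← inv_pow]
    ring
  rw [e]
  refine Submodule.add_mem _ (G_mono _ _ (by omega) (A_mem_G (X_mem_polyA A))) (zpow_mem_G _ _ (by omega))

theorem mon_poly {A : Subalgebra R D} {y : Dˣ} (hex : ∀ f : D, ∃ n, f ∈ G A y n)
    (f : Polynomial D) (k : ℕ) (hk : f.natDegree ≤ k) (hg : Mon A y (f.coeff k)) :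
    ∃ N₀ : ℕ, ∀ N : ℕ, N₀ ≤ N →
      Mon (polyA A) (Units.map (Polynomial.C : D →+* Polynomial D) y)
        (Polynomial.aeval (Polynomial.X + Polynomial.C ((y : D) ^ N + ((y⁻¹ : Dˣ) : D) ^ N)) f) := by
  obtain ⟨N₀, h⟩ := mon_core (A' := polyA A) (Polynomial.C : D →+* Polynomial D)
    (fun a ha => C_mem_polyA ha) hex k ((Finset.range k).map Nat.castEmbedding)
    (by simp) (fun i => f.coeff i.toNat) (f.coeff k) hg
  refine ⟨N₀ + 1, fun N hN => ?_⟩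
  have := h N (by omega)
    (fun i => (Polynomial.X + Polynomial.C ((y : D) ^ N + ((y⁻¹ : Dˣ) : D) ^ N)) ^ i.toNat) ?_ 1 1
    (Subalgebra.one_mem _) (by simp) ?_
  · convert this using 1
    rw [Polynomial.aeval_eq_sum_range' (Nat.lt_succ_of_le hk), Finset.sum_range_succ, add_comm]
    simp [Algebra.smul_def]
  · intro i hi
    simp only [Finset.mem_map, Finset.mem_range, Nat.castEmbedding_apply] at hi
    obtain ⟨j, hj, rfl⟩ := hi
    have := ((lt_poly A y (by omega : 1 ≤ N)).pow j).mem_G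
    simpa using this
  · have := ((lt_poly A y (by omega : 1 ≤ N)).pow k)
    simpa using this

theorem IsTow.poly [IsNoetherianRing D] {A : Subalgebra R D} {y : Dˣ} {W : Submonoid D} {h : ℕ}
    (H : IsTow A y W h) :
    IsTow (polyA A) (Units.map (Polynomial.C : D →+* Polynomial D) y) (polyW W) h where
  exh := exh_poly H.exh
  exh' := by rw [← map_inv]; exact exh_poly H.exh'
  free := by
    intro n c hc hsum i hi
    ext j
    rw [Polynomial.coeff_zero]
    refine H.free n (fun i => (c i).coeff j) (fun i => polyA_coeff (hc i) j) ?_ i hi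
    have := congrArg (fun p => Polynomial.coeff p j) hsum
    simp only [Polynomial.finsetSum_coeff, Polynomial.coeff_zero] at this
    rw [← this]
    refine Finset.sum_congr rfl fun i _ => ?_
    rw [Units.coe_map, MonoidHom.coe_coe, ← Polynomial.C_pow, Polynomial.coeff_mul_C]
  primes := by
    intro q hq hh
    obtain ⟨f, hf, hW⟩ := poly_prime_step H.primes q hq hh
    exact ⟨f, ⟨f.natDegree, le_rfl, hW⟩, hf⟩
  psi := by
    rintro w ⟨k, hk, hW⟩
    obtain ⟨ψ, h1, h2⟩ := H.psi _ hW
    set f : Polynomial D := Polynomial.mapAlgEquiv ψ w with hf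
    have hfd : f.natDegree ≤ k := by
      rw [hf, Polynomial.coe_mapAlgEquiv]
      exact Polynomial.natDegree_map_le.trans hk
    have hfk : f.coeff k = ψ (w.coeff k) := by
      simp [hf]
    obtain ⟨N₁, hN₁⟩ := mon_poly H.exh f k hfd (by rw [hfk]; exact h1)
    obtain ⟨N₂, hN₂⟩ := mon_poly H.exh' f k hfd (by rw [hfk]; exact h2)
    refine ⟨(Polynomial.mapAlgEquiv ψ).trans ((Polynomial.algEquivAevalXAddC
      ((y : D) ^ (N₁ + N₂) + ((y⁻¹ : Dˣ) : D) ^ (N₁ + N₂))).restrictScalars R), ?_, ?_⟩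
    · exact hN₁ _ (by omega)
    · rw [← map_inv]
      have := hN₂ (N₁ + N₂) (by omega)
      rw [inv_inv, add_comm (((y⁻¹ : Dˣ) : D) ^ (N₁ + N₂))] at this
      exact this
end PolyStep
end BLR


namespace BLR
section LauStep
open LaurentPolynomial (T)
variable {R D : Type*} [CommRing R] [CommRing D] [Algebra R D]

instance noeth_laurent {D : Type*} [CommRing D] [IsNoetherianRing D] :
    IsNoetherianRing (LaurentPolynomial D) :=
  IsLocalization.isNoetherianRing (Submonoid.powers (Polynomial.X : Polynomial D)) _ inferInstance

theorem lau_sum {D : Type*} [CommRing D] (f : LaurentPolynomial D) :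
    f = ∑ i ∈ f.coeff.support, LaurentPolynomial.C (f.coeff i) * T i := by
  ext j
  simp only [AddMonoidAlgebra.coeff_sum, ← LaurentPolynomial.single_eq_C_mul_T,
    AddMonoidAlgebra.coeff_single]
  rw [Finset.sum_apply', Finset.sum_eq_single j]
  · simp
  · intro b _ hb; simp [hb]
  · intro h; simpa using h

theorem lau_coeff {D : Type*} [CommRing D] (p : Polynomial D) (n : ℤ) (i : ℕ) :
    (Polynomial.toLaurent p * T n).coeff (i + n) = p.coeff i := by
  rw [T, AddMonoidAlgebra.coeff_mul_single_eq_coeff_mul (m₂ := (i : ℤ)), mul_one,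
    LaurentPolynomial.coeff_toLaurent]
  · rw [← Nat.castEmbedding_apply (R := ℤ) i,
      Finsupp.mapDomain_apply (Nat.castEmbedding (R := ℤ)).injective]
    rfl
  · intro a _; omega

theorem lau_coeff_neg {D : Type*} [CommRing D] (p : Polynomial D) (n i : ℤ) (hi : i < n) :
    (Polynomial.toLaurent p * T n).coeff i = 0 := by
  rw [T, AddMonoidAlgebra.coeff_mul_single_eq_coeff_mul (m₂ := i - n), mul_one,
    LaurentPolynomial.coeff_toLaurent]
  · refine Finsupp.mapDomain_notin_range _ _ ?_
    rintro ⟨a, ha⟩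
    simp at ha
    omega
  · intro a _; omega

/-- coefficients in `A` -/
def lauA (A : Subalgebra R D) : Subalgebra R (LaurentPolynomial D) :=
  (AddMonoidAlgebra.mapAlgHom ℤ A.val).range

theorem lauA_coeff {A : Subalgebra R D} {f : LaurentPolynomial D} (hf : f ∈ lauA A) (i : ℤ) :
    f.coeff i ∈ A := by
  obtain ⟨g, rfl⟩ := hf
  simp

theorem C_mem_lauA {A : Subalgebra R D} {a : D} (ha : a ∈ A) : LaurentPolynomial.C a ∈ lauA A :=
  ⟨LaurentPolynomial.C ⟨a, ha⟩, by
    rw [← LaurentPolynomial.single_eq_C, ← LaurentPolynomial.single_eq_C]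
    exact AddMonoidAlgebra.mapAlgHom_single _ _ _⟩

theorem T_mem_lauA (A : Subalgebra R D) (n : ℤ) : (T n : LaurentPolynomial D) ∈ lauA A :=
  ⟨T n, (AddMonoidAlgebra.mapAlgHom_single _ _ _).trans (by rw [map_one]; rfl)⟩

/-- both end coefficients equal and in `W` -/
def lauW (W : Submonoid D) : Submonoid (LaurentPolynomial D) where
  carrier := {f | ∃ (p : Polynomial D) (k : ℕ) (n : ℤ), p.natDegree ≤ k ∧ p.coeff k ∈ W ∧
    p.coeff 0 = p.coeff k ∧ f = Polynomial.toLaurent p * T n}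
  one_mem' := ⟨1, 0, 0, by simp, by simp [W.one_mem], by simp, by simp⟩
  mul_mem' := by
    rintro f g ⟨p, k, n, hk, hkW, hp, rfl⟩ ⟨q, l, m, hl, hlW, hq, rfl⟩
    refine ⟨p * q, k + l, n + m, Polynomial.natDegree_mul_le_of_le hk hl, ?_, ?_, ?_⟩
    · rw [Polynomial.coeff_mul_add_eq_of_natDegree_le hk hl]
      exact W.mul_mem hkW hlW
    · rw [Polynomial.coeff_mul_add_eq_of_natDegree_le hk hl, Polynomial.mul_coeff_zero, hp, hq]
    · rw [LaurentPolynomial.T_add, map_mul]; ring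

theorem lauW_ends {W : Submonoid D} {f : LaurentPolynomial D} (hf : f ∈ lauW W) :
    ∃ (g : D) (a b : ℤ), g ∈ W ∧ f.coeff a = g ∧ f.coeff b = g ∧ (∀ i < a, f.coeff i = 0) ∧
      ∀ i, b < i → f.coeff i = 0 := by
  obtain ⟨p, k, n, hk, hkW, hp, rfl⟩ := hf
  refine ⟨p.coeff k, n, k + n, hkW, ?_, lau_coeff p n k, fun i hi => lau_coeff_neg p n i hi, ?_⟩
  · have := lau_coeff p n 0
    rw [← hp, ← this]; simp
  · intro i hi
    obtain ⟨j, rfl⟩ : ∃ j : ℕ, i = j + n := ⟨(i - n).toNat, by omega⟩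
    rw [lau_coeff]
    exact Polynomial.coeff_eq_zero_of_natDegree_lt (by omega)

theorem lau_prime_step [IsNoetherianRing D] {W : Submonoid D} {h : ℕ}
    (H : MeetsPrimes (W : Set D) h) : MeetsPrimes (lauW W : Set (LaurentPolynomial D)) h := by
  intro q hq hh
  have hloc : IsLocalization (Submonoid.powers (Polynomial.X : Polynomial D)) (LaurentPolynomial D) :=
    LaurentPolynomial.isLocalization
  have key : ∀ q : Ideal (LaurentPolynomial D), q.IsPrime → (h : ℕ∞) ≤ q.height →
      ∃ p : Polynomial D, Polynomial.toLaurent p ∈ q ∧ p.leadingCoeff ∈ W := by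
    intro q hq hh
    rw [← IsLocalization.height_under (Submonoid.powers (Polynomial.X : Polynomial D)) q] at hh
    obtain ⟨p, hp, hpW⟩ := poly_prime_step H (q.under (Polynomial D)) inferInstance hh
    exact ⟨p, hp, hpW⟩
  obtain ⟨p, hp, hpW⟩ := key q hq hh
  obtain ⟨p', hp', hpW'⟩ := key (q.comap (LaurentPolynomial.invert (R := D)).toRingEquiv)
    (Ideal.IsPrime.comap _) (by
      rw [RingEquiv.height_comap]; exact hh)
  have hp2 : Polynomial.toLaurent p'.reverse ∈ q := by
    rw [LaurentPolynomial.toLaurent_reverse]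
    exact q.mul_mem_right _ hp'
  set k := p.natDegree
  set l := p'.natDegree
  have h1 : (Polynomial.C p'.leadingCoeff * (Polynomial.X ^ (l + 1) * p)).natDegree ≤ k + l + 1 := by
    refine (Polynomial.natDegree_C_mul_le _ _).trans ?_
    refine Polynomial.natDegree_mul_le_of_le (Polynomial.natDegree_X_pow_le _) le_rfl |>.trans ?_
    omega
  have h2 : (Polynomial.C p.leadingCoeff * p'.reverse).natDegree ≤ l :=
    (Polynomial.natDegree_C_mul_le _ _).trans (Polynomial.reverse_natDegree_le _)
  have e1 : (Polynomial.C p'.leadingCoeff * (Polynomial.X ^ (l + 1) * p) +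
      Polynomial.C p.leadingCoeff * p'.reverse).coeff (k + l + 1) =
      p.leadingCoeff * p'.leadingCoeff := by
    rw [Polynomial.coeff_add, Polynomial.coeff_eq_zero_of_natDegree_lt (h2.trans_lt (by omega)),
      Polynomial.coeff_C_mul, show k + l + 1 = k + (l + 1) by ring, Polynomial.coeff_X_pow_mul]
    simp [k, mul_comm]
  refine ⟨Polynomial.toLaurent (Polynomial.C p'.leadingCoeff * (Polynomial.X ^ (l + 1) * p) +
      Polynomial.C p.leadingCoeff * p'.reverse),
      ⟨Polynomial.C p'.leadingCoeff * (Polynomial.X ^ (l + 1) * p) +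
      Polynomial.C p.leadingCoeff * p'.reverse, k + l + 1, 0, ?_, ?_, ?_, ?_⟩, ?_⟩
  rotate_left 3
  · rw [LaurentPolynomial.T_zero, mul_one]
  · rw [map_add, map_mul, map_mul, map_mul]
    exact q.add_mem (q.mul_mem_left _ (q.mul_mem_left _ hp)) (q.mul_mem_left _ hp2)
  · exact Polynomial.natDegree_add_le_of_degree_le h1 (h2.trans (by omega))
  · rw [e1]; exact W.mul_mem hpW hpW'
  · rw [e1]
    simp [Polynomial.mul_coeff_zero]

/-- `T` as a unit -/
def Tu (D : Type*) [CommRing D] : (LaurentPolynomial D)ˣ :=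
  ⟨T 1, T (-1), by rw [← LaurentPolynomial.T_add]; simp, by rw [← LaurentPolynomial.T_add]; simp⟩

theorem Tu_zpow (D : Type*) [CommRing D] (n : ℤ) : ((Tu D ^ n : (LaurentPolynomial D)ˣ) :
    LaurentPolynomial D) = T n := by
  induction n using Int.induction_on with
  | zero => simp
  | succ i ih => rw [zpow_add_one, Units.val_mul, ih, Tu, LaurentPolynomial.T_add]
  | pred i ih => rw [zpow_sub_one, Units.val_mul, ih, Tu, LaurentPolynomial.T_sub]; rfl

/-- `C d * T n ↦ C (φ d * z^n) * T n` -/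
def lauHom (φ : D →+* D) (z : Dˣ) : LaurentPolynomial D →+* LaurentPolynomial D :=
  LaurentPolynomial.eval₂ (LaurentPolynomial.C.comp φ) (Tu D * Units.map (LaurentPolynomial.C : D →+* _) z)

theorem lauHom_apply (φ : D →+* D) (z : Dˣ) (d : D) (n : ℤ) :
    lauHom φ z (LaurentPolynomial.C d * T n) =
      LaurentPolynomial.C (φ d) * (LaurentPolynomial.C ((z ^ n : Dˣ) : D) * T n) := by
  rw [lauHom, LaurentPolynomial.eval₂_C_mul_T, mul_zpow, Units.val_mul, Tu_zpow, ← map_zpow,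
    mul_comm (T n)]
  rfl

/-- the automorphism `C d * T n ↦ C (ψ d * z^n) * T n` -/
def lauEquiv (ψ : D ≃ₐ[R] D) (z : Dˣ) : LaurentPolynomial D ≃ₐ[R] LaurentPolynomial D :=
  AlgEquiv.ofRingEquiv (f := RingEquiv.ofRingHom (lauHom (ψ : D →+* D) z)
    (lauHom (ψ.symm : D →+* D) (Units.map (ψ.symm : D →* D) z⁻¹))
    (by
      apply RingHom.ext
      intro f
      induction f using LaurentPolynomial.induction_on' with
      | add p q hp hq => rw [map_add, hp, hq, map_add]
      | C_mul_T n a =>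
        rw [RingHom.comp_apply, lauHom_apply, ← mul_assoc, ← map_mul, lauHom_apply, ← map_zpow]
        simp only [RingHom.coe_coe, map_mul, AlgEquiv.apply_symm_apply, Units.coe_map,
          MonoidHom.coe_coe, RingHom.id_apply]
        rw [← mul_assoc, mul_assoc (LaurentPolynomial.C a), ← map_mul]
        simp)
    (by
      apply RingHom.ext
      intro f
      induction f using LaurentPolynomial.induction_on' with
      | add p q hp hq => rw [map_add, hp, hq, map_add]
      | C_mul_T n a =>
        rw [RingHom.comp_apply, lauHom_apply, ← mul_assoc, ← map_mul, lauHom_apply, ← map_zpow]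
        simp only [RingHom.coe_coe, map_mul, AlgEquiv.symm_apply_apply, Units.coe_map,
          MonoidHom.coe_coe, RingHom.id_apply]
        rw [← mul_assoc, mul_assoc (LaurentPolynomial.C a), ← map_mul, ← map_mul ψ.symm, inv_zpow,
          Units.mul_inv]
        simp))
    (by
      intro r
      have : algebraMap R (LaurentPolynomial D) r =
        LaurentPolynomial.C (algebraMap R D r) * T 0 := by
        rw [LaurentPolynomial.T_zero, mul_one]; rfl
      rw [this]
      simp only [RingEquiv.ofRingHom_apply]
      rw [lauHom_apply]
      simp)

theorem lauEquiv_apply (ψ : D ≃ₐ[R] D) (z : Dˣ) (d : D) (n : ℤ) :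
    lauEquiv ψ z (LaurentPolynomial.C d * T n) =
      LaurentPolynomial.C (ψ d) * (LaurentPolynomial.C ((z ^ n : Dˣ) : D) * T n) :=
  lauHom_apply _ _ _ _

end LauStep
end BLR


namespace BLR
section LauStep2
open LaurentPolynomial (T)
variable {R D : Type*} [CommRing R] [CommRing D] [Algebra R D]

theorem exh_lau {A : Subalgebra R D} {y : Dˣ} (hex : ∀ f : D, ∃ n, f ∈ G A y n)
    (f : LaurentPolynomial D) :
    ∃ n, f ∈ G (lauA A) (Units.map (LaurentPolynomial.C : D →+* LaurentPolynomial D) y) n := by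
  obtain ⟨n, hn⟩ := exhaust_core (A' := lauA A) (LaurentPolynomial.C : D →+* LaurentPolynomial D)
    (fun a ha => C_mem_lauA ha) hex f.coeff.support f.coeff
    (fun i => T i) (fun i _ => T_mem_lauA A i)
  exact ⟨n, by rwa [← lau_sum] at hn⟩

theorem lauEquiv_expand (ψ : D ≃ₐ[R] D) (z : Dˣ) (f : LaurentPolynomial D) :
    lauEquiv ψ z f = ∑ i ∈ f.coeff.support, LaurentPolynomial.C (ψ (f.coeff i)) *
      (LaurentPolynomial.C ((z ^ i : Dˣ) : D) * T i) := by
  conv_lhs => rw [lau_sum f]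
  rw [map_sum]
  simp only [lauEquiv_apply]

theorem lt_lau (A : Subalgebra R D) (y : Dˣ) (N : ℕ) (j k : ℤ) :
    LT (lauA A) (Units.map (LaurentPolynomial.C : D →+* LaurentPolynomial D) y) (T k) (N * j)
      (LaurentPolynomial.C (((y ^ N) ^ j : Dˣ) : D) * T k) := by
  refine ⟨T_mem_lauA A k, ?_⟩
  have e : (((Units.map (LaurentPolynomial.C : D →+* LaurentPolynomial D) y) ^ ((N : ℤ) * j) :
      (LaurentPolynomial D)ˣ) : LaurentPolynomial D)
      = LaurentPolynomial.C (((y ^ N) ^ j : Dˣ) : D) := by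
    rw [zpow_mul, zpow_natCast, ← map_pow, ← map_zpow]; rfl
  rw [e, mul_comm (T k), sub_self]
  exact Submodule.zero_mem _

theorem lau_mon_top {A : Subalgebra R D} {y : Dˣ} (hex : ∀ f : D, ∃ n, f ∈ G A y n)
    (ψ : D ≃ₐ[R] D) (f : LaurentPolynomial D) (b : ℤ) (hb : ∀ i, b < i → f.coeff i = 0)
    (hg : Mon A y (ψ (f.coeff b))) : ∃ N₀ : ℕ, ∀ N : ℕ, N₀ ≤ N →
      Mon (lauA A) (Units.map (LaurentPolynomial.C : D →+* LaurentPolynomial D) y)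
        (lauEquiv ψ (y ^ N) f) := by
  classical
  obtain ⟨N₀, h⟩ := mon_core (A' := lauA A) (LaurentPolynomial.C : D →+* LaurentPolynomial D)
    (fun a ha => C_mem_lauA ha) hex b (f.coeff.support.erase b)
    (by
      intro i hi
      rw [Finset.mem_erase, Finsupp.mem_support_iff] at hi
      by_contra hcon
      exact hi.2 (hb i (by omega))) (fun i => ψ (f.coeff i)) (ψ (f.coeff b)) hg
  refine ⟨N₀, fun N hN => ?_⟩
  have := h N hN (fun i => LaurentPolynomial.C (((y ^ N) ^ i : Dˣ) : D) * T i)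
    (fun i _ => (lt_lau A y N i i).mem_G) (T b) (T (-b)) (T_mem_lauA A _)
    (by rw [← LaurentPolynomial.T_add]; simp) (lt_lau A y N b b)
  rw [lauEquiv_expand]
  convert this using 1
  by_cases hbs : b ∈ f.coeff.support
  · rw [← Finset.add_sum_erase _ _ hbs]
  · rw [Finset.erase_eq_of_notMem hbs]
    rw [Finsupp.notMem_support_iff] at hbs
    simp [hbs]

theorem lau_mon_bot {A : Subalgebra R D} {y : Dˣ} (hex : ∀ f : D, ∃ n, f ∈ G A y⁻¹ n)
    (ψ : D ≃ₐ[R] D) (f : LaurentPolynomial D) (b : ℤ) (hb : ∀ i < b, f.coeff i = 0)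
    (hg : Mon A y⁻¹ (ψ (f.coeff b))) : ∃ N₀ : ℕ, ∀ N : ℕ, N₀ ≤ N →
      Mon (lauA A) (Units.map (LaurentPolynomial.C : D →+* LaurentPolynomial D) y)⁻¹
        (lauEquiv ψ (y ^ N) f) := by
  classical
  obtain ⟨N₀, h⟩ := mon_core (A' := lauA A) (LaurentPolynomial.C : D →+* LaurentPolynomial D)
    (fun a ha => C_mem_lauA ha) hex (-b) ((f.coeff.support.erase b).map (Equiv.neg ℤ).toEmbedding)
    (by
      intro i hi
      simp only [Finset.mem_map, Finset.mem_erase, Finsupp.mem_support_iff] at hi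
      obtain ⟨j, hj, rfl⟩ := hi
      by_contra hcon
      simp at hcon
      exact hj.2 (hb j (by omega))) (fun i => ψ (f.coeff (-i))) (ψ (f.coeff b)) hg
  refine ⟨N₀, fun N hN => ?_⟩
  have := h N hN (fun i => LaurentPolynomial.C (((y⁻¹ ^ N) ^ i : Dˣ) : D) * T (-i))
    (fun i _ => (lt_lau A y⁻¹ N i (-i)).mem_G) (T b) (T (-b)) (T_mem_lauA A _)
    (by rw [← LaurentPolynomial.T_add]; simp) (by simpa using lt_lau A y⁻¹ N (-b) (- -b))
  rw [lauEquiv_expand, ← map_inv]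
  convert this using 1
  rw [Finset.sum_map]
  simp only [Equiv.coe_toEmbedding, Equiv.neg_apply, neg_neg, inv_pow, inv_zpow', zpow_neg, inv_inv]
  by_cases hbs : b ∈ f.coeff.support
  · rw [← Finset.add_sum_erase _ _ hbs]
  · rw [Finset.erase_eq_of_notMem hbs]
    rw [Finsupp.notMem_support_iff] at hbs
    simp [hbs]

theorem lau_low_bot {A : Subalgebra R D} {y : Dˣ} (hex : ∀ f : D, ∃ n, f ∈ G A y⁻¹ n)
    (ψ : D ≃ₐ[R] D) (f : LaurentPolynomial D) (m : ℤ) (hb : ∀ i ≤ -m, f.coeff i = 0) :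
    ∃ N₀ : ℕ, ∀ N : ℕ, N₀ ≤ N → lauEquiv ψ (y ^ N) f ∈
      G (lauA A) (Units.map (LaurentPolynomial.C : D →+* LaurentPolynomial D) y)⁻¹ (N * m - 1) := by
  classical
  obtain ⟨N₀, h⟩ := lower_core (A' := lauA A) (LaurentPolynomial.C : D →+* LaurentPolynomial D)
    (fun a ha => C_mem_lauA ha) hex 0 m (f.coeff.support.map (Equiv.neg ℤ).toEmbedding)
    (by
      intro i hi
      simp only [Finset.mem_map, Finsupp.mem_support_iff] at hi
      obtain ⟨j, hj, rfl⟩ := hi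
      by_contra hcon
      simp at hcon
      exact hj (hb j (by omega))) (fun i => ψ (f.coeff (-i)))
  refine ⟨N₀, fun N hN => ?_⟩
  have := h N hN (fun i => LaurentPolynomial.C (((y⁻¹ ^ N) ^ i : Dˣ) : D) * T (-i))
    (fun i _ => (lt_lau A y⁻¹ N i (-i)).mem_G)
  rw [lauEquiv_expand, ← map_inv]
  rw [zero_add] at this
  convert this using 1
  rw [Finset.sum_map]
  simp only [Equiv.coe_toEmbedding, Equiv.neg_apply, neg_neg, inv_pow, inv_zpow', zpow_neg, inv_inv]

theorem IsTow.lau [IsNoetherianRing D] {A : Subalgebra R D} {y : Dˣ} {W : Submonoid D} {h : ℕ}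
    (H : IsTow A y W h) :
    IsTow (lauA A) (Units.map (LaurentPolynomial.C : D →+* LaurentPolynomial D) y) (lauW W) h where
  exh := exh_lau H.exh
  exh' := by rw [← map_inv]; exact exh_lau H.exh'
  free := by
    intro n c hc hsum i hi
    ext j
    rw [AddMonoidAlgebra.coeff_zero, Finsupp.zero_apply]
    refine H.free n (fun i => (c i).coeff j) (fun i => lauA_coeff (hc i) j) ?_ i hi
    have := congrArg (fun p : LaurentPolynomial D => p.coeff j) hsum
    simp only [AddMonoidAlgebra.coeff_sum, AddMonoidAlgebra.coeff_zero, Finsupp.zero_apply] at this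
    rw [Finset.sum_apply'] at this
    rw [← this]
    refine Finset.sum_congr rfl fun i _ => ?_
    rw [Units.coe_map, MonoidHom.coe_coe, ← map_pow, mul_comm (c i), ← LaurentPolynomial.smul_eq_C_mul]
    simp [mul_comm]
  primes := lau_prime_step H.primes
  psi := by
    intro w hw
    obtain ⟨g, a, b, hg, rfl, hfb, ha, hb⟩ := lauW_ends hw
    obtain ⟨ψ, h1, h2⟩ := H.psi _ hg
    obtain ⟨N₁, hN₁⟩ := lau_mon_top H.exh ψ w b hb (by rw [hfb]; exact h1)
    obtain ⟨N₂, hN₂⟩ := lau_mon_bot H.exh' ψ w a ha h2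
    exact ⟨lauEquiv ψ (y ^ (N₁ + N₂)), hN₁ _ (by omega), hN₂ _ (by omega)⟩

theorem base_low {R : Type*} [CommRing R] (f : LaurentPolynomial R) (n : ℤ)
    (hf : ∀ i, n < i → f.coeff i = 0) : f ∈ G (⊥ : Subalgebra R (LaurentPolynomial R)) (Tu R) n := by
  rw [lau_sum f]
  refine Submodule.sum_mem _ fun i hi => ?_
  rw [Finsupp.mem_support_iff] at hi
  refine A_mul_mem_G (Subalgebra.algebraMap_mem ⊥ (f.coeff i)) ?_
  rw [← Tu_zpow]
  refine zpow_mem_G _ _ ?_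
  by_contra hcon
  exact hi (hf i (by omega))

theorem base_low' {R : Type*} [CommRing R] (f : LaurentPolynomial R) (n : ℤ)
    (hf : ∀ i, i < -n → f.coeff i = 0) :
    f ∈ G (⊥ : Subalgebra R (LaurentPolynomial R)) (Tu R)⁻¹ n := by
  rw [lau_sum f]
  refine Submodule.sum_mem _ fun i hi => ?_
  rw [Finsupp.mem_support_iff] at hi
  refine A_mul_mem_G (Subalgebra.algebraMap_mem ⊥ (f.coeff i)) ?_
  rw [← Tu_zpow, ← neg_neg i, zpow_neg, ← inv_zpow]
  refine zpow_mem_G _ _ ?_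
  by_contra hcon
  exact hi (hf i (by omega))

theorem coeff_C_mul_T {R : Type*} [CommRing R] (a : R) (i j : ℤ) :
    (LaurentPolynomial.C a * T i : LaurentPolynomial R).coeff j = if i = j then a else 0 := by
  rw [← LaurentPolynomial.single_eq_C_mul_T, AddMonoidAlgebra.coeff_single, Finsupp.single_apply]

theorem coeff_T {R : Type*} [CommRing R] (i j : ℤ) :
    (T i : LaurentPolynomial R).coeff j = if i = j then 1 else 0 := by
  rw [← coeff_C_mul_T, map_one, one_mul]

/-- base of the tower -/
theorem IsTow.base {R : Type*} [CommRing R] [IsNoetherianRing R] {h : ℕ}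
    (hdim : ringKrullDim R < h) :
    IsTow (⊥ : Subalgebra R (LaurentPolynomial R)) (Tu R) (lauW (⊥ : Submonoid R)) h where
  exh := by
    intro f
    induction f using LaurentPolynomial.induction_on' with
    | add p q hp hq =>
      obtain ⟨a, ha⟩ := hp
      obtain ⟨b, hb⟩ := hq
      exact ⟨max a b, Submodule.add_mem _ (G_mono _ _ (le_max_left _ _) ha)
        (G_mono _ _ (le_max_right _ _) hb)⟩
    | C_mul_T n a =>
      refine ⟨n, A_mul_mem_G (Subalgebra.algebraMap_mem ⊥ a) ?_⟩
      rw [← Tu_zpow]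
      exact zpow_mem_G _ _ le_rfl
  exh' := by
    intro f
    induction f using LaurentPolynomial.induction_on' with
    | add p q hp hq =>
      obtain ⟨a, ha⟩ := hp
      obtain ⟨b, hb⟩ := hq
      exact ⟨max a b, Submodule.add_mem _ (G_mono _ _ (le_max_left _ _) ha)
        (G_mono _ _ (le_max_right _ _) hb)⟩
    | C_mul_T n a =>
      refine ⟨-n, A_mul_mem_G (Subalgebra.algebraMap_mem ⊥ a) ?_⟩
      rw [← Tu_zpow, ← neg_neg n, zpow_neg, ← inv_zpow, neg_neg]
      exact zpow_mem_G _ _ le_rfl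
  free := by
    intro n c hc hsum i hi
    simp only [Algebra.mem_bot, Set.mem_range] at hc
    choose d hd using hc
    have := congrArg (fun p : LaurentPolynomial R => p.coeff i) hsum
    simp only [AddMonoidAlgebra.coeff_sum, AddMonoidAlgebra.coeff_zero, Finsupp.zero_apply] at this
    rw [Finset.sum_apply', Finset.sum_eq_single i] at this
    · rw [← hd, ← LaurentPolynomial.C_eq_algebraMap, ← Units.val_pow_eq_pow_val, ← zpow_natCast,
        Tu_zpow, coeff_C_mul_T, if_pos rfl] at this
      rw [← hd, this, map_zero]
    · intro j _ hj
      rw [← hd, ← LaurentPolynomial.C_eq_algebraMap, ← Units.val_pow_eq_pow_val, ← zpow_natCast,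
        Tu_zpow, coeff_C_mul_T, if_neg (by exact_mod_cast hj)]
    · intro hi'
      simp [hi] at hi'
  primes := by
    apply lau_prime_step
    intro q hq hh
    exfalso
    have h1 : (q.height : WithBot ℕ∞) ≤ ringKrullDim R :=
      Ideal.height_le_ringKrullDim_of_ne_top hq.ne_top
    have h2 : ((h : ℕ∞) : WithBot ℕ∞) ≤ q.height := by exact_mod_cast hh
    exact absurd (h2.trans h1) (not_le.mpr hdim)
  psi := by
    intro w hw
    obtain ⟨g, a, b, hg, rfl, hfb, ha, hb⟩ := lauW_ends hw
    rw [Submonoid.mem_bot] at hg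
    rw [hg] at hfb
    refine ⟨AlgEquiv.refl, ⟨1, 1, b, Subalgebra.one_mem _, by simp, Subalgebra.one_mem _, ?_⟩,
      ⟨1, 1, -a, Subalgebra.one_mem _, by simp, Subalgebra.one_mem _, ?_⟩⟩
    · rw [Tu_zpow, one_mul]
      refine base_low _ _ fun i hi => ?_
      rw [AddMonoidAlgebra.coeff_sub, Finsupp.sub_apply, coeff_T]
      split_ifs with h
      · subst h
        rw [← hfb]; exact sub_self _
      · rw [sub_zero]; exact hb i (by omega)
    · rw [inv_zpow, ← zpow_neg, neg_neg, Tu_zpow, one_mul]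
      refine base_low' _ _ fun i hi => ?_
      rw [AddMonoidAlgebra.coeff_sub, Finsupp.sub_apply, coeff_T]
      split_ifs with h
      · subst h
        rw [← hg]; exact sub_self _
      · rw [sub_zero]; exact ha i (by omega)

end LauStep2
end BLR


namespace BLR
universe u
open LaurentPolynomial (T)

/-- `A₀` is a retract of a ring carrying a tower structure. -/
def HasTow (R A₀ : Type u) [CommRing R] [CommRing A₀] [Algebra R A₀] (h : ℕ) : Prop :=
  ∃ (D : Type u) (_ : CommRing D) (_ : Algebra R D) (_ : IsNoetherianRing D)
    (ι : A₀ →ₐ[R] D) (ρ : D →ₐ[R] A₀) (A : Subalgebra R D) (y : Dˣ) (W : Submonoid D),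
    (∀ a, ρ (ι a) = a) ∧ IsTow A y W h

theorem HasTow.equiv {R A₀ A₁ : Type u} [CommRing R] [CommRing A₀] [Algebra R A₀] [CommRing A₁]
    [Algebra R A₁] {h : ℕ} (H : HasTow R A₀ h) (e : A₀ ≃ₐ[R] A₁) : HasTow R A₁ h := by
  obtain ⟨D, _, _, _, ι, ρ, A, y, W, hr, ht⟩ := H
  exact ⟨D, _, _, inferInstance, ι.comp e.symm, (e : A₀ →ₐ[R] A₁).comp ρ, A, y, W,
    fun a => by simp [hr], ht⟩

theorem HasTow.base {R : Type u} [CommRing R] [IsNoetherianRing R] {h : ℕ}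
    (hdim : ringKrullDim R < h) : HasTow R R h := by
  refine ⟨LaurentPolynomial R, inferInstance, inferInstance, inferInstance, Algebra.ofId _ _,
    { LaurentPolynomial.eval₂ (RingHom.id R) 1 with
      commutes' := fun r => ?_ }, _, _, _, ?_, IsTow.base hdim⟩
  · exact LaurentPolynomial.eval₂_C _ _ _
  · intro a
    exact LaurentPolynomial.eval₂_C _ _ _

theorem HasTow.poly {R A₀ : Type u} [CommRing R] [CommRing A₀] [Algebra R A₀] {h : ℕ}
    (H : HasTow R A₀ h) : HasTow R (Polynomial A₀) h := by
  obtain ⟨D, _, _, _, ι, ρ, A, y, W, hr, ht⟩ := H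
  refine ⟨Polynomial D, inferInstance, inferInstance, inferInstance, Polynomial.mapAlgHom ι,
    Polynomial.mapAlgHom ρ, _, _, _, ?_, ht.poly⟩
  intro a
  ext i
  simp [hr]

theorem HasTow.lau {R A₀ : Type u} [CommRing R] [CommRing A₀] [Algebra R A₀] {h : ℕ}
    (H : HasTow R A₀ h) : HasTow R (LaurentPolynomial A₀) h := by
  obtain ⟨D, _, _, _, ι, ρ, A, y, W, hr, ht⟩ := H
  refine ⟨LaurentPolynomial D, inferInstance, inferInstance, inferInstance,
    AddMonoidAlgebra.mapAlgHom ℤ ι,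
    AddMonoidAlgebra.mapAlgHom ℤ ρ, _, _, _, ?_, ht.lau⟩
  intro a
  ext i
  simp [hr]

end BLR


namespace BLR

section GP
variable {B : Type*} [CommRing B]

/-- all primes containing `I` but not `s` have height at least `k` -/
def HtOff (I : Ideal B) (s : B) (k : ℕ) : Prop :=
  ∀ q : Ideal B, q.IsPrime → I ≤ q → s ∉ q → (k : ℕ∞) ≤ q.height

theorem htOff_step {I : Ideal B} {s z : B} {k : ℕ} (H : HtOff I s k)
    (hz : ∀ q ∈ I.minimalPrimes, s ∉ q → z ∉ q) : HtOff (I ⊔ Ideal.span {z}) s (k + 1) := by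
  intro q hq hI hs
  obtain ⟨p, hp, hpq⟩ := Ideal.exists_minimalPrimes_le (le_sup_left.trans hI)
  have hpp : p.IsPrime := hp.1.1
  have hsp : s ∉ p := fun h => hs (hpq h)
  have h1 := H p hpp hp.1.2 hsp
  have h2 : p < q := by
    refine lt_of_le_of_ne hpq ?_
    rintro rfl
    exact hz p hp hsp (hI (Ideal.mem_sup_right (Ideal.mem_span_singleton_self z)))
  have := Ideal.height_add_one_le_of_lt_of_isPrime h2
  push_cast
  exact (add_le_add_left h1 1).trans this

theorem avoid (S : Finset (Ideal B)) (hS : ∀ q ∈ S, q.IsPrime)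
    (hinc : ∀ p ∈ S, ∀ q ∈ S, p ≤ q → p = q) (x t : B) (ht : ∀ q ∈ S, t ∉ q) :
    ∃ l, ∀ q ∈ S, x + t * l ∉ q := by
  classical
  by_contra hcon
  push Not at hcon
  have hsub : (((S.filter (fun q => x ∉ q)).inf id : Ideal B) : Set B) ⊆
      ⋃ q ∈ (↑(S.filter (fun q => x ∈ q)) : Set (Ideal B)), (q : Set B) := by
    intro l hl
    obtain ⟨q, hq, hm⟩ := hcon l
    have hxq : x ∈ q := by
      by_contra hx
      have : l ∈ q := by
        have h2 : (S.filter (fun q => x ∉ q)).inf id ≤ q :=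
          Finset.inf_le (f := id) (Finset.mem_filter.mpr ⟨hq, hx⟩)
        exact h2 hl
      exact hx ((Ideal.add_mem_iff_left _ (Ideal.mul_mem_left _ t this)).mp hm)
    have hlq : l ∈ q := by
      have := (Ideal.add_mem_iff_right _ hxq).mp hm
      exact ((hS q hq).mem_or_mem this).resolve_left (ht q hq)
    exact Set.mem_biUnion (Finset.mem_coe.mpr (Finset.mem_filter.mpr ⟨hq, hxq⟩)) hlq
  replace hsub := (Ideal.subset_union_prime (f := id) ⊤ ⊤
    (fun i hi _ _ => hS i (Finset.mem_filter.mp hi).1)).mp hsub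
  obtain ⟨q, hq, hle⟩ := hsub
  rw [Finset.mem_filter] at hq
  have := hS q hq.1
  rw [id, Ideal.IsPrime.inf_le' this] at hle
  obtain ⟨p, hp, hpq⟩ := hle
  rw [Finset.mem_filter] at hp
  have := hinc p hp.1 q hq.1 hpq
  subst this
  exact hp.2 hq.2

theorem avoid_min [IsNoetherianRing B] (I : Ideal B) (s x : B) (N : ℕ) :
    ∃ l, ∀ q ∈ I.minimalPrimes, s ∉ q → x + s ^ N * l ∉ q := by
  classical
  have hfin : {q | q ∈ I.minimalPrimes ∧ s ∉ q}.Finite :=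
    (Ideal.finite_minimalPrimes_of_isNoetherianRing B I).subset fun q hq => hq.1
  obtain ⟨l, hl⟩ := avoid hfin.toFinset (fun q hq => (hfin.mem_toFinset.mp hq).1.1.1)
    (fun p hp q hq h => le_antisymm h
      ((hfin.mem_toFinset.mp hq).1.2 (hfin.mem_toFinset.mp hp).1.1 h)) x (s ^ N)
    (fun q hq h => (hfin.mem_toFinset.mp hq).2 ((hfin.mem_toFinset.mp hq).1.1.1.mem_of_pow_mem _ h))
  exact ⟨l, fun q hq hs => hl q (hfin.mem_toFinset.mpr ⟨hq, hs⟩)⟩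

theorem gp [IsNoetherianRing B] (s : B) (N k : ℕ) (v : Fin k → B) :
    ∃ v' : Fin k → B, (∀ i, ∃ q, v' i = v i + s ^ N * q) ∧
      HtOff (Ideal.span (Set.range v')) s k := by
  induction k with
  | zero => exact ⟨v, fun i => i.elim0, fun q _ _ _ => by simp⟩
  | succ k ih =>
    obtain ⟨w, hw, hH⟩ := ih (fun i => v i.castSucc)
    obtain ⟨l, hl⟩ := avoid_min (Ideal.span (Set.range w)) s (v (Fin.last k)) N
    refine ⟨Fin.snoc (α := fun _ => B) w (v (Fin.last k) + s ^ N * l), ?_, ?_⟩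
    · intro i
      induction i using Fin.lastCases with
      | last => exact ⟨l, by simp⟩
      | cast i => simpa using hw i
    · rw [Fin.range_snoc, Ideal.span_insert, sup_comm]
      exact htOff_step hH hl

theorem special (S : Finset (Ideal B)) (hS : ∀ q ∈ S, q.IsPrime) (x t : B) (M : Bˣ)
    (hx : ∀ q ∈ S, x ∉ q) (ht : ∀ q ∈ S, t ∉ q) (K₀ : ℕ) :
    ∃ K L : ℕ, K₀ ≤ K ∧ 1 ≤ L ∧ ∀ q ∈ S, x + t * ((M : B) ^ K * ((M : B) ^ L - 1)) ∉ q := by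
  classical
  have hL : ∀ q : Ideal B, ∃ L : ℕ, 1 ≤ L ∧
      ((∃ L', 1 ≤ L' ∧ (M : B) ^ L' - 1 ∈ q) → (M : B) ^ L - 1 ∈ q) := by
    intro q
    by_cases h : ∃ L', 1 ≤ L' ∧ (M : B) ^ L' - 1 ∈ q
    · obtain ⟨L, h1, h2⟩ := h
      exact ⟨L, h1, fun _ => h2⟩
    · exact ⟨1, le_rfl, fun h' => absurd h' h⟩
  choose L hL1 hL2 using hL
  have hprod : 1 ≤ ∏ q ∈ S, L q := Nat.one_le_iff_ne_zero.mpr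
    (Finset.prod_ne_zero_iff.mpr fun q _ => by have := hL1 q; omega)
  have hbad : ∀ q ∈ S,
      {K : ℕ | x + t * ((M : B) ^ K * ((M : B) ^ (∏ q ∈ S, L q) - 1)) ∈ q}.Finite := by
    intro q hq
    have hp := hS q hq
    have hMq : (M : B) ∉ q := fun h => hp.ne_top (Ideal.eq_top_of_isUnit_mem _ h M.isUnit)
    by_cases htor : ∃ L', 1 ≤ L' ∧ (M : B) ^ L' - 1 ∈ q
    · have h1 := hL2 q htor
      have h2 : (M : B) ^ (∏ q ∈ S, L q) - 1 ∈ q := by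
        obtain ⟨c, hc⟩ := Finset.dvd_prod_of_mem L hq
        rw [hc, pow_mul]
        exact Ideal.mem_of_dvd q (sub_one_dvd_pow_sub_one _ _) h1
      convert Set.finite_empty (α := ℕ)
      rw [Set.eq_empty_iff_forall_notMem]
      intro K hK
      rw [Set.mem_ofPred_eq, Ideal.add_mem_iff_left _
        (Ideal.mul_mem_left _ _ (Ideal.mul_mem_left _ _ h2))] at hK
      exact hx q hq hK
    · push Not at htor
      apply Set.Subsingleton.finite
      have key : ∀ K₁ K₂ : ℕ, K₁ < K₂ →
          x + t * ((M : B) ^ K₁ * ((M : B) ^ (∏ q ∈ S, L q) - 1)) ∈ q →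
          x + t * ((M : B) ^ K₂ * ((M : B) ^ (∏ q ∈ S, L q) - 1)) ∈ q → False := by
        intro K₁ K₂ hlt h1 h2
        have h3 := Ideal.sub_mem _ h2 h1
        obtain ⟨c, rfl⟩ := Nat.exists_eq_add_of_lt hlt
        have e : x + t * ((M : B) ^ (K₁ + c + 1) * ((M : B) ^ (∏ q ∈ S, L q) - 1)) -
          (x + t * ((M : B) ^ K₁ * ((M : B) ^ (∏ q ∈ S, L q) - 1))) =
          t * ((M : B) ^ K₁ * (((M : B) ^ (∏ q ∈ S, L q) - 1) * ((M : B) ^ (c + 1) - 1))) := by ring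
        rw [e] at h3
        rcases hp.mem_or_mem h3 with h | h
        · exact ht q hq h
        rcases hp.mem_or_mem h with h | h
        · exact hMq (hp.mem_of_pow_mem _ h)
        rcases hp.mem_or_mem h with h | h
        · exact htor _ hprod h
        · exact htor _ (by omega) h
      intro K₁ h1 K₂ h2
      rcases lt_trichotomy K₁ K₂ with h | h | h
      · exact (key _ _ h h1 h2).elim
      · exact h
      · exact (key _ _ h h2 h1).elim
  have hfin : (⋃ q ∈ (S : Set (Ideal B)),
      {K : ℕ | x + t * ((M : B) ^ K * ((M : B) ^ (∏ q ∈ S, L q) - 1)) ∈ q}).Finite :=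
    Set.Finite.biUnion S.finite_toSet hbad
  obtain ⟨K, hK, hK0⟩ := hfin.infinite_compl.exists_gt K₀
  refine ⟨K, _, hK0.le, hprod, fun q hq hmem => hK ?_⟩
  exact Set.mem_biUnion (Finset.mem_coe.mpr hq) hmem

/-- general position with a prescribed shape of the last coordinate. -/
theorem gp_last [IsNoetherianRing B] (s : B) (N k : ℕ) (v : Fin k → B) (x : B) (M : Bˣ) :
    ∃ (v' : Fin k → B) (x' : B), (∀ i, ∃ q, v' i = v i + s ^ N * q) ∧
      (∃ q, x' = x + s ^ N * q) ∧ ∀ K₀ : ℕ, ∃ K L : ℕ, K₀ ≤ K ∧ 1 ≤ L ∧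
      HtOff (Ideal.span (Set.range v') ⊔
        Ideal.span {x' + s ^ N * ((M : B) ^ K * ((M : B) ^ L - 1))}) s (k + 1) := by
  obtain ⟨w, hw, hH⟩ := gp s N k v
  obtain ⟨l, hl⟩ := avoid_min (Ideal.span (Set.range w)) s x N
  refine ⟨w, _, hw, ⟨l, rfl⟩, fun K₀ => ?_⟩
  have hfin : {q | q ∈ (Ideal.span (Set.range w)).minimalPrimes ∧ s ∉ q}.Finite :=
    (Ideal.finite_minimalPrimes_of_isNoetherianRing B _).subset fun q hq => hq.1
  obtain ⟨K, L, h1, h2, h3⟩ := special hfin.toFinset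
    (fun q hq => (hfin.mem_toFinset.mp hq).1.1.1) (x + s ^ N * l) (s ^ N) M
    (fun q hq => hl q (hfin.mem_toFinset.mp hq).1 (hfin.mem_toFinset.mp hq).2)
    (fun q hq h => (hfin.mem_toFinset.mp hq).2 ((hfin.mem_toFinset.mp hq).1.1.1.mem_of_pow_mem _ h)) K₀
  exact ⟨K, L, h1, h2, htOff_step hH fun q hq hs => h3 q (hfin.mem_toFinset.mpr ⟨hq, hs⟩)⟩

end GP
end BLR


namespace BLR

section Corner
variable {R D : Type*} [CommRing R] [CommRing D] [Algebra R D]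

theorem polyform {A : Subalgebra R D} {y : Dˣ} {k : ℤ} {x : D} (hx : x ∈ G A y⁻¹ k) :
    ∃ p : Polynomial A, Polynomial.aeval (y : D) p = ((y ^ k : Dˣ) : D) * x := by
  refine G_induction (p := fun x => ∃ p : Polynomial A,
    Polynomial.aeval (y : D) p = ((y ^ k : Dˣ) : D) * x) ⟨0, by simp⟩ ?_ ?_ hx
  · rintro a b ⟨p, hp⟩ ⟨q, hq⟩
    exact ⟨p + q, by rw [map_add, hp, hq, mul_add]⟩
  · intro a ha i hi
    refine ⟨Polynomial.C ⟨a, ha⟩ * Polynomial.X ^ (k - i).toNat, ?_⟩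
    rw [map_mul, Polynomial.aeval_C, map_pow, Polynomial.aeval_X, ← Units.val_pow_eq_pow_val,
      ← zpow_natCast, Int.toNat_of_nonneg (by omega), sub_eq_add_neg, zpow_add, inv_zpow', Units.val_mul]
    change a * _ = _
    ring

theorem aeval_inj {A : Subalgebra R D} {y : Dˣ}
    (free : ∀ (n : ℕ) (c : ℕ → D), (∀ i, c i ∈ A) →
    ∑ i ∈ Finset.range n, c i * (y : D) ^ i = 0 → ∀ i < n, c i = 0)
    {p q : Polynomial A} (h : Polynomial.aeval (y : D) p = Polynomial.aeval (y : D) q) : p = q := by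
  rw [← sub_eq_zero]
  rw [← sub_eq_zero, ← map_sub] at h
  generalize p - q = p at h
  rw [Polynomial.aeval_eq_sum_range] at h
  have := free (p.natDegree + 1) (fun i => (p.coeff i : D)) (fun i => (p.coeff i).2) h
  ext i
  by_cases hi : i < p.natDegree + 1
  · rw [this i hi]; simp
  · rw [Polynomial.coeff_eq_zero_of_natDegree_lt (by omega)]; simp

theorem lowform {A : Subalgebra R D} {y : Dˣ} {x : D} (hx : x ∈ G A y (-1)) :
    ∃ (l : ℕ) (q : Polynomial A), q.degree < l ∧ Polynomial.aeval (y : D) q = (y : D) ^ l * x := by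
  refine G_induction (p := fun x => ∃ (l : ℕ) (q : Polynomial A), q.degree < l ∧
    Polynomial.aeval (y : D) q = (y : D) ^ l * x) ⟨0, 0, by simp, by simp⟩ ?_ ?_ hx
  · rintro a b ⟨l, p, hp, hp'⟩ ⟨m, q, hq, hq'⟩
    refine ⟨l + m, p * Polynomial.X ^ m + q * Polynomial.X ^ l, ?_, ?_⟩
    · have key : ∀ (p : Polynomial A) (l m : ℕ), p.degree < l →
          (p * Polynomial.X ^ m).degree < ((l + m : ℕ) : WithBot ℕ) := by
        intro p l m hp
        by_cases h0 : p = 0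
        · simp [h0]
        rw [Polynomial.degree_lt_iff_coeff_zero] at hp ⊢
        intro i hi
        rw [Polynomial.coeff_mul_X_pow', if_pos (by omega)]
        exact hp _ (by omega)
      refine (Polynomial.degree_add_le _ _).trans_lt (max_lt (key _ _ _ hp) ?_)
      rw [add_comm]
      exact key _ _ _ hq
    · simp only [map_add, map_mul, hp', hq', map_pow, Polynomial.aeval_X]
      ring
  · intro a ha i hi
    refine ⟨(-i).toNat, Polynomial.C ⟨a, ha⟩, Polynomial.degree_C_le.trans_lt ?_, ?_⟩
    · have : 0 < (-i).toNat := by omega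
      exact_mod_cast this
    · rw [Polynomial.aeval_C, ← Units.val_pow_eq_pow_val, ← zpow_natCast,
        Int.toNat_of_nonneg (by omega), mul_left_comm, ← Units.val_mul, ← zpow_add]
      simp

theorem mon_integral {A : Subalgebra R D} {y : Dˣ} {J : Ideal D} {w : D} (hw : w ∈ J)
    (hm : Mon A y w) : IsIntegral A (Ideal.Quotient.mk J (y : D)) := by
  obtain ⟨u, u', n, hu', huu, hu, hlt⟩ := hm
  have hz : u' * ((y ^ (-n) : Dˣ) : D) * (w - u * ((y ^ n : Dˣ) : D)) ∈ G A y (-1) := by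
    have := mul_mem_G (A_mul_mem_G hu' (zpow_mem_G A y (le_refl (-n)))) hlt
    rwa [show -n + (n - 1) = -1 by ring] at this
  obtain ⟨l, q, hq, hq'⟩ := lowform hz
  refine ⟨Polynomial.X ^ l + q, Polynomial.monic_X_pow_add hq, ?_⟩
  have e : Polynomial.eval₂ (algebraMap A (D ⧸ J)) (Ideal.Quotient.mk J (y : D))
      (Polynomial.X ^ l + q) = Ideal.Quotient.mk J (Polynomial.aeval (y : D) (Polynomial.X ^ l + q)) := by
    rw [Polynomial.aeval_def, Polynomial.hom_eval₂]
    rfl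
  rw [e, Ideal.Quotient.eq_zero_iff_mem, map_add, hq', map_pow, Polynomial.aeval_X]
  have hyy : ((y ^ (-n) : Dˣ) : D) * ((y ^ n : Dˣ) : D) = 1 := by
    rw [← Units.val_mul, ← zpow_add]; simp
  have e2 : (y : D) ^ l + (y : D) ^ l * (u' * ((y ^ (-n) : Dˣ) : D) * (w - u * ((y ^ n : Dˣ) : D)))
    = ((y : D) ^ l * (u' * ((y ^ (-n) : Dˣ) : D))) * w := by
    have : u' * ((y ^ (-n) : Dˣ) : D) * (w - u * ((y ^ n : Dˣ) : D)) =
      u' * ((y ^ (-n) : Dˣ) : D) * w - (u * u') * (((y ^ (-n) : Dˣ) : D) * ((y ^ n : Dˣ) : D)) := by ring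
    rw [this, huu, hyy]; ring
  rw [e2]
  exact J.mul_mem_left _ hw

theorem all_integral {A : Subalgebra R D} {y : Dˣ} {J : Ideal D}
    (hex : ∀ f : D, ∃ n, f ∈ G A y n)
    (h1 : IsIntegral A (Ideal.Quotient.mk J (y : D)))
    (h2 : IsIntegral A (Ideal.Quotient.mk J ((y⁻¹ : Dˣ) : D))) (f : D) :
    IsIntegral A (Ideal.Quotient.mk J f) := by
  obtain ⟨n, hn⟩ := hex f
  refine G_induction (p := fun x => IsIntegral A (Ideal.Quotient.mk J x)) ?_ ?_ ?_ hn
  · rw [map_zero]; exact isIntegral_zero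
  · intro a b ha hb
    rw [map_add]; exact ha.add hb
  · intro a ha i _
    rw [map_mul]
    refine IsIntegral.mul (isIntegral_algebraMap (x := (⟨a, ha⟩ : A))) ?_
    rcases Int.eq_nat_or_neg i with ⟨k, rfl | rfl⟩
    · rw [zpow_natCast, Units.val_pow_eq_pow_val, map_pow]
      exact h1.pow k
    · rw [zpow_neg, ← inv_zpow, zpow_natCast, Units.val_pow_eq_pow_val, map_pow]
      exact h2.pow k

theorem exists_one_add {A : Subalgebra R D} {J : Ideal D} {s b : D} (hs : s ∈ A)
    (hb : IsIntegral A (Ideal.Quotient.mk J b)) (hsb : 1 - s * b ∈ J) :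
    ∃ a ∈ A, 1 + s * a ∈ J := by
  obtain ⟨p, hp, hpb⟩ := hb
  refine ⟨∑ i ∈ Finset.range p.natDegree, (p.coeff i : D) * s ^ (p.natDegree - 1 - i),
    A.sum_mem fun i _ => A.mul_mem (p.coeff i).2 (A.pow_mem hs _), ?_⟩
  rw [← Ideal.Quotient.eq_zero_iff_mem]
  have hsb' : Ideal.Quotient.mk J s * Ideal.Quotient.mk J b = 1 := by
    rw [← map_mul, ← sub_eq_zero, ← neg_eq_zero, neg_sub, ← map_one (Ideal.Quotient.mk J),
      ← map_sub, Ideal.Quotient.eq_zero_iff_mem]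
    exact hsb
  rw [hp.as_sum] at hpb
  simp only [Polynomial.eval₂_add, Polynomial.eval₂_pow, Polynomial.eval₂_X,
    Polynomial.eval₂_finsetSum, Polynomial.eval₂_mul, Polynomial.eval₂_C] at hpb
  have := congrArg (fun x => Ideal.Quotient.mk J s ^ p.natDegree * x) hpb
  simp only [mul_zero, mul_add, ← mul_pow, hsb', one_pow, Finset.mul_sum] at this
  rw [← this, map_add, map_one, map_mul, map_sum, Finset.mul_sum]
  congr 1
  refine Finset.sum_congr rfl fun i hi => ?_
  rw [Finset.mem_range] at hi
  obtain ⟨k, hk⟩ := Nat.exists_eq_add_of_lt hi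
  rw [hk, show i + k + 1 - 1 - i = k by omega, map_mul, map_pow]
  have e : (algebraMap A (D ⧸ J)) (p.coeff i) = Ideal.Quotient.mk J (p.coeff i : D) := rfl
  rw [e]
  calc _ = Ideal.Quotient.mk J (p.coeff i : D) * Ideal.Quotient.mk J s ^ (k + 1) *
        (Ideal.Quotient.mk J s * Ideal.Quotient.mk J b) ^ i := by rw [hsb']; ring
    _ = _ := by ring

theorem corner {A : Subalgebra R D} {y : Dˣ} {W : Submonoid D} {h : ℕ} (H : IsTow A y W h)
    {ι : Type*} [Fintype ι] {s : D} (hs : s ∈ A) (N K : ℕ) (U : ι → D) (n : ℤ)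
    (hU : ∀ i, U i ∈ G A y⁻¹ n) (i₀ : ι) {e e' : D} (hee : e * e' = 1)
    (hU0 : LT A y⁻¹ (s ^ N * e) n (U i₀)) {a : D} (ha : a ∈ A)
    (hc : s ^ K * (1 + s * a) ∈ Ideal.span (Set.range U)) :
    ∃ U' : ι → D, (∀ i, ∃ q, U' i = U i + s ^ N * q) ∧
      ∃ K', s ^ K' ∈ Ideal.span (Set.range U') := by
  classical
  -- polynomial forms
  have hp : ∀ i, ∃ p : Polynomial A, Polynomial.aeval (y : D) p = ((y ^ n : Dˣ) : D) * U i ∧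
      (i = i₀ → (p.coeff 0 : D) = s ^ N * e) := by
    intro i
    by_cases hi : i = i₀
    · subst hi
      obtain ⟨q, hq⟩ := polyform hU0.2
      have hA : s ^ N * e ∈ A := hU0.1
      refine ⟨Polynomial.C ⟨_, hA⟩ + Polynomial.X * q, ?_, by simp⟩
      rw [map_add, Polynomial.aeval_C, map_mul, Polynomial.aeval_X, hq, ← mul_assoc,
        ← Units.val_mul, ← zpow_one_add, show 1 + (n - 1) = n by ring, mul_sub, mul_left_comm,
        ← Units.val_mul, inv_zpow', ← zpow_add]
      change s ^ N * e + _ = _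
      simp
    · obtain ⟨p, hp⟩ := polyform (hU i)
      exact ⟨p, hp, fun h => absurd h hi⟩
  choose p hp hp0 using hp
  let z : D := -(s * a)
  let c : D := 1 - z
  let c' : D := 1 - z ^ N
  have hz : z ∈ A := A.neg_mem (A.mul_mem hs ha)
  have hcA : c ∈ A := A.sub_mem A.one_mem hz
  have hcc : ∃ g, c' = c * g := ⟨_, (mul_neg_geom_sum z N).symm⟩
  have hc1 : ∃ g, c' = 1 + s ^ N * g := ⟨-(-a) ^ N, by
    simp only [c', z]; rw [← mul_neg, mul_pow]; ring⟩
  have hce : 1 + s * a = c := by simp [c, z]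
  rw [hce] at hc
  let U' : ι → D := fun i => ((y ^ (-n) : Dˣ) : D) * Polynomial.aeval (c' * (y : D)) (p i)
  have hyy : ((y ^ (-n) : Dˣ) : D) * ((y ^ n : Dˣ) : D) = 1 := by
    rw [← Units.val_mul, ← zpow_add]; simp
  have hyU' : ∀ i, Polynomial.aeval (c' * (y : D)) (p i) = ((y ^ n : Dˣ) : D) * U' i := by
    intro i
    simp only [U']
    rw [← mul_assoc, mul_comm ((y ^ n : Dˣ) : D), hyy, one_mul]
  refine ⟨U', ?_, ?_⟩
  · intro i
    have h1 : c' * (y : D) - (y : D) ∣ Polynomial.aeval (c' * (y : D)) (p i) -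
        Polynomial.aeval (y : D) (p i) := by
      rw [Polynomial.aeval_def, Polynomial.aeval_def, ← Polynomial.eval_map, ← Polynomial.eval_map]
      exact Polynomial.sub_dvd_eval_sub _ _ _
    obtain ⟨g, hg⟩ := h1
    obtain ⟨g', hg'⟩ := hc1
    refine ⟨((y ^ (-n) : Dˣ) : D) * (g' * y * g), ?_⟩
    have : U' i = ((y ^ (-n) : Dˣ) : D) * (Polynomial.aeval (y : D) (p i) + (c' * (y : D) - (y : D)) * g) := by
      rw [← hg]; simp [U']
    rw [this, hp, mul_add, ← mul_assoc, hyy, hg']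
    ring
  · -- coefficients
    obtain ⟨g, hg⟩ := (Ideal.mem_span_range_iff_exists_fun).mp hc
    choose l hl using fun i => H.exh' (g i)
    obtain ⟨L, hL⟩ : ∃ L : ℕ, ∀ i, l i + n ≤ L ∧ l i ≤ L - n := by
      refine ⟨∑ i, (l i + n).toNat, fun i => ?_⟩
      have := Finset.single_le_sum (f := fun i => (l i + n).toNat) (fun _ _ => Nat.zero_le _)
        (Finset.mem_univ i)
      constructor <;> omega
    choose P hP using fun i => polyform (G_mono A y⁻¹ (hL i).2 (hl i))
    have hsc : s ^ K * c ∈ A := A.mul_mem (A.pow_mem hs K) hcA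
    have hpoly : Polynomial.C (⟨s ^ K * c, hsc⟩ : A) * Polynomial.X ^ L = ∑ i, P i * p i := by
      apply aeval_inj H.free
      rw [map_mul, Polynomial.aeval_C, map_pow, Polynomial.aeval_X, map_sum]
      change s ^ K * c * _ = _
      rw [← hg, Finset.sum_mul]
      refine Finset.sum_congr rfl fun i _ => ?_
      rw [map_mul, hP, hp, ← Units.val_pow_eq_pow_val, ← zpow_natCast,
        show (L : ℤ) = (L - n) + n by ring, zpow_add, Units.val_mul, sub_add_cancel]
      ring
    have hev := congrArg (Polynomial.aeval (c' * (y : D))) hpoly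
    rw [map_mul, Polynomial.aeval_C, map_pow, Polynomial.aeval_X, map_sum] at hev
    have hUi : ∀ i, U' i ∈ Ideal.span (Set.range U') := fun i => Ideal.subset_span ⟨i, rfl⟩
    have h1 : s ^ K * c * (c' * (y : D)) ^ L ∈ Ideal.span (Set.range U') := by
      have e : s ^ K * c * (c' * (y : D)) ^ L = _ := hev
      rw [e]
      refine Ideal.sum_mem _ fun i _ => ?_
      rw [map_mul, hyU']
      exact Ideal.mul_mem_left _ _ (Ideal.mul_mem_left _ _ (hUi i))
    have h2 : s ^ K * c' ^ (L + 1) ∈ Ideal.span (Set.range U') := by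
      obtain ⟨g, hg⟩ := hcc
      have e : s ^ K * c' ^ (L + 1) =
          (g * ((y⁻¹ : Dˣ) : D) ^ L) * (s ^ K * c * (c' * (y : D)) ^ L) := by
        calc s ^ K * c' ^ (L + 1) = s ^ K * (c * g) * c' ^ L := by rw [pow_succ, ← hg]; ring
          _ = s ^ K * (c * g) * c' ^ L * (((y⁻¹ : Dˣ) : D) * (y : D)) ^ L := by simp
          _ = _ := by ring
      rw [e]
      exact Ideal.mul_mem_left _ _ h1
    have h3 : ∃ t, s ^ N - c' * t ∈ Ideal.span (Set.range U') := by
      have h4 : c' * (y : D) - 0 ∣ Polynomial.aeval (c' * (y : D)) (p i₀) -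
          Polynomial.aeval (0 : D) (p i₀) := by
        rw [Polynomial.aeval_def, Polynomial.aeval_def, ← Polynomial.eval_map, ← Polynomial.eval_map]
        exact Polynomial.sub_dvd_eval_sub _ _ _
      obtain ⟨g, hg⟩ := h4
      have h5 : Polynomial.aeval (0 : D) (p i₀) = s ^ N * e := by
        rw [← hp0 i₀ rfl, Polynomial.aeval_def, Polynomial.eval₂_at_zero]
        rfl
      rw [h5, hyU', sub_zero] at hg
      refine ⟨-(e' * y * g), ?_⟩
      have : s ^ N - c' * -(e' * y * g) = e' * ((y ^ n : Dˣ) : D) * U' i₀ := by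
        have : s ^ N * (e * e') + e' * (c' * (y : D) * g) = e' * (((y ^ n : Dˣ) : D) * U' i₀) := by
          rw [← hg]; ring
        rw [hee] at this
        rw [mul_assoc e' _ (U' i₀), ← this]; ring
      rw [this]
      exact Ideal.mul_mem_left _ _ (hUi _)
    obtain ⟨t, ht⟩ := h3
    refine ⟨K + N * (L + 1), ?_⟩
    rw [← Ideal.Quotient.eq_zero_iff_mem] at ht h2 ⊢
    rw [map_sub, sub_eq_zero] at ht
    rw [pow_add, pow_mul, map_mul, map_pow _ (s ^ N), ht, ← map_pow, ← map_mul, mul_pow, ← mul_assoc,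
      map_mul, h2, zero_mul]

end Corner
end BLR


namespace BLR
universe u
open LaurentPolynomial (T)

theorem span_map {B C ι : Type*} [CommRing B] [CommRing C] (φ : B →+* C) {v : ι → B} {x : B}
    (hx : x ∈ Ideal.span (Set.range v)) : φ x ∈ Ideal.span (Set.range fun i => φ (v i)) := by
  have := Ideal.mem_map_of_mem φ hx
  rwa [Ideal.map_span, ← Set.range_comp] at this

/-- saturation of an ideal with respect to `s` -/
def sat {B : Type*} [CommRing B] (I : Ideal B) (s : B) : Ideal B where
  carrier := {b | ∃ n : ℕ, s ^ n * b ∈ I}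
  zero_mem' := ⟨0, by simp⟩
  add_mem' := by
    rintro a b ⟨n, hn⟩ ⟨m, hm⟩
    refine ⟨n + m, ?_⟩
    have e : s ^ (n + m) * (a + b) = s ^ m * (s ^ n * a) + s ^ n * (s ^ m * b) := by ring
    rw [e]
    exact I.add_mem (I.mul_mem_left _ hn) (I.mul_mem_left _ hm)
  smul_mem' := by
    rintro c a ⟨n, hn⟩
    refine ⟨n, ?_⟩
    rw [smul_eq_mul, mul_left_comm]
    exact I.mul_mem_left _ hn

theorem span_modify {B ι : Type*} [CommRing B] [Fintype ι] {v v' : ι → B} {s b : B} {k N : ℕ}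
    (hN : k + 1 ≤ N) (hv : ∀ i, ∃ q, v' i = v i + s ^ N * q)
    (h : s ^ k * (1 - s * b) ∈ Ideal.span (Set.range v)) :
    ∃ b', s ^ k * (1 - s * b') ∈ Ideal.span (Set.range v') := by
  choose q hq using hv
  obtain ⟨g, hg⟩ := (Ideal.mem_span_range_iff_exists_fun).mp h
  obtain ⟨l, rfl⟩ := Nat.exists_eq_add_of_le hN
  refine ⟨b - s ^ l * ∑ i, g i * q i, ?_⟩
  rw [Ideal.mem_span_range_iff_exists_fun]
  refine ⟨g, ?_⟩
  have : s ^ k * (1 - s * (b - s ^ l * ∑ i, g i * q i)) =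
    s ^ k * (1 - s * b) + s ^ (k + 1 + l) * ∑ i, g i * q i := by ring
  rw [this, ← hg, Finset.mul_sum, ← Finset.sum_add_distrib]
  refine Finset.sum_congr rfl fun i _ => ?_
  rw [hq]; ring

/-- evaluation `T ↦ 1` -/
def lauEv (R D : Type*) [CommRing R] [CommRing D] [Algebra R D] : LaurentPolynomial D →ₐ[R] D :=
  { LaurentPolynomial.eval₂ (RingHom.id D) 1 with
      commutes' := fun r => by exact LaurentPolynomial.eval₂_C _ _ _ }

theorem lauEv_C (R : Type*) {D : Type*} [CommRing R] [CommRing D] [Algebra R D] (a : D) :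
    lauEv R D (LaurentPolynomial.C a) = a := LaurentPolynomial.eval₂_C _ _ _

theorem coeff_low {D : Type*} [CommRing D] (f : LaurentPolynomial D) :
    ∃ K₀ : ℕ, ∀ i : ℤ, i ≤ -K₀ → f.coeff i = 0 := by
  refine ⟨∑ i ∈ f.coeff.support, (i.natAbs + 1), fun i hi => ?_⟩
  by_contra h
  have := Finset.single_le_sum (f := fun i : ℤ => i.natAbs + 1) (fun _ _ => Nat.zero_le _)
    (Finsupp.mem_support_iff.mpr h)
  omega

theorem claimV_core {R D : Type u} [CommRing R] [CommRing D] [Algebra R D] [IsNoetherianRing D]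
    {A : Subalgebra R D} {y : Dˣ} {W : Submonoid D} {h : ℕ} (H : IsTow A y W h) {r : ℕ}
    (hr : h ≤ r + 1) (s : R) (v : Fin (r + 1) → LaurentPolynomial D) (k N : ℕ) (hN : k + 1 ≤ N)
    (b : LaurentPolynomial D)
    (hv : algebraMap R _ s ^ k * (1 - algebraMap R _ s * b) ∈ Ideal.span (Set.range v)) :
    ∃ v' : Fin (r + 1) → LaurentPolynomial D, (∀ i, ∃ q, v' i = v i + algebraMap R _ s ^ N * q) ∧
      ∃ K', algebraMap R _ s ^ K' ∈ Ideal.span (Set.range v') := by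
  obtain ⟨V, x, hV, hx, hKL⟩ := gp_last (algebraMap R (LaurentPolynomial D) s) N r
    (fun i => v i.castSucc) (v (Fin.last r)) (Tu D)⁻¹
  set S := algebraMap R (LaurentPolynomial D) s with hS
  obtain ⟨K₀, hK₀⟩ : ∃ K₀ : ℕ, (∀ j, ∀ i : ℤ, i ≤ -K₀ → (V j).coeff i = 0) ∧
      ∀ i : ℤ, i ≤ -K₀ → x.coeff i = 0 := by
    choose k1 hk1 using fun j => coeff_low (V j)
    obtain ⟨k2, hk2⟩ := coeff_low x
    refine ⟨∑ j, k1 j + k2, fun j i hi => hk1 j i ?_, fun i hi => hk2 i ?_⟩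
    · have := Finset.single_le_sum (f := k1) (fun _ _ => Nat.zero_le _) (Finset.mem_univ j)
      omega
    · omega
  obtain ⟨K, L, hK, hL, hht⟩ := hKL K₀
  have hM : ∀ n : ℕ, (((Tu D)⁻¹ : (LaurentPolynomial D)ˣ) : LaurentPolynomial D) ^ n = T (-(n : ℤ)) := by
    intro n
    rw [← Units.val_pow_eq_pow_val, inv_pow, ← zpow_natCast, ← zpow_neg, Tu_zpow]
  rw [mul_sub, mul_one, ← pow_add, hM, hM] at hht
  set m : ℕ := K + L with hm
  set f : LaurentPolynomial D := x - S ^ N * T (-(K : ℤ)) with hf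
  rw [show x + S ^ N * (T (-(m : ℤ)) - T (-(K : ℤ))) = f + S ^ N * T (-(m : ℤ)) by
    rw [hf]; ring] at hht
  have hfc : ∀ i : ℤ, i ≤ -m → f.coeff i = 0 := by
    intro i hi
    have e : S ^ N * T (-(K : ℤ)) = LaurentPolynomial.C (algebraMap R D s ^ N) * T (-(K : ℤ)) := by
      rw [map_pow]; rfl
    rw [hf, AddMonoidAlgebra.coeff_sub, Finsupp.sub_apply, e, coeff_C_mul_T, if_neg (by omega),
      hK₀.2 i (by omega), sub_zero]
  have hVc : ∀ j, ∀ i : ℤ, i ≤ -m → (V j).coeff i = 0 := fun j i hi => hK₀.1 j i (by omega)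
  set V1 : Fin (r + 1) → LaurentPolynomial D :=
    Fin.snoc (α := fun _ => LaurentPolynomial D) V (f + S ^ N * T (-(m : ℤ))) with hV1
  have hV1v : ∀ i, ∃ q, V1 i = v i + S ^ N * q := by
    intro i
    induction i using Fin.lastCases with
    | last =>
      obtain ⟨q, hq⟩ := hx
      refine ⟨q - T (-(K : ℤ)) + T (-(m : ℤ)), ?_⟩
      rw [hV1, Fin.snoc_last, hf, hq]
      ring
    | cast i =>
      rw [hV1, Fin.snoc_castSucc]
      exact hV i
  rw [sup_comm, ← Ideal.span_insert, ← Fin.range_snoc, ← hV1] at hht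
  obtain ⟨b', hb'⟩ := span_modify hN hV1v hv
  set J := sat (Ideal.span (Set.range V1)) S with hJ
  have hbJ : 1 - S * b' ∈ J := ⟨k, hb'⟩
  have hJp : ∀ q : Ideal (LaurentPolynomial D), q.IsPrime → J ≤ q → (h : ℕ∞) ≤ q.height := by
    intro q hq hJq
    have h1 : Ideal.span (Set.range V1) ≤ q := fun z hz => hJq ⟨0, by simpa using hz⟩
    have h2 : S ∉ q := fun hSq => hq.ne_top ((Ideal.eq_top_iff_one _).mpr (by
      have := q.add_mem (hJq hbJ) (q.mul_mem_right b' hSq)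
      simpa using this))
    refine le_trans ?_ (hht q hq h1 h2)
    exact_mod_cast hr
  obtain ⟨w, hwW, hwJ⟩ := meets_ideal H.lau.primes J hJp
  obtain ⟨g, a, c, hg, rfl, hfb, ha, hc⟩ := lauW_ends hwW
  obtain ⟨ψ, hψ1, hψ2⟩ := H.psi _ hg
  obtain ⟨N₁, hN₁⟩ := lau_mon_top H.exh ψ w c hc (by rw [hfb]; exact hψ1)
  obtain ⟨N₂, hN₂⟩ := lau_mon_bot H.exh' ψ w a ha hψ2
  obtain ⟨N₃, hN₃⟩ := lau_low_bot H.exh' ψ f m hfc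
  choose N₄ hN₄ using fun j => lau_low_bot H.exh' ψ (V j) m (hVc j)
  obtain ⟨N', hN'1, hN'2, hN'3, hN'4⟩ : ∃ N', N₁ ≤ N' ∧ N₂ ≤ N' ∧ N₃ ≤ N' ∧ ∀ j, N₄ j ≤ N' := by
    refine ⟨N₁ + N₂ + N₃ + ∑ j, N₄ j, by omega, by omega, by omega, fun j => ?_⟩
    have := Finset.single_le_sum (f := N₄) (fun _ _ => Nat.zero_le _) (Finset.mem_univ j)
    omega
  replace hN₁ := hN₁ N' hN'1
  replace hN₂ := hN₂ N' hN'2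
  replace hN₃ := hN₃ N' hN'3
  replace hN₄ := fun j => hN₄ j N' (hN'4 j)
  have hT : lauEquiv ψ (y ^ N') (T (-(m : ℤ))) =
      LaurentPolynomial.C (((y⁻¹ ^ N') ^ (m : ℤ) : Dˣ) : D) * T (-(m : ℤ)) := by
    have := lauEquiv_apply ψ (y ^ N') 1 (-(m : ℤ))
    rw [map_one, one_mul, map_one, map_one, one_mul] at this
    rw [this, zpow_neg, inv_pow, inv_zpow]
  set Ψ := lauEquiv ψ (y ^ N') with hΨ
  set y' := Units.map ((LaurentPolynomial.C : D →+* LaurentPolynomial D) : D →* LaurentPolynomial D) y with hy'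
  have hSA : S ∈ lauA A := Subalgebra.algebraMap_mem _ s
  have hΨS : Ψ S = S := by rw [hS]; exact Ψ.commutes s
  set J2 : Ideal (LaurentPolynomial D) := J.comap (Ψ.symm : LaurentPolynomial D →+* _) with hJ2
  have hwJ2 : Ψ w ∈ J2 := by
    rw [hJ2, Ideal.mem_comap]
    simpa using hwJ
  have hsb2 : 1 - S * Ψ b' ∈ J2 := by
    rw [hJ2, Ideal.mem_comap]
    have : (Ψ.symm : LaurentPolynomial D →+* _) (1 - S * Ψ b') = 1 - S * b' := by
      change Ψ.symm (1 - S * Ψ b') = _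
      rw [Ψ.symm_apply_eq, map_sub, map_mul, map_one, hΨS]
    rw [this]
    exact hbJ
  obtain ⟨a', ha'A, ha'⟩ := exists_one_add hSA
    (all_integral H.lau.exh (mon_integral hwJ2 hN₁) (mon_integral hwJ2 hN₂) (Ψ b')) hsb2
  obtain ⟨K1, hK1⟩ := ha'
  have hK1' : S ^ K1 * (1 + S * a') ∈ Ideal.span (Set.range fun i => Ψ (V1 i)) := by
    have := span_map (Ψ : LaurentPolynomial D →+* LaurentPolynomial D) hK1
    have e : (Ψ : LaurentPolynomial D →+* LaurentPolynomial D) (S ^ K1 *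
        (Ψ.symm : LaurentPolynomial D →+* _) (1 + S * a')) = S ^ K1 * (1 + S * a') := by
      change Ψ (S ^ K1 * Ψ.symm _) = _
      rw [map_mul, map_pow, hΨS, Ψ.apply_symm_apply]
    rw [e] at this
    exact this
  have hlast : LT (lauA A) y'⁻¹ (S ^ N * T (-(m : ℤ))) (N' * m) (Ψ (V1 (Fin.last r))) := by
    rw [hV1, Fin.snoc_last, map_add, map_mul, map_pow, hΨS, hT, add_comm]
    refine LT.add ?_ hN₃
    have h1 : LT (lauA A) y'⁻¹ (S ^ N) 0 (S ^ N) := ⟨Subalgebra.pow_mem _ hSA _, by simp⟩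
    have h2 := lt_lau A y⁻¹ N' m (-(m : ℤ))
    rw [map_inv] at h2
    have := h1.mul h2
    rwa [zero_add] at this
  obtain ⟨U', hU', K', hK'⟩ := corner H.lau hSA N K1 (fun i => Ψ (V1 i)) (N' * m) (by
    intro i
    induction i using Fin.lastCases with
    | last => exact hlast.mem_G
    | cast i =>
      simp only [hV1, Fin.snoc_castSucc]
      exact G_mono _ _ (by omega) (hN₄ i)) (Fin.last r) (e' := T (m : ℤ))
    (by rw [← LaurentPolynomial.T_add]; simp) hlast ha'A hK1'
  refine ⟨fun i => Ψ.symm (U' i), ?_, K', ?_⟩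
  · intro i
    obtain ⟨q, hq⟩ := hU' i
    obtain ⟨q', hq'⟩ := hV1v i
    refine ⟨q' + Ψ.symm q, ?_⟩
    beta_reduce
    rw [hq, Ψ.symm_apply_eq, hq']
    simp only [map_add, map_mul, map_pow, hΨS, Ψ.apply_symm_apply]
    ring
  · have := span_map (Ψ.symm : LaurentPolynomial D →+* LaurentPolynomial D) hK'
    have e : (Ψ.symm : LaurentPolynomial D →+* LaurentPolynomial D) (S ^ K') = S ^ K' := by
      rw [map_pow]; congr 1; exact Ψ.symm.commutes s
    rw [e] at this
    exact this

theorem claimV {R A₀ : Type u} [CommRing R] [CommRing A₀] [Algebra R A₀] {h : ℕ}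
    (H : HasTow R A₀ h) {r : ℕ} (hr : h ≤ r + 1) (s : R) (v : Fin (r + 1) → A₀) (k N : ℕ)
    (b : A₀)
    (hv : algebraMap R _ s ^ k * (1 - algebraMap R _ s * b) ∈ Ideal.span (Set.range v)) :
    ∃ v' : Fin (r + 1) → A₀, (∀ i, ∃ q, v' i = v i + algebraMap R _ s ^ N * q) ∧
      ∃ K', algebraMap R _ s ^ K' ∈ Ideal.span (Set.range v') := by
  obtain ⟨D, _, _, _, ι, ρ, A, y, W, hρ, HT⟩ := H
  let φ : A₀ →+* LaurentPolynomial D := LaurentPolynomial.C.comp (ι : A₀ →+* D)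
  have hφ : ∀ t : R, φ (algebraMap R A₀ t) = algebraMap R _ t := by
    intro t
    change LaurentPolynomial.C (ι (algebraMap R A₀ t)) = _
    rw [ι.commutes]; rfl
  have h1 := span_map φ hv
  rw [map_mul, map_pow, map_sub, map_mul, map_one, hφ] at h1
  obtain ⟨V, hV, K, hK⟩ := claimV_core HT hr s (fun i => φ (v i)) k (k + 1 + N) (by omega) (φ b) h1
  let τ : LaurentPolynomial D →ₐ[R] A₀ := ρ.comp (lauEv R D)
  refine ⟨fun i => τ (V i), ?_, K, ?_⟩
  · intro i
    obtain ⟨q, hq⟩ := hV i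
    refine ⟨algebraMap R _ s ^ (k + 1) * τ q, ?_⟩
    have e : τ (φ (v i)) = v i := by
      change ρ (lauEv R D (LaurentPolynomial.C (ι (v i)))) = _
      rw [lauEv_C, hρ]
    beta_reduce
    rw [hq, map_add, map_mul, map_pow, e, τ.commutes]
    ring
  · have := span_map (τ : LaurentPolynomial D →+* A₀) hK
    rw [map_pow] at this
    have e : (τ : LaurentPolynomial D →+* A₀) (algebraMap R _ s) = algebraMap R _ s := τ.commutes s
    rw [e] at this
    exact this

end BLR


namespace BLR
universe u

open scoped TensorProduct in
theorem um_lift {B C P : Type*} [CommRing B] [CommRing C] [Algebra B C] [AddCommGroup P] [Module B P]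
    [Module.Projective B P] (hs : Function.Surjective (algebraMap B C))
    (h : ∃ (v : C ⊗[B] P) (φ : (C ⊗[B] P) →ₗ[C] C), φ v = 1) :
    ∃ (p : P) (ψ : P →ₗ[B] B), algebraMap B C (ψ p) = 1 := by
  obtain ⟨v, φ, hv⟩ := h
  obtain ⟨p, rfl⟩ := TensorProduct.mk_surjective B P C hs v
  obtain ⟨ψ, hψ⟩ := Module.projective_lifting_property (Algebra.linearMap B C)
    ((φ.restrictScalars B) ∘ₗ TensorProduct.mk B C P 1) hs
  refine ⟨p, ψ, ?_⟩
  have := LinearMap.congr_fun hψ p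
  simpa [hv] using this.trans hv

open scoped TensorProduct in
theorem spread {A A' P : Type*} [CommRing A] [CommRing A'] [Algebra A A'] (S : Submonoid A)
    [IsLocalization S A'] [AddCommGroup P] [Module A P] [Module.Finite A P]
    [Module.Projective A P] {r : ℕ} (e : (A' ⊗[A] P) ≃ₗ[A'] (Fin r → A')) :
    ∃ s ∈ S, ∃ (Φ : P →ₗ[A] (Fin r → A)) (E : (Fin r → A) →ₗ[A] P),
      (∀ x, Φ (E x) = s • x) ∧ ∀ p, E (Φ p) = s • p := by
  have : Module.FinitePresentation A P := Module.finitePresentation_of_projective A P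
  let f1 : P →ₗ[A] (Fin r → A') := (e.restrictScalars A).toLinearMap ∘ₗ TensorProduct.mk A A' P 1
  let f2 : (Fin r → A) →ₗ[A] (Fin r → A') := (Algebra.linearMap A A').compLeft (Fin r)
  have i1 : IsLocalizedModule S f1 := by
    have : IsLocalizedModule S (TensorProduct.mk A A' P 1) :=
      (isLocalizedModule_iff_isBaseChange S A' _).mpr (TensorProduct.isBaseChange _ _ _)
    exact IsLocalizedModule.of_linearEquiv S _ _
  have i2 : IsLocalizedModule S f2 := by
    rw [isLocalizedModule_iff_isBaseChange S A']
    exact IsBaseChange.finitePow _ (IsBaseChange.linearMap A A')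
  obtain ⟨Φ, s1, h1⟩ := Module.FinitePresentation.exists_lift_of_isLocalizedModule S f2 f1
  obtain ⟨E, s2, h2⟩ := Module.FinitePresentation.exists_lift_of_isLocalizedModule S f1 f2
  have h1' : ∀ p, f2 (Φ p) = (s1 : A) • f1 p := fun p => LinearMap.congr_fun h1 p
  have h2' : ∀ p, f1 (E p) = (s2 : A) • f2 p := fun p => LinearMap.congr_fun h2 p
  have h3 : f1 ∘ₗ (E ∘ₗ Φ) = f1 ∘ₗ (((s1 : A) * s2) • LinearMap.id) := by
    refine LinearMap.ext fun p => ?_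
    simp [h1', h2', smul_smul, mul_comm]
  have h4 : f2 ∘ₗ (Φ ∘ₗ E) = f2 ∘ₗ (((s1 : A) * s2) • LinearMap.id) := by
    refine LinearMap.ext fun p => ?_
    simp [h1', h2', smul_smul, mul_comm]
  obtain ⟨s3, h5⟩ := Module.Finite.exists_smul_of_comp_eq_of_isLocalizedModule S f1 _ _ h3
  obtain ⟨s4, h6⟩ := Module.Finite.exists_smul_of_comp_eq_of_isLocalizedModule S f2 _ _ h4
  have h5' : ∀ p, (s3 : A) • E (Φ p) = (s3 : A) • (((s1 : A) * s2) • p) := 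
    fun p => LinearMap.congr_fun h5 p
  have h6' : ∀ p, (s4 : A) • Φ (E p) = (s4 : A) • (((s1 : A) * s2) • p) := 
    fun p => LinearMap.congr_fun h6 p
  refine ⟨s3 * s4 * (s1 * s2), (s3 * s4 * (s1 * s2)).2, ((s3 : A) * s4) • Φ, E, ?_, ?_⟩
  · intro x
    rw [LinearMap.smul_apply, mul_smul, h6']
    simp only [smul_smul]
    congr 1; ring
  · intro x
    rw [LinearMap.smul_apply, map_smul, mul_comm (s3 : A), mul_smul, h5']
    simp only [smul_smul]
    congr 1; ring


theorem isField_min (R : Type*) [CommRing R] [IsReduced R] (p : Ideal R) [p.IsPrime]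
    (h : p ∈ minimalPrimes R) : IsField (Localization.AtPrime p) := by
  have h1 := IsLocalization.subsingleton_primeSpectrum_of_mem_minimalPrimes p h
    (Localization.AtPrime p)
  have hr : IsReduced (Localization.AtPrime p) := inferInstance
  rw [IsLocalRing.isField_iff_maximalIdeal_eq, eq_bot_iff]
  intro x hx
  have : IsNilpotent x := by
    rw [nilpotent_iff_mem_prime]
    intro J hJ
    have := congrArg PrimeSpectrum.asIdeal (h1.elim ⟨J, hJ⟩
      ⟨IsLocalRing.maximalIdeal (Localization.AtPrime p), inferInstance⟩)
    change J = _ at this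
    rw [this]; exact hx
  simpa using this

open scoped AlgebraMonoidAlgebra in
theorem isLoc (R K M : Type*) [CommRing R] [CommRing K] [Algebra R K] [AddCommMonoid M]
    (S : Submonoid R) [IsLocalization S K] :
    letI : Algebra (AddMonoidAlgebra R M) (AddMonoidAlgebra K M) :=
      (AddMonoidAlgebra.mapRingHom M (algebraMap R K)).toAlgebra
    IsLocalization (Algebra.algebraMapSubmonoid (AddMonoidAlgebra R M) S)
      (AddMonoidAlgebra K M) := by
  have : IsLocalization (Algebra.algebraMapSubmonoid (AddMonoidAlgebra R M) S)
      (AddMonoidAlgebra K M) := by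
    rw [Algebra.isLocalization_iff_isPushout S K]
    infer_instance
  exact this

theorem kerMap {R M : Type*} [CommRing R] [AddCommMonoid M] (s : R) (x : AddMonoidAlgebra R M)
    (h : AddMonoidAlgebra.mapRingHom M (Ideal.Quotient.mk (Ideal.span {s})) x = 0) :
    ∃ b, x = algebraMap R _ s * b := by
  have h1 : ∀ m, ∃ c, x.coeff m = s * c ∧ (x.coeff m = 0 → c = 0) := by
    intro m
    have := congrArg (fun y => AddMonoidAlgebra.coeff y m) h
    simp at this
    rw [Ideal.Quotient.eq_zero_iff_mem, Ideal.mem_span_singleton'] at this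
    obtain ⟨c, hc⟩ := this
    by_cases h0 : x.coeff m = 0
    · exact ⟨0, by simp [h0], fun _ => rfl⟩
    · exact ⟨c, by rw [← hc, mul_comm], fun h => absurd h h0⟩
  choose c hc hc0 using h1
  refine ⟨.ofCoeff (Finsupp.onFinset x.coeff.support c fun m hm => ?_), ?_⟩
  · rw [Finsupp.mem_support_iff]; exact fun h => hm (hc0 m h)
  · rw [← Algebra.smul_def]
    ext m
    simp [hc]

theorem nilMap {R M : Type*} [CommRing R] [AddCommMonoid M] (x : AddMonoidAlgebra R M)
    (h : AddMonoidAlgebra.mapRingHom M (Ideal.Quotient.mk (nilradical R)) x = 0) :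
    IsNilpotent x := by
  have h1 : ∀ m, IsNilpotent (x.coeff m) := by
    intro m
    have := congrArg (fun y => AddMonoidAlgebra.coeff y m) h
    simp at this
    rwa [Ideal.Quotient.eq_zero_iff_mem, mem_nilradical] at this
  rw [← AddMonoidAlgebra.sum_coeff_single x, ← mem_nilradical]
  refine Ideal.sum_mem _ fun m _ => ?_
  obtain ⟨n, hn⟩ := h1 m
  refine ⟨n, ?_⟩
  rw [AddMonoidAlgebra.single_pow, hn, AddMonoidAlgebra.single_zero]
  exact Ideal.zero_mem _

/-- freeness of projectives over `K[M]` -/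
def FreeProp (M : Type) [AddCommMonoid M] : Prop :=
  ∀ (K : Type u) [CommRing K], IsField K →
  ∀ (P : Type u) [AddCommGroup P] [Module (AddMonoidAlgebra K M) P]
    [Module.Finite (AddMonoidAlgebra K M) P] [Module.Projective (AddMonoidAlgebra K M) P] (r : ℕ),
    (∀ p : PrimeSpectrum (AddMonoidAlgebra K M), Module.rankAtStalk P p = r) →
    Nonempty (P ≃ₗ[AddMonoidAlgebra K M] (Fin r → AddMonoidAlgebra K M))

/-- existence of unimodular elements over `R[M]` -/
def UmProp (M : Type) [AddCommMonoid M] : Prop :=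
  ∀ (h : ℕ) (R : Type u) [CommRing R] [IsNoetherianRing R], ringKrullDim R < h →
  ∀ (P : Type u) [AddCommGroup P] [Module (AddMonoidAlgebra R M) P]
    [Module.Finite (AddMonoidAlgebra R M) P] [Module.Projective (AddMonoidAlgebra R M) P] (r : ℕ),
    h ≤ r →
    (∀ p : PrimeSpectrum (AddMonoidAlgebra R M), Module.rankAtStalk P p = r) →
    ∃ (v : P) (φ : P →ₗ[AddMonoidAlgebra R M] AddMonoidAlgebra R M), φ v = 1

/-- tower property of `R[M]` -/
def HasTowM (M : Type) [AddCommMonoid M] : Prop :=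
  ∀ (h : ℕ) (R : Type u) [CommRing R] [IsNoetherianRing R], ringKrullDim R < h →
    HasTow R (AddMonoidAlgebra R M) h

theorem generic_free_at {M : Type} [AddCommMonoid M] (hF : FreeProp.{u} M)
    (R : Type u) [CommRing R] [IsReduced R] (𝔭 : Ideal R) (h𝔭 : 𝔭 ∈ minimalPrimes R)
    (P : Type u) [AddCommGroup P] [Module (AddMonoidAlgebra R M) P]
    [Module.Finite (AddMonoidAlgebra R M) P] [Module.Projective (AddMonoidAlgebra R M) P] (r : ℕ)
    (hr : ∀ p : PrimeSpectrum (AddMonoidAlgebra R M), Module.rankAtStalk P p = r) :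
    ∃ s ∉ 𝔭, ∃ (Φ : P →ₗ[AddMonoidAlgebra R M] (Fin r → AddMonoidAlgebra R M))
      (E : (Fin r → AddMonoidAlgebra R M) →ₗ[AddMonoidAlgebra R M] P),
      (∀ x, Φ (E x) = algebraMap R (AddMonoidAlgebra R M) s • x) ∧
      ∀ p, E (Φ p) = algebraMap R (AddMonoidAlgebra R M) s • p := by
  have : 𝔭.IsPrime := h𝔭.1.1
  letI : Algebra (AddMonoidAlgebra R M) (AddMonoidAlgebra (Localization.AtPrime 𝔭) M) :=
    (AddMonoidAlgebra.mapRingHom M (algebraMap R (Localization.AtPrime 𝔭))).toAlgebra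
  have i1 : IsLocalization (Algebra.algebraMapSubmonoid (AddMonoidAlgebra R M) 𝔭.primeCompl)
      (AddMonoidAlgebra (Localization.AtPrime 𝔭) M) := isLoc R (Localization.AtPrime 𝔭) M 𝔭.primeCompl
  obtain ⟨e⟩ := hF (Localization.AtPrime 𝔭) (isField_min R 𝔭 h𝔭)
    (TensorProduct (AddMonoidAlgebra R M) (AddMonoidAlgebra (Localization.AtPrime 𝔭) M) P) r
    (fun p => by rw [Module.rankAtStalk_baseChange, hr])
  obtain ⟨s, ⟨s', hs', rfl⟩, Φ, E, h1, h2⟩ := spread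
    (Algebra.algebraMapSubmonoid (AddMonoidAlgebra R M) 𝔭.primeCompl) e
  exact ⟨s', hs', Φ, E, h1, h2⟩

theorem generic_free {M : Type} [AddCommMonoid M] (hF : FreeProp.{u} M)
    (R : Type u) [CommRing R] [IsNoetherianRing R] [IsReduced R]
    (P : Type u) [AddCommGroup P] [Module (AddMonoidAlgebra R M) P]
    [Module.Finite (AddMonoidAlgebra R M) P] [Module.Projective (AddMonoidAlgebra R M) P] (r : ℕ)
    (hr : ∀ p : PrimeSpectrum (AddMonoidAlgebra R M), Module.rankAtStalk P p = r) :
    ∃ s ∈ nonZeroDivisors R, ∃ (Φ : P →ₗ[AddMonoidAlgebra R M] (Fin r → AddMonoidAlgebra R M))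
      (E : (Fin r → AddMonoidAlgebra R M) →ₗ[AddMonoidAlgebra R M] P),
      (∀ x, Φ (E x) = algebraMap R (AddMonoidAlgebra R M) s • x) ∧
      ∀ p, E (Φ p) = algebraMap R (AddMonoidAlgebra R M) s • p := by
  classical
  have hfin : (minimalPrimes R).Finite := minimalPrimes.finite_of_isNoetherianRing R
  have : Fintype (minimalPrimes R) := hfin.fintype
  have hpr : ∀ i : minimalPrimes R, i.1.IsPrime := fun i => i.2.1.1
  have hzero : ∀ x : R, (∀ i : minimalPrimes R, x ∈ i.1) → x = 0 := by
    intro x hx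
    have : IsNilpotent x := by
      rw [nilpotent_iff_mem_prime]
      intro J hJ
      obtain ⟨p, hp, hpJ⟩ := Ideal.exists_minimalPrimes_le (I := (⊥ : Ideal R)) (J := J) bot_le
      exact hpJ (hx ⟨p, hp⟩)
    simpa using this
  have ht : ∀ i : minimalPrimes R, ∃ t ∉ i.1, ∀ j : minimalPrimes R, j ≠ i → t ∈ j.1 := by
    intro i
    by_contra hcon
    push Not at hcon
    have hle : (Finset.univ.erase i).inf (fun j : minimalPrimes R => j.1) ≤ i.1 := by
      intro t ht
      by_contra hti
      obtain ⟨j, hj, htj⟩ := hcon t hti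
      rw [Submodule.mem_finsetInf] at ht
      exact htj (ht j (by simp [hj]))
    obtain ⟨j, hj, hji⟩ := ((hpr i).inf_le').1 hle
    have h1 : j ≠ i := by simpa using hj
    exact h1 (Subtype.ext (le_antisymm hji (i.2.2 j.2.1 hji)))
  choose t ht1 ht2 using ht
  have htt : ∀ i j, i ≠ j → t i * t j = 0 := by
    intro i j hij
    refine hzero _ fun k => ?_
    by_cases hk : k = i
    · subst hk
      exact Ideal.mul_mem_left _ _ (ht2 j k hij)
    · exact Ideal.mul_mem_right _ _ (ht2 i k hk)
  choose s hs Φ E h1 h2 using fun i : minimalPrimes R => generic_free_at hF R i.1 i.2 P r hr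
  let a := algebraMap R (AddMonoidAlgebra R M)
  have haa : ∀ i j, i ≠ j → a (t i) * a (t j) = 0 := fun i j hij => by
    rw [← map_mul, htt i j hij, map_zero]
  refine ⟨∑ i, t i ^ 2 * s i, ?_, ∑ i, a (t i) • Φ i, ∑ i, a (t i) • E i, ?_, ?_⟩
  · rw [mem_nonZeroDivisors_iff_right]
    intro x hx
    refine hzero x fun i => ?_
    have h3 : ∑ j, t j ^ 2 * s j ∉ i.1 := by
      rw [← Finset.add_sum_erase _ _ (Finset.mem_univ i)]
      intro h4
      have h5 : ∑ j ∈ Finset.univ.erase i, t j ^ 2 * s j ∈ i.1 := by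
        refine Ideal.sum_mem _ fun j hj => ?_
        refine Ideal.mul_mem_right _ _ ?_
        rw [pow_two]
        exact Ideal.mul_mem_right _ _ (ht2 j i (by simpa [eq_comm] using hj))
      have h6 := (Ideal.add_mem_iff_left _ h5).1 h4
      rcases (hpr i).mem_or_mem h6 with h7 | h7
      · exact ht1 i ((hpr i).mem_of_pow_mem _ h7)
      · exact hs i h7
    exact ((hpr i).mem_or_mem (hx ▸ i.1.zero_mem : x * _ ∈ i.1)).resolve_right h3
  · intro x
    simp only [LinearMap.sum_apply, LinearMap.smul_apply, map_sum, map_smul, map_mul, map_pow,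
      Finset.sum_smul, Finset.smul_sum]
    refine Finset.sum_congr rfl fun i _ => ?_
    rw [Finset.sum_eq_single i]
    · rw [h1, smul_smul, smul_smul]; congr 1; ring
    · intro j _ hj
      rw [smul_smul, haa _ _ (by tauto), zero_smul]
    · simp
  · intro x
    simp only [LinearMap.sum_apply, LinearMap.smul_apply, map_sum, map_smul, map_mul, map_pow,
      Finset.sum_smul, Finset.smul_sum]
    refine Finset.sum_congr rfl fun i _ => ?_
    rw [Finset.sum_eq_single i]
    · rw [h2, smul_smul, smul_smul]; congr 1; ring
    · intro j _ hj
      rw [smul_smul, haa _ _ (by tauto), zero_smul]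
    · simp

end BLR


namespace BLR
universe u

theorem mapRingHom_surj {R S M : Type*} [CommRing R] [CommRing S] [AddCommMonoid M] (f : R →+* S)
    (hf : Function.Surjective f) : Function.Surjective (AddMonoidAlgebra.mapRingHom M f) := by
  intro x
  induction x using AddMonoidAlgebra.induction_linear with
  | zero => exact ⟨0, map_zero _⟩
  | add x y hx hy =>
    obtain ⟨x, rfl⟩ := hx
    obtain ⟨y, rfl⟩ := hy
    exact ⟨x + y, map_add _ _ _⟩
  | single m c =>
    obtain ⟨c, rfl⟩ := hf c
    exact ⟨.single m c, by simp⟩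

theorem umProp_step {M : Type} [AddCommMonoid M] (hT : HasTowM.{u} M) (hF : FreeProp.{u} M) (h : ℕ)
    (IH : ∀ (R : Type u) [CommRing R] [IsNoetherianRing R], ringKrullDim R < h →
      ∀ (P : Type u) [AddCommGroup P] [Module (AddMonoidAlgebra R M) P]
      [Module.Finite (AddMonoidAlgebra R M) P] [Module.Projective (AddMonoidAlgebra R M) P] (r : ℕ),
      h ≤ r → (∀ p : PrimeSpectrum (AddMonoidAlgebra R M), Module.rankAtStalk P p = r) →
      ∃ (v : P) (φ : P →ₗ[AddMonoidAlgebra R M] AddMonoidAlgebra R M), φ v = 1)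
    (R : Type u) [CommRing R] [IsNoetherianRing R] [IsReduced R]
    (hdim : ringKrullDim R < (h + 1 : ℕ))
    (P : Type u) [AddCommGroup P] [Module (AddMonoidAlgebra R M) P]
    [Module.Finite (AddMonoidAlgebra R M) P] [Module.Projective (AddMonoidAlgebra R M) P] (r : ℕ)
    (hr : h + 1 ≤ r)
    (hrk : ∀ p : PrimeSpectrum (AddMonoidAlgebra R M), Module.rankAtStalk P p = r) :
    ∃ (v : P) (φ : P →ₗ[AddMonoidAlgebra R M] AddMonoidAlgebra R M), φ v = 1 := by
  obtain ⟨s, hs, Φ, E, h1, h2⟩ := generic_free hF R P r hrk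
  obtain ⟨r, rfl⟩ : ∃ r', r = r' + 1 := ⟨r - 1, by omega⟩
  have hd : ringKrullDim (R ⧸ Ideal.span {s}) < h := by
    by_contra hc
    rw [not_lt] at hc
    have h3 := ringKrullDim_quotient_succ_le_of_nonZeroDivisor hs
    have h4 : (h : WithBot ℕ∞) + 1 ≤ ringKrullDim R := (add_le_add_left hc 1).trans h3
    push_cast at hdim
    exact absurd hdim (not_lt.2 h4)
  let C := AddMonoidAlgebra (R ⧸ Ideal.span {s}) M
  let f : AddMonoidAlgebra R M →+* C :=
    AddMonoidAlgebra.mapRingHom M (Ideal.Quotient.mk (Ideal.span {s}))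
  let _ : Algebra (AddMonoidAlgebra R M) C := f.toAlgebra
  have hsurj : Function.Surjective f := mapRingHom_surj _ Ideal.Quotient.mk_surjective
  obtain ⟨p, ψ, hψ⟩ := um_lift (B := AddMonoidAlgebra R M) (C := C) (P := P) hsurj
    (IH (R ⧸ Ideal.span {s}) hd (TensorProduct (AddMonoidAlgebra R M) C P) (r + 1) (by omega)
      (fun p => by rw [Module.rankAtStalk_baseChange, hrk]))
  have hψ' : f (1 - ψ p) = 0 := by
    rw [map_sub, map_one, sub_eq_zero]; exact hψ.symm
  obtain ⟨b, hb⟩ := kerMap s _ hψ'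
  set a := algebraMap R (AddMonoidAlgebra R M) s with ha
  -- linear functionals out of the free module evaluate inside the ideal
  have hspan : ∀ (g : (Fin (r + 1) → AddMonoidAlgebra R M) →ₗ[AddMonoidAlgebra R M]
      AddMonoidAlgebra R M) (v), g v ∈ Ideal.span (Set.range v) := by
    intro g v
    rw [LinearMap.pi_apply_eq_sum_univ g v]
    refine Ideal.sum_mem _ fun i _ => ?_
    rw [smul_eq_mul]
    exact Ideal.mul_mem_right _ _ (Ideal.subset_span ⟨i, rfl⟩)
  have hv : a ^ 1 * (1 - a * b) ∈ Ideal.span (Set.range (Φ p)) := by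
    have h3 := hspan (ψ ∘ₗ E) (Φ p)
    rw [LinearMap.comp_apply, h2, map_smul, smul_eq_mul] at h3
    rw [← hb, pow_one]
    simpa using h3
  obtain ⟨v', hv', K, hK⟩ := claimV (hT (h + 1) R hdim) hr s (Φ p) 1 2 b hv
  choose q hq using hv'
  let p' : P := p + a • E q
  have hp' : Φ p' = v' := by
    funext i
    rw [hq, map_add, map_smul, h1, ← ha, Pi.add_apply, Pi.smul_apply, Pi.smul_apply, smul_eq_mul,
      smul_eq_mul, pow_two, mul_assoc]
  have hψp : ψ p' = 1 - a * (b - ψ (E q)) := by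
    rw [map_add, map_smul, smul_eq_mul]
    linear_combination -hb
  rw [Ideal.mem_span_range_iff_exists_fun] at hK
  obtain ⟨c, hc⟩ := hK
  let χ : P →ₗ[AddMonoidAlgebra R M] AddMonoidAlgebra R M :=
    ∑ i, c i • (LinearMap.proj i ∘ₗ Φ)
  have hχ : χ p' = a ^ K := by
    rw [← hc]
    simp [χ, LinearMap.sum_apply, hp']
  set b2 := b - ψ (E q)
  obtain ⟨g, hg⟩ : (1 - a * b2) ∣ 1 - (a * b2) ^ K := by
    simpa using sub_dvd_pow_sub_pow 1 (a * b2) K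
  refine ⟨p', b2 ^ K • χ + g • ψ, ?_⟩
  rw [LinearMap.add_apply, LinearMap.smul_apply, LinearMap.smul_apply, hχ, hψp, smul_eq_mul,
    smul_eq_mul, mul_comm g, ← hg, mul_pow]
  ring

theorem umProp_of {M : Type} [AddCommMonoid M] (hT : HasTowM.{u} M) (hF : FreeProp.{u} M) :
    UmProp.{u} M := by
  intro h
  induction h with
  | zero =>
    intro R _ _ hdim P _ _ _ _ r _ _
    rcases subsingleton_or_nontrivial R with hR | hR
    · exact ⟨0, 0, Subsingleton.elim _ _⟩
    · have := ringKrullDim_nonneg_of_nontrivial (R := R)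
      exact absurd hdim (not_lt.2 (by simpa using this))
  | succ h IH =>
    intro R _ _ hdim P _ _ _ _ r hr hrk
    let C := AddMonoidAlgebra (R ⧸ nilradical R) M
    let f : AddMonoidAlgebra R M →+* C :=
      AddMonoidAlgebra.mapRingHom M (Ideal.Quotient.mk (nilradical R))
    let _ : Algebra (AddMonoidAlgebra R M) C := f.toAlgebra
    have hsurj : Function.Surjective f := mapRingHom_surj _ Ideal.Quotient.mk_surjective
    have : IsReduced (R ⧸ nilradical R) :=
      (Ideal.isRadical_iff_quotient_reduced _).1 (Ideal.radical_isRadical _)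
    obtain ⟨p, ψ, hψ⟩ := um_lift (B := AddMonoidAlgebra R M) (C := C) (P := P) hsurj
      (umProp_step hT hF h IH (R ⧸ nilradical R)
        ((ringKrullDim_le_of_surjective _ Ideal.Quotient.mk_surjective).trans_lt hdim)
        (TensorProduct (AddMonoidAlgebra R M) C P) r hr
        (fun p => by rw [Module.rankAtStalk_baseChange, hrk]))
    have hψ' : f (ψ p - 1) = 0 := by
      rw [map_sub, map_one, sub_eq_zero]; exact hψ
    have hn := nilMap _ hψ'
    have hu : IsUnit (ψ p) := by
      have := hn.isUnit_add_one
      simpa using this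
    obtain ⟨u, hu⟩ := hu
    refine ⟨p, ((u⁻¹ : (AddMonoidAlgebra R M)ˣ) : AddMonoidAlgebra R M) • ψ, ?_⟩
    rw [LinearMap.smul_apply, ← hu, smul_eq_mul, Units.inv_mul]

end BLR


namespace BLR
universe u

theorem rank_one_comm {B P : Type*} [CommRing B] [IsDomain B] [AddCommGroup P] [Module B P]
    [Module.Finite B P] [Module.Projective B P]
    (h : ∀ p : PrimeSpectrum B, Module.rankAtStalk P p = 1) (φ : P →ₗ[B] B) (x y : P) :
    φ x • y = φ y • x := by
  by_cases hy : y = 0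
  · simp [hy]
  let K := FractionRing B
  have h1 : Module.finrank K (TensorProduct B K P) = 1 := by
    have h2 := Module.rankAtStalk_baseChange (R := B) (S := K) (M := P) ⊥
    rw [h] at h2
    rw [Module.rankAtStalk_eq_finrank_of_free] at h2
    simpa using h2
  have e : TensorProduct B K P ≃ₗ[K] K := (LinearEquiv.ofFinrankEq _ _ (by rw [h1, Module.finrank_self]))
  have hinj : Function.Injective (TensorProduct.mk B K P 1) :=
    Module.Flat.tensorProduct_mk_injective B P K
  let ι : P →ₗ[B] K := (e.restrictScalars B).toLinearMap ∘ₗ TensorProduct.mk B K P 1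
  have hι : Function.Injective ι := e.injective.comp hinj
  obtain ⟨n1, d1, hd1, h1⟩ := IsFractionRing.div_surjective (A := B) (ι x)
  obtain ⟨n2, d2, hd2, h2⟩ := IsFractionRing.div_surjective (A := B) (ι y)
  have hd1' : algebraMap B K d1 ≠ 0 := by
    simpa using nonZeroDivisors.ne_zero hd1
  have hd2' : algebraMap B K d2 ≠ 0 := by
    simpa using nonZeroDivisors.ne_zero hd2
  have hn2 : n2 ≠ 0 := by
    rintro rfl
    apply hy; apply hι
    rw [← h2]; simp
  have h3 : (d1 * n2) • x = (d2 * n1) • y := by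
    apply hι
    rw [map_smul, map_smul, ← h1, ← h2, Algebra.smul_def, Algebra.smul_def]
    simp only [map_mul]
    rw [mul_div_assoc', mul_div_assoc', div_eq_div_iff hd1' hd2']
    ring
  have h4 := congrArg φ h3
  simp only [map_smul, smul_eq_mul] at h4
  have h5 : d1 * n2 ≠ 0 := mul_ne_zero (nonZeroDivisors.ne_zero hd1) hn2
  have : Module.IsTorsionFree B P := inferInstance
  apply smul_right_injective P h5
  dsimp only
  rw [smul_smul, h4, mul_comm, mul_smul, ← h3, smul_smul, smul_smul, mul_comm]

theorem rank_one_free {B P : Type*} [CommRing B] [IsDomain B] [UniqueFactorizationMonoid B]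
    [AddCommGroup P] [Module B P] [Module.Finite B P] [Module.Projective B P]
    (h : ∀ p : PrimeSpectrum B, Module.rankAtStalk P p = 1) : Nonempty (P ≃ₗ[B] B) := by
  classical
  obtain ⟨n, f, g, -, -, hfg⟩ := Module.Finite.exists_comp_eq_id_of_projective B P
  have hne : Nontrivial P := by
    by_contra hP
    rw [not_nontrivial_iff_subsingleton] at hP
    have := h ⊥
    rw [Module.rankAtStalk_eq_zero_of_subsingleton] at this
    simp at this
  let x : Fin n → P := fun i => f (fun j => if i = j then 1 else 0)
  let φ : Fin n → P →ₗ[B] B := fun i => LinearMap.proj i ∘ₗ g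
  have hx : ∀ p, p = ∑ i, φ i p • x i := by
    intro p
    have := LinearMap.congr_fun hfg p
    rw [LinearMap.comp_apply, LinearMap.pi_apply_eq_sum_univ f, LinearMap.id_apply] at this
    exact this.symm
  obtain ⟨p0, hp0⟩ := exists_ne (0 : P)
  have htr : ∑ i, φ i (x i) = 1 := by
    have h1 : (∑ i, φ i (x i)) • p0 = (1 : B) • p0 := by
      rw [one_smul, Finset.sum_smul]
      conv_rhs => rw [hx p0]
      exact Finset.sum_congr rfl fun i _ => (rank_one_comm h _ _ _)
    exact smul_left_injective B hp0 h1
  obtain ⟨i0, hi0⟩ : ∃ i, φ i p0 ≠ 0 := by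
    by_contra hc
    push Not at hc
    apply hp0
    rw [hx p0]; simp [hc]
  have hinj : Function.Injective (φ i0) := by
    rw [injective_iff_map_eq_zero]
    intro y hy
    have := rank_one_comm h (φ i0) p0 y
    rw [hy, zero_smul] at this
    exact (smul_eq_zero.1 this).resolve_left hi0
  let _ : NormalizedGCDMonoid B := Classical.choice inferInstance
  have hn : (Finset.univ : Finset (Fin n)).Nonempty := ⟨i0, by simp⟩
  obtain ⟨c, hc, hgcd⟩ := Finset.extract_gcd (fun i => φ i0 (x i)) hn
  set a := Finset.univ.gcd (fun i => φ i0 (x i)) with ha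
  have ha0 : a ≠ 0 := by
    intro h0
    apply hi0
    rw [hx p0, map_sum]
    refine Finset.sum_eq_zero fun i _ => ?_
    rw [map_smul, hc i (by simp), h0]; simp
  have hdvd : ∀ i k, c k ∣ φ i (x k) := by
    intro i k
    have h1 : c k ∣ Finset.univ.gcd (fun j => φ i (x k) * c j) := by
      refine Finset.dvd_gcd fun j _ => ⟨φ i (x j), ?_⟩
      have h2 := congrArg (φ i0) (rank_one_comm h (φ i) (x k) (x j))
      rw [map_smul, map_smul, smul_eq_mul, smul_eq_mul, hc j (by simp), hc k (by simp)] at h2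
      apply mul_left_cancel₀ ha0
      linear_combination h2
    have h2 := (Finset.gcd_mul_left' (s := Finset.univ) (f := c) (φ i (x k))).dvd
    rw [hgcd, mul_one] at h2
    exact h1.trans h2
  choose d hd using hdvd
  let e : P := ∑ i, d i i • x i
  have he : φ i0 e = a := by
    simp only [e, map_sum, map_smul, smul_eq_mul]
    calc ∑ i, d i i * φ i0 (x i) = ∑ i, a * φ i (x i) := 
          Finset.sum_congr rfl fun i _ => by rw [hc i (by simp), hd i i]; ring
      _ = a := by rw [← Finset.mul_sum, htr, mul_one]
  have hbij : Function.Bijective (LinearMap.toSpanSingleton B P e) := by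
    constructor
    · rw [injective_iff_map_eq_zero]
      intro t ht
      have := congrArg (φ i0) ht
      simp [he] at this
      exact this.resolve_right ha0
    · intro p
      have h1 : a ∣ φ i0 p := by
        rw [hx p, map_sum]
        refine Finset.dvd_sum fun i _ => ?_
        rw [map_smul, hc i (by simp), smul_eq_mul]
        exact Dvd.intro (φ i p * c i) (by ring)
      obtain ⟨t, ht⟩ := h1
      refine ⟨t, hinj ?_⟩
      simp [he, ht, mul_comm]
  exact ⟨(LinearEquiv.ofBijective _ hbij).symm⟩

end BLR


namespace BLR
universe u

/-- splitting off a unimodular element -/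
def splitUm {A P : Type*} [CommRing A] [AddCommGroup P] [Module A P] (v : P) (ψ : P →ₗ[A] A)
    (h : ψ v = 1) : P ≃ₗ[A] A × LinearMap.ker ψ where
  toFun x := (ψ x, ⟨x - ψ x • v, by simp [h]⟩)
  invFun y := y.1 • v + y.2
  map_add' x y := by
    ext
    · simp
    · simp; module
  map_smul' c x := by
    ext
    · simp
    · simp; module
  left_inv x := by simp
  right_inv y := by
    obtain ⟨a, k, hk⟩ := y
    rw [LinearMap.mem_ker] at hk
    ext
    · simp [h, hk]
    · simp [h, hk]

theorem free_of_um {A : Type u} [CommRing A] [IsDomain A] [UniqueFactorizationMonoid A]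
    (hUm : ∀ (P : Type u) [AddCommGroup P] [Module A P] [Module.Finite A P] [Module.Projective A P]
      (r : ℕ), 2 ≤ r → (∀ p : PrimeSpectrum A, Module.rankAtStalk P p = r) →
      ∃ (v : P) (φ : P →ₗ[A] A), φ v = 1) (r : ℕ) :
    ∀ (P : Type u) [AddCommGroup P] [Module A P] [Module.Finite A P] [Module.Projective A P],
    (∀ p : PrimeSpectrum A, Module.rankAtStalk P p = r) → Nonempty (P ≃ₗ[A] (Fin r → A)) := by
  induction r with
  | zero =>
    intro P _ _ _ _ h
    have : Subsingleton P := Module.rankAtStalk_eq_zero_iff_subsingleton.1 (funext h)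
    exact ⟨LinearEquiv.ofSubsingleton _ _⟩
  | succ r ih =>
    intro P _ _ _ _ h
    rcases Nat.eq_zero_or_pos r with rfl | hr
    · obtain ⟨e⟩ := rank_one_free h
      exact ⟨e.trans (LinearEquiv.funUnique (Fin 1) A A).symm⟩
    · obtain ⟨v, ψ, hv⟩ := hUm P (r + 1) (by omega) h
      let e := splitUm v ψ hv
      let s : P →ₗ[A] LinearMap.ker ψ := LinearMap.snd _ _ _ ∘ₗ e.toLinearMap
      have hs : s ∘ₗ (LinearMap.ker ψ).subtype = LinearMap.id := by
        ext x
        obtain ⟨x, hx⟩ := x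
        rw [LinearMap.mem_ker] at hx
        simp [s, e, splitUm, hx]
      have i1 : Module.Projective A (LinearMap.ker ψ) := Module.Projective.of_split _ _ hs
      have i2 : Module.Finite A (LinearMap.ker ψ) := Module.Finite.of_surjective s
        (fun x => ⟨x.1, LinearMap.congr_fun hs x⟩)
      obtain ⟨e'⟩ := ih (LinearMap.ker ψ) (fun p => by
        have h1 := h p
        rw [Module.rankAtStalk_eq_of_equiv e, Module.rankAtStalk_prod, Pi.add_apply,
          Module.rankAtStalk_self, Pi.one_apply] at h1
        omega)
      exact ⟨(e.trans (LinearEquiv.prodCongr (LinearEquiv.refl A A) e')).trans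
        (Fin.consLinearEquiv A fun _ => A)⟩

/-- `K[M]` is a UFD for all fields `K` -/
def UFDProp (M : Type) [AddCommMonoid M] : Prop :=
  ∀ (K : Type u) [CommRing K], IsField K →
    IsDomain (AddMonoidAlgebra K M) ∧ UniqueFactorizationMonoid (AddMonoidAlgebra K M)

/-- the collected properties -/
structure Good (M : Type) [AddCommMonoid M] : Prop where
  tow : HasTowM.{u} M
  free : FreeProp.{u} M
  ufd : UFDProp.{u} M

theorem Good.um {M : Type} [AddCommMonoid M] (h : Good.{u} M) : UmProp.{u} M :=
  umProp_of h.tow h.free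

/-- properties of the rank one monoids `ℕ` and `ℤ` -/
structure Good1 (N : Type) [AddCommMonoid N] : Prop where
  noeth : ∀ (K : Type u) [CommRing K], IsField K → IsNoetherianRing (AddMonoidAlgebra K N)
  dim : ∀ (K : Type u) [CommRing K], IsField K →
    ringKrullDim (AddMonoidAlgebra K N) < (2 : ℕ)
  ufd : ∀ (D : Type u) [CommRing D], IsDomain D → UniqueFactorizationMonoid D →
    IsDomain (AddMonoidAlgebra D N) ∧ UniqueFactorizationMonoid (AddMonoidAlgebra D N)
  tow : ∀ (h : ℕ) (R A : Type u) [CommRing R] [CommRing A] [Algebra R A], HasTow R A h →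
    HasTow R (AddMonoidAlgebra A N) h

theorem Good.prod {M N : Type} [AddCommMonoid M] [AddCommMonoid N] (hM : Good.{u} M)
    (hN : Good1.{u} N) : Good.{u} (M × N) := by
  have hufd : UFDProp.{u} (M × N) := by
    intro K _ hK
    let e : AddMonoidAlgebra K (M × N) ≃ₐ[K] AddMonoidAlgebra (AddMonoidAlgebra K M) N :=
      (AddMonoidAlgebra.domCongr K K AddEquiv.prodComm).trans (AddMonoidAlgebra.curryAlgEquiv K)
    obtain ⟨i1, i2⟩ := hM.ufd K hK
    obtain ⟨i3, i4⟩ := hN.ufd _ i1 i2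
    exact ⟨e.toMulEquiv.isDomain _, e.symm.toMulEquiv.uniqueFactorizationMonoid i4⟩
  refine ⟨?_, ?_, hufd⟩
  · intro h R _ _ hd
    let e : AddMonoidAlgebra R (M × N) ≃ₐ[R] AddMonoidAlgebra (AddMonoidAlgebra R M) N :=
      (AddMonoidAlgebra.domCongr R R AddEquiv.prodComm).trans (AddMonoidAlgebra.curryAlgEquiv R)
    exact (hN.tow h R _ (hM.tow h R hd)).equiv e.symm
  · intro K _ hK P _ _ _ _ r hr
    obtain ⟨i1, i2⟩ := hufd K hK
    refine free_of_um ?_ r P hr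
    intro P _ _ _ _ r h2 hr
    let e : AddMonoidAlgebra K (M × N) ≃ₐ[K] AddMonoidAlgebra (AddMonoidAlgebra K N) M :=
      AddMonoidAlgebra.curryAlgEquiv K
    let _ : Algebra (AddMonoidAlgebra K (M × N)) (AddMonoidAlgebra (AddMonoidAlgebra K N) M) :=
      e.toRingEquiv.toRingHom.toAlgebra
    have := hN.noeth K hK
    obtain ⟨p, ψ, hψ⟩ := um_lift (B := AddMonoidAlgebra K (M × N))
      (C := AddMonoidAlgebra (AddMonoidAlgebra K N) M) (P := P) e.surjective
      (hM.um 2 (AddMonoidAlgebra K N) (hN.dim K hK)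
        (TensorProduct (AddMonoidAlgebra K (M × N)) (AddMonoidAlgebra (AddMonoidAlgebra K N) M) P)
        r h2 (fun p => by rw [Module.rankAtStalk_baseChange, hr]))
    refine ⟨p, ψ, e.injective ?_⟩
    rw [map_one]
    exact hψ

end BLR


namespace BLR
universe u

theorem good_unit : Good.{u} Unit := by
  have e (R : Type u) [CommRing R] : R ≃ₐ[R] AddMonoidAlgebra R Unit :=
    { (AddMonoidAlgebra.uniqueRingEquiv (R := R) Unit).symm with
      commutes' := fun r => by
        change (AddMonoidAlgebra.uniqueRingEquiv (R := R) Unit).symm r = _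
        rw [AddMonoidAlgebra.uniqueRingEquiv_symm_apply]; rfl }
  have hfield (K : Type u) [CommRing K] (hK : IsField K) : IsField (AddMonoidAlgebra K Unit) :=
    (e K).symm.toMulEquiv.isField hK
  refine ⟨?_, ?_, ?_⟩
  · intro h R _ _ hd
    exact (HasTow.base hd).equiv (e R)
  · intro K _ hK P _ _ _ _ r hr
    have hA := hfield K hK
    have : IsLocalRing (AddMonoidAlgebra K Unit) := by
      have := hA.nontrivial
      refine IsLocalRing.of_isUnit_or_isUnit_one_sub_self fun a => ?_
      by_cases ha : a = 0
      · right; simp [ha]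
      · left
        obtain ⟨b, hb⟩ := hA.mul_inv_cancel ha
        exact IsUnit.of_mul_eq_one _ hb
    have : Module.Free (AddMonoidAlgebra K Unit) P := Module.free_of_flat_of_isLocalRing
    have h1 := hr (IsLocalRing.closedPoint _)
    rw [Module.rankAtStalk_eq_finrank_of_free] at h1
    exact ⟨LinearEquiv.ofFinrankEq _ _ (by simpa using h1)⟩
  · intro K _ hK
    have hA := hfield K hK
    have := hA.isDomain
    have := hA.isPrincipalIdealRing
    exact ⟨inferInstance, inferInstance⟩

theorem good1_nat : Good1.{u} ℕ := by
  refine ⟨?_, ?_, ?_, ?_⟩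
  · intro K _ hK
    have := hK.isPrincipalIdealRing
    exact isNoetherianRing_of_ringEquiv _ (Polynomial.toFinsuppIso K)
  · intro K _ hK
    have := hK.isPrincipalIdealRing
    rw [← ringKrullDim_eq_of_ringEquiv (Polynomial.toFinsuppIso K),
      Polynomial.ringKrullDim_of_isNoetherianRing, ringKrullDim_eq_zero_of_isField hK]
    norm_num
  · intro D _ _ _
    exact ⟨(Polynomial.toFinsuppIso D).symm.toMulEquiv.isDomain _,
      (Polynomial.toFinsuppIso D).toMulEquiv.uniqueFactorizationMonoid inferInstance⟩
  · intro h R A _ _ _ H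
    exact H.poly.equiv ((Polynomial.toFinsuppIsoAlg A).restrictScalars R)

theorem dim_loc {A B : Type*} [CommRing A] [CommRing B] [Algebra A B] (S : Submonoid A)
    [IsLocalization S B] : ringKrullDim B ≤ ringKrullDim A := by
  refine Order.krullDim_le_of_strictMono (PrimeSpectrum.comap (algebraMap A B)) ?_
  refine Monotone.strictMono_of_injective ?_ (PrimeSpectrum.localization_comap_injective B S)
  intro p q hpq
  exact Ideal.comap_mono hpq

theorem good1_int : Good1.{u} ℤ := by
  refine ⟨?_, ?_, ?_, ?_⟩
  · intro K _ hK
    have := hK.isPrincipalIdealRing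
    exact IsLocalization.isNoetherianRing (Submonoid.powers (Polynomial.X : Polynomial K)) 
      (LaurentPolynomial K) inferInstance
  · intro K _ hK
    have := hK.isPrincipalIdealRing
    refine (dim_loc (B := LaurentPolynomial K) 
      (Submonoid.powers (Polynomial.X : Polynomial K))).trans_lt ?_
    rw [Polynomial.ringKrullDim_of_isNoetherianRing, ringKrullDim_eq_zero_of_isField hK]
    norm_num
  · intro D _ _ _
    refine ⟨?_, UniqueFactorizationMonoid.of_isLocalization (M := Polynomial D)
      (Submonoid.powers (Polynomial.X : Polynomial D)) (LaurentPolynomial D)⟩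
    exact IsLocalization.isDomain_of_le_nonZeroDivisors (R := Polynomial D) (LaurentPolynomial D)
      (M := (Submonoid.powers (Polynomial.X : Polynomial D)))
      (powers_le_nonZeroDivisors_of_noZeroDivisors Polynomial.X_ne_zero)
  · intro h R A _ _ _ H
    exact H.lau

end BLR
namespace BLR
universe u

theorem Good.equiv {M N : Type} [AddCommMonoid M] [AddCommMonoid N] (h : Good.{u} M) (e : M ≃+ N) :
    UmProp.{u} N := by
  intro k R _ _ hd P _ _ _ _ r hr hrk
  let f : AddMonoidAlgebra R N ≃ₐ[R] AddMonoidAlgebra R M := AddMonoidAlgebra.domCongr R R e.symm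
  let _ : Algebra (AddMonoidAlgebra R N) (AddMonoidAlgebra R M) :=
    f.toRingEquiv.toRingHom.toAlgebra
  obtain ⟨p, ψ, hψ⟩ := um_lift (B := AddMonoidAlgebra R N)
    (C := AddMonoidAlgebra R M) (P := P) f.surjective
    (h.um k R hd
      (TensorProduct (AddMonoidAlgebra R N) (AddMonoidAlgebra R M) P)
      r hr (fun p => by rw [Module.rankAtStalk_baseChange, hrk]))
  refine ⟨p, ψ, f.injective ?_⟩
  rw [map_one]
  exact hψ

theorem good_fun {N : Type} [AddCommMonoid N] (hN : Good1.{u} N) {M₀ : Type} [AddCommMonoid M₀]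
    (h₀ : Good.{u} M₀) (k : ℕ) :
    ∃ (M : Type) (_ : AddCommMonoid M) (_ : Good.{u} M), Nonempty (M ≃+ M₀ × (Fin k → N)) := by
  induction k with
  | zero => exact ⟨M₀, _, h₀, ⟨(AddEquiv.prodUnique (M := M₀) (N := Fin 0 → N)).symm⟩⟩
  | succ k ih =>
    obtain ⟨M, i, h, ⟨e⟩⟩ := ih
    refine ⟨M × N, inferInstance, h.prod hN, ⟨?_⟩⟩
    exact
      { toFun := fun x => ((e x.1).1, Fin.cons x.2 (e x.1).2)
        invFun := fun y => (e.symm (y.1, Fin.tail y.2), y.2 0)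
        left_inv := fun x => by simp
        right_inv := fun y => by simp
        map_add' := fun x y => by
          ext j
          · simp
          · refine Fin.cases ?_ (fun j => ?_) j <;> simp }

/-- exponents of Laurent monomials -/
abbrev LExp (m n : ℕ) : Type := (Fin m → ℕ) × (Fin n → ℤ)

theorem umProp_LExp (m n : ℕ) : UmProp.{u} (LExp m n) := by
  obtain ⟨M, i, h, ⟨e⟩⟩ := good_fun good1_nat good_unit.{u} m
  obtain ⟨M', i', h', ⟨e'⟩⟩ := good_fun good1_int h n
  exact h'.equiv (e'.trans ((e.trans (AddEquiv.uniqueProd)).prodCongr (AddEquiv.refl _)))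

/-- inclusion of exponents -/
def expHom (m n : ℕ) : (Fin m ⊕ Fin n →₀ ℕ) →+ LExp m n where
  toFun f := (fun i => f (Sum.inl i), fun j => (f (Sum.inr j) : ℤ))
  map_zero' := by ext <;> simp
  map_add' f g := by ext <;> simp

theorem expHom_inj (m n : ℕ) : Function.Injective (expHom m n) := by
  intro f g h
  ext i
  rcases i with i | j
  · exact congrFun (congrArg Prod.fst h) i
  · have h1 : (f (Sum.inr j) : ℤ) = g (Sum.inr j) := congrFun (congrArg Prod.snd h) j
    exact_mod_cast h1

/-- the inclusion of polynomials into Laurent polynomials -/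
def polyInc (R : Type u) [CommRing R] (m n : ℕ) :
    MvPolynomial (Fin m ⊕ Fin n) R →+* AddMonoidAlgebra R (LExp m n) :=
  AddMonoidAlgebra.mapDomainRingHom R (expHom m n)

theorem polyInc_monomial (R : Type u) [CommRing R] (m n : ℕ) (f : Fin m ⊕ Fin n →₀ ℕ) (c : R) :
    polyInc R m n (monomial f c) = .single (expHom m n f) c := by
  exact AddMonoidAlgebra.mapDomain_single

theorem polyInc_loc (R : Type u) [CommRing R] (m n : ℕ) :
    letI : Algebra (MvPolynomial (Fin m ⊕ Fin n) R) (AddMonoidAlgebra R (LExp m n)) :=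
      (polyInc R m n).toAlgebra
    IsLocalization (Ymonoid R m n) (AddMonoidAlgebra R (LExp m n)) := by
  letI : Algebra (MvPolynomial (Fin m ⊕ Fin n) R) (AddMonoidAlgebra R (LExp m n)) :=
      (polyInc R m n).toAlgebra
  have hmono : ∀ k : Fin n → ℕ, monomial (Finsupp.equivFunOnFinite.symm
      (Sum.elim (fun _ : Fin m => 0) k)) (1 : R) ∈ Ymonoid R m n := by
    intro k
    have : monomial (Finsupp.equivFunOnFinite.symm
      (Sum.elim (fun _ : Fin m => 0) k)) (1 : R) = ∏ j, (X (Sum.inr j)) ^ k j := by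
      rw [monomial_eq]
      simp [Finsupp.prod_fintype]
    rw [this]
    refine Submonoid.prod_mem _ fun j _ => Submonoid.pow_mem _ ?_ _
    exact Submonoid.subset_closure ⟨j, rfl⟩
  refine ⟨?_, ?_, ?_⟩
  · rintro ⟨y, hy⟩
    change IsUnit (polyInc R m n y)
    induction hy using Submonoid.closure_induction with
    | mem y hy =>
      obtain ⟨j, rfl⟩ := hy
      simp only [X]
      rw [polyInc_monomial]
      refine IsUnit.of_mul_eq_one (.single (0, -(expHom m n (Finsupp.single (Sum.inr j) 1)).2) 1) ?_
      rw [AddMonoidAlgebra.single_mul_single, AddMonoidAlgebra.one_def]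
      congr 1
      · ext i <;> simp [expHom]
      · simp
    | one => simp
    | mul x y _ _ hx hy => rw [map_mul]; exact hx.mul hy
  · intro z
    induction z using AddMonoidAlgebra.induction_linear with
    | zero => exact ⟨(0, 1), by simp⟩
    | add x y hx hy =>
      obtain ⟨⟨x1, s1⟩, h1⟩ := hx
      obtain ⟨⟨y1, t1⟩, h2⟩ := hy
      refine ⟨(x1 * t1 + y1 * s1, s1 * t1), ?_⟩
      simp only [map_add, map_mul, Submonoid.coe_mul] at h1 h2 ⊢
      rw [← h1, ← h2]; ring
    | single g c =>
      obtain ⟨a, b⟩ := g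
      refine ⟨(monomial (Finsupp.equivFunOnFinite.symm (Sum.elim a fun j => (b j).toNat)) c,
        ⟨_, hmono fun j => (-b j).toNat⟩), ?_⟩
      change _ * polyInc R m n _ = polyInc R m n _
      rw [polyInc_monomial, polyInc_monomial, AddMonoidAlgebra.single_mul_single, mul_one]
      congr 1
      ext j
      · simp [expHom]
      · simp [expHom]
        omega
  · intro x y hxy
    refine ⟨1, ?_⟩
    have : Function.Injective (polyInc R m n) := AddMonoidAlgebra.mapDomain_injective (expHom_inj m n)
    rw [this hxy]

end BLR

theorem laurent_polynomial_ring_unimodular_element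
    (R : Type*) [CommRing R] [IsNoetherianRing R] (d : ℕ) (hdim : ringKrullDim R = d)
    (m n : ℕ)
    (B : Type*) [CommRing B] [Algebra R B] [Algebra (MvPolynomial (Fin m ⊕ Fin n) R) B]
    [IsScalarTower R (MvPolynomial (Fin m ⊕ Fin n) R) B]
    [IsLocalization (Ymonoid R m n) B]
    (P : Type*) [AddCommGroup P] [Module B P] [Module.Finite B P] [Module.Projective B P]
    (r : ℕ) (hr : d < r)
    (hrank : ∀ p : PrimeSpectrum B,
      Module.finrank (Localization.AtPrime p.asIdeal) (LocalizedModule p.asIdeal.primeCompl P)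
        = r) :
    ∃ (v : P) (φ : P →ₗ[B] B), φ v = 1 := by
  have hrank' : ∀ p : PrimeSpectrum B, Module.rankAtStalk P p = r := hrank
  let C := AddMonoidAlgebra R (BLR.LExp m n)
  letI : Algebra (MvPolynomial (Fin m ⊕ Fin n) R) C := (BLR.polyInc R m n).toAlgebra
  have hloc : IsLocalization (Ymonoid R m n) C := BLR.polyInc_loc R m n
  let e : B ≃ₐ[MvPolynomial (Fin m ⊕ Fin n) R] C := IsLocalization.algEquiv (Ymonoid R m n) B C
  letI : Algebra B C := e.toRingEquiv.toRingHom.toAlgebra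
  obtain ⟨k, f, hf⟩ := Module.Finite.exists_fin' C (TensorProduct B C P)
  let E := f.quotKerEquivOfSurjective hf
  have i1 : Module.Projective C ((Fin k → C) ⧸ LinearMap.ker f) := Module.Projective.of_equiv E.symm
  have h1 := BLR.umProp_LExp m n (d + 1) R
    (by rw [hdim]; exact_mod_cast Nat.lt_succ_self d)
    ((Fin k → C) ⧸ LinearMap.ker f) r hr
    (fun p => by
      rw [Module.rankAtStalk_eq_of_equiv E, Module.rankAtStalk_baseChange, hrank'])
  obtain ⟨v, φ, hv⟩ := h1
  obtain ⟨p, ψ, hψ⟩ := BLR.um_lift (B := B) (C := C) (P := P) e.surjective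
    ⟨E v, φ ∘ₗ E.symm.toLinearMap, by simpa using hv⟩
  refine ⟨p, ψ, e.injective ?_⟩
  rw [map_one]
  exact hψ
end
end
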